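/- Let K ∈ 𝒦_s^d be a proper spherically convex body and let C ⊂ S^d be a spherical cap with σ_d(K) = σ_d(C) > 0 and radius α_C < π/2. Let α₀ ∈ (0,π/2) be such that α₀ ≤ α_C. Then U₁(K) ≥ (1 + β·Δ₂(K)²)·U₁(C), where β := 2·min{ binom(d+1,2)·sin^{d+1}(α₀)·tan^{−2d}(α_C) / (d + d·binom(d+1,2)·(π/2)²·tan^{−d}(α_C)) , (2/π)²·D(π/2 − α_C) }. -/

import Mathlib

open Real MeasureTheory Filter
open scoped RealInnerProductSpace ENNReal NNReal Topology

noncomputable section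

/-- The ambient Euclidean space `ℝ^{d+1}`. -/
abbrev Esp (d : ℕ) : Type := EuclideanSpace ℝ (Fin (d + 1))

/-- The unit sphere `S^d ⊂ ℝ^{d+1}`. -/
def uSphere (d : ℕ) : Set (Esp d) := Metric.sphere 0 1

/-- The spherical Lebesgue measure `σ_d` (d-dimensional Hausdorff measure restricted
to the unit sphere). -/
def sigmaMeas (d : ℕ) : Measure (Esp d) := (μH[(d : ℝ)]).restrict (uSphere d)

/-- `ω_{d+1} = σ_d(S^d)`, the total surface area of the unit sphere in `ℝ^{d+1}`. -/
def omegaTot (d : ℕ) : ℝ := (sigmaMeas d (uSphere d)).toReal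

/-- `ω_d`, the `(d-1)`-dimensional measure of the unit sphere `S^{d-1} ⊂ ℝ^d`. -/
def omegaSm (d : ℕ) : ℝ :=
  (μH[((d : ℝ) - 1)] (Metric.sphere (0 : EuclideanSpace ℝ (Fin d)) 1)).toReal

/-- `κ_d`, the volume of the unit ball in `ℝ^d`. -/
def kappaVol (d : ℕ) : ℝ :=
  (volume (Metric.ball (0 : EuclideanSpace ℝ (Fin d)) 1)).toReal

/-- The geodesic (angular) distance `d_s(x,y) = arccos ⟨x,y⟩` on the unit sphere. -/
def geo {d : ℕ} (x y : Esp d) : ℝ := Real.arccos ⟪x, y⟫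

/-- The spherical ball (cap) `B(e,α)` of radius `α` centred at `e`. -/
def cap {d : ℕ} (e : Esp d) (α : ℝ) : Set (Esp d) := {x ∈ uSphere d | geo x e ≤ α}

/-- `K ∈ 𝒦̄_s^d`: a spherically convex body, i.e. the intersection of the unit sphere
with a closed convex cone `C ≠ {0}` which is not a linear subspace. -/
def IsSphConvBody (d : ℕ) (K : Set (Esp d)) : Prop :=
  ∃ C : Set (Esp d), IsClosed C ∧ Convex ℝ C ∧
    (∀ x ∈ C, ∀ t : ℝ, 0 ≤ t → t • x ∈ C) ∧
    C ≠ {0} ∧ (∀ L : Submodule ℝ (Esp d), C ≠ (L : Set (Esp d))) ∧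
    K = C ∩ uSphere d

/-- `K ∈ 𝒦_s^d`: a proper spherically convex body, i.e. the intersection of the unit
sphere with a line-free closed convex cone `C ≠ {0}`. -/
def IsProperSphConvBody (d : ℕ) (K : Set (Esp d)) : Prop :=
  ∃ C : Set (Esp d), IsClosed C ∧ Convex ℝ C ∧
    (∀ x ∈ C, ∀ t : ℝ, 0 ≤ t → t • x ∈ C) ∧
    C ≠ {0} ∧ (∀ x ∈ C, x ≠ 0 → -x ∉ C) ∧
    K = C ∩ uSphere d

/-- The spherical mean width functional
`U₁(K) = (1/(2 ω_{d+1})) σ_d({x ∈ S^d : x^⊥ ∩ K ≠ ∅})`. -/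
def U1 (d : ℕ) (K : Set (Esp d)) : ℝ :=
  (1 / (2 * omegaTot d)) * (sigmaMeas d {x | ∃ y ∈ K, ⟪x, y⟫ = 0}).toReal

/-- `D(x) = ∫₀^x sin^{d-1} t dt`. -/
def Dfun (d : ℕ) (x : ℝ) : ℝ := ∫ t in (0:ℝ)..x, Real.sin t ^ (d - 1)

/-- `S_e = S^d ∩ e^⊥`, the great subsphere orthogonal to `e`. -/
def equator {d : ℕ} (e : Esp d) : Set (Esp d) := uSphere d ∩ {x | ⟪x, e⟫ = 0}

/-- The rotation invariant probability measure `σ⁰_{d-1}` on the great subsphere `S_e`. -/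
def sigma0 (d : ℕ) (e : Esp d) : Measure (Esp d) :=
  (μH[((d : ℝ) - 1)] (equator e))⁻¹ • (μH[((d : ℝ) - 1)]).restrict (equator e)

/-- The spherical radial function `α_{K,e}(u)`: the geodesic distance from `e` to the
boundary of `K` along the great circle through `e` in direction `u ∈ S_e`. -/
def sphRadial {d : ℕ} (K : Set (Esp d)) (e u : Esp d) : ℝ :=
  sSup {t : ℝ | 0 ≤ t ∧ t ≤ π / 2 ∧ (Real.cos t) • e + (Real.sin t) • u ∈ K}

/-- The set `-int(K*)`: points `e` of the sphere such that `K` is contained in the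
open hemisphere centred at `e`. -/
def negIntPolar (d : ℕ) (K : Set (Esp d)) : Set (Esp d) :=
  {e ∈ uSphere d | ∀ x ∈ K, 0 < ⟪e, x⟫}

/-- Points `e` of the sphere such that `K ⊆ {x : ⟨x,e⟩ ≥ 0}` (closed hemisphere). -/
def hemiCenters (d : ℕ) (K : Set (Esp d)) : Set (Esp d) :=
  {e ∈ uSphere d | ∀ x ∈ K, 0 ≤ ⟪x, e⟫}

/-- The `σ⁰_{d-1}`-average of `D ∘ α_{K,e}` over `S_e`. -/
def avgD (d : ℕ) (K : Set (Esp d)) (e : Esp d) : ℝ :=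
  ∫ u, Dfun d (sphRadial K e u) ∂(sigma0 d e)

/-- The `L²(S_e, σ⁰_{d-1})`-deviation of `D ∘ α_{K,e}` from its average. -/
def L2dev (d : ℕ) (K : Set (Esp d)) (e : Esp d) : ℝ :=
  Real.sqrt (∫ u, (Dfun d (sphRadial K e u) - avgD d K e) ^ 2 ∂(sigma0 d e))

/-- `Δ₂(K)`: infimum of the `L²` deviations over `e ∈ -int(K*)`. -/
def Delta2 (d : ℕ) (K : Set (Esp d)) : ℝ :=
  sInf (L2dev d K '' negIntPolar d K)

/-- `Δ₂*(K)`: infimum of the `L²` deviations over all `e` with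
`K ⊆ {x : ⟨x,e⟩ ≥ 0}`. -/
def Delta2Star (d : ℕ) (K : Set (Esp d)) : ℝ :=
  sInf (L2dev d K '' hemiCenters d K)

/-- The centred spherical inradius `r_e(K) = max{r ≥ 0 : B(e,r) ⊆ K}`. -/
def rcent (d : ℕ) (K : Set (Esp d)) (e : Esp d) : ℝ :=
  sSup {r : ℝ | 0 ≤ r ∧ cap e r ⊆ K}

/-- The centred spherical circumradius `R_e(K) = min{r ≥ 0 : K ⊆ B(e,r)}`. -/
def Rcent (d : ℕ) (K : Set (Esp d)) (e : Esp d) : ℝ :=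
  sInf {r : ℝ | 0 ≤ r ∧ K ⊆ cap e r}

/-- The spherical inradius `Σ_r(K) = max{r_e(K) : e ∈ K}`. -/
def SigmaR (d : ℕ) (K : Set (Esp d)) : ℝ :=
  sSup (rcent d K '' K)

/-- The deviation functional `ϑ_r(K) = min{R_e(K) - r_e(K) : e ∈ K, r_e(K) = Σ_r(K)}`. -/
def thetaR (d : ℕ) (K : Set (Esp d)) : ℝ :=
  sInf ((fun e => Rcent d K e - rcent d K e) '' {e ∈ K | rcent d K e = SigmaR d K})

/-- `Ũ_e(K) = σ_d({x ∈ S^d : (x-e)^⊥ ∩ K ≠ ∅})`. -/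
def Utilde (d : ℕ) (e : Esp d) (K : Set (Esp d)) : ℝ :=
  (sigmaMeas d {x | ∃ y ∈ K, ⟪x - e, y⟫ = 0}).toReal

/-- The spherical Hausdorff distance `δ_s`, based on the geodesic metric. -/
def sphHausdorff (d : ℕ) (K L : Set (Esp d)) : ℝ :=
  max (⨆ x ∈ K, ⨅ y ∈ L, geo x y) (⨆ y ∈ L, ⨅ x ∈ K, geo x y)

/-- Continuity of a functional on `𝒦̄_s^d` with respect to the spherical Hausdorff
metric `δ_s`. -/
def SphContinuous (d : ℕ) (F : Set (Esp d) → ℝ) : Prop :=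
  ∀ K, IsSphConvBody d K → ∀ ε > (0:ℝ), ∃ δ > (0:ℝ), ∀ L, IsSphConvBody d L →
    sphHausdorff d K L < δ → |F K - F L| < ε

/-- A hitting functional: continuous, nonnegative, vanishing exactly on one-pointed
sets. -/
def IsHittingFunctional (d : ℕ) (Φ : Set (Esp d) → ℝ) : Prop :=
  SphContinuous d Φ ∧ (∀ K, IsSphConvBody d K → 0 ≤ Φ K) ∧
    (∀ K, IsSphConvBody d K → (Φ K = 0 ↔ ∃ p, K = {p}))

/-- A size functional: continuous, nonnegative, not identically zero, vanishing on
one-pointed sets. -/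
def IsSizeFunctional (d : ℕ) (S : Set (Esp d) → ℝ) : Prop :=
  SphContinuous d S ∧ (∀ K, IsSphConvBody d K → 0 ≤ S K) ∧
    (∃ K, IsSphConvBody d K ∧ S K ≠ 0) ∧
    (∀ p ∈ uSphere d, S ({p} : Set (Esp d)) = 0)

/-- The isoperimetric constant `τ(Φ,Σ,a) = inf{Φ(K) : K ∈ 𝒦̄_s^d, Σ(K) ≥ a}`. -/
def tauConst (d : ℕ) (Φ S : Set (Esp d) → ℝ) (a : ℝ) : ℝ :=
  sInf (Φ '' {K | IsSphConvBody d K ∧ a ≤ S K})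

/-- The spherical convex hull of a set `V ⊆ S^d`: the intersection of the sphere with
the closed convex cone generated by `V`. -/
def sphConvHull (d : ℕ) (V : Set (Esp d)) : Set (Esp d) :=
  {x ∈ uSphere d | ∃ y ∈ convexHull ℝ V, ∃ t : ℝ, 0 < t ∧ x = t • y}

/-- A spherical polytope: the intersection of the sphere with a finitely generated
(polyhedral) cone, which is also a spherically convex body. -/
def IsSphPolytope (d : ℕ) (P : Set (Esp d)) : Prop :=
  IsSphConvBody d P ∧ ∃ V : Finset (Esp d),
    (V : Set (Esp d)) ⊆ uSphere d ∧ P = sphConvHull d (V : Set (Esp d))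

/-- The vertices (extreme points) of a spherical polytope. -/
def sphExtremePoints (d : ℕ) (P : Set (Esp d)) : Set (Esp d) :=
  {x ∈ P | x ∉ sphConvHull d (P \ {x})}

/-- The boundary of `K` relative to the sphere. -/
def sphFrontier (d : ℕ) (K : Set (Esp d)) : Set (Esp d) :=
  {x ∈ K | ∀ ε > (0:ℝ), ∃ y ∈ uSphere d, y ∉ K ∧ dist y x < ε}

/-- The functions `h_m(t) = (-1)^{m+1} e^{-t} + 2 ∑_{i=0}^{⌊m/2⌋} t^{m-2i}/(m-2i)!`. -/
def hFun (m : ℕ) (t : ℝ) : ℝ :=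
  (-1 : ℝ) ^ (m + 1) * Real.exp (-t) +
    2 * ∑ i ∈ Finset.range (m / 2 + 1), t ^ (m - 2 * i) / (Nat.factorial (m - 2 * i) : ℝ)

/-!
Up to null sets, a hyperplane through the origin either meets `K` or has a normal in `K*` or
`-K*`. Hence `U₁(K)` is `1 / 2` minus the normalized measure of `K*`, and the theorem says that
`K*` is smaller than the polar of a cap `C` of the same volume, with a gain of order `Δ₂(K)²`.

Write the cone over `K` around an axis `e` as the epigraph of a function `h` on `e^⊥`, positive and
homogeneous of degree one, and the polar of `-K` as the epigraph of `h'`. On `S_e` these are the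
cotangents of the radial angles `α` and `α'`. Duality reads `h(x) h'(y) + ⟪x, y⟫ ≥ 0`, so the
functional Santaló inequality applies to `exp(-h² / 2)` and `exp(-h'² / 2)`; if the former has its
barycentre at the origin, it yields `(∫ tan^d α) (∫ tan^d α') ≤ 1` over `S_e`. Such an axis `e` is
found by minimizing `v ↦ ∫_C exp(-⟪v, x⟫² / 2) dx + ‖v‖² / 2` over the cone `C`. The functional
Santaló inequality itself is proved by induction on the dimension, splitting the space by a
hyperplane that bisects the mass and applying the one-dimensional Prékopa–Leindler inequality in
logarithmic coordinates.

The measures of `K` and `K*` are the averages of `D ∘ α` and `D ∘ α'` up to a constant, and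
`tan^d` is a convex function of `D`. The tangent line bound for `α'` and a strong convexity bound
for `α`, whose quadratic term averages to the variance of `D ∘ α` and hence dominates `Δ₂(K)²`,
turn the product inequality into the claim.
-/

section RotationInvariance

variable {E : Type*} [NormedAddCommGroup E] [InnerProductSpace ℝ E] [FiniteDimensional ℝ E]
  [MeasurableSpace E] [BorelSpace E] {μ ν : Measure E}

lemma charFun_eq_charFun_of_norm_eq (hμ : ∀ T : E ≃ₗᵢ[ℝ] E, μ.map T = μ) {s t : E}
    (hst : ‖s‖ = ‖t‖) : charFun μ s = charFun μ t := by
  obtain ⟨T, hT⟩ : ∃ T : E ≃ₗᵢ[ℝ] E, T s = t :=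
    ⟨(ℝ ∙ (s - t))ᗮ.reflection, Submodule.reflection_sub hst⟩
  conv_rhs => rw [← hμ T]
  rw [charFun_apply, charFun_apply, integral_map T.continuous.aemeasurable (by fun_prop)]
  simp only [← hT, LinearIsometryEquiv.inner_map_map]

lemma integral_charFun_norm_smul (hμ : ∀ T : E ≃ₗᵢ[ℝ] E, μ.map T = μ) (hν : ∀ᵐ x ∂ν, ‖x‖ = 1)
    (t : E) : ∫ v, charFun μ (‖t‖ • v) ∂ν = ν.real Set.univ * charFun μ t := by
  have hconst : ∀ᵐ v ∂ν, charFun μ (‖t‖ • v) = charFun μ t := by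
    filter_upwards [hν] with v hv
    exact charFun_eq_charFun_of_norm_eq hμ (by rw [norm_smul, hv]; simp)
  rw [integral_congr_ae hconst]
  simp

lemma integral_charFun_smul_comm [IsFiniteMeasure μ] [IsFiniteMeasure ν] (r : ℝ) :
    ∫ v, charFun μ (r • v) ∂ν = ∫ v, charFun ν (r • v) ∂μ := by
  simp only [charFun_apply]
  rw [integral_integral_swap]
  · simp only [inner_smul_right, real_inner_comm]
  · refine Integrable.of_bound (C := 1) (by unfold Function.uncurry; fun_prop) ?_
    exact Eventually.of_forall fun p => (Complex.norm_exp_ofReal_mul_I _).le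

theorem smul_eq_smul_of_map_linearIsometryEquiv_eq [IsFiniteMeasure μ] [IsFiniteMeasure ν]
    (hμ_norm : ∀ᵐ x ∂μ, ‖x‖ = 1) (hν_norm : ∀ᵐ x ∂ν, ‖x‖ = 1)
    (hμ : ∀ T : E ≃ₗᵢ[ℝ] E, μ.map T = μ) (hν : ∀ T : E ≃ₗᵢ[ℝ] E, ν.map T = ν) :
    ν Set.univ • μ = μ Set.univ • ν := by
  have : IsFiniteMeasure (ν Set.univ • μ) := Measure.smul_finite μ (measure_ne_top _ _)
  have : IsFiniteMeasure (μ Set.univ • ν) := Measure.smul_finite ν (measure_ne_top _ _)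
  refine Measure.ext_of_charFun (funext fun t => ?_)
  have hchar : (ν.real Set.univ : ℂ) * charFun μ t = μ.real Set.univ * charFun ν t := by
    rw [← integral_charFun_norm_smul hμ hν_norm, ← integral_charFun_norm_smul hν hμ_norm,
      integral_charFun_smul_comm]
  rw [charFun_apply, charFun_apply, integral_smul_measure, integral_smul_measure]
  simpa [charFun_apply, Measure.real] using hchar

end RotationInvariance

section PrekopaLeindler

open scoped Pointwise in
lemma volume_add_volume_le_of_isCompact {A B : Set ℝ} (hA : IsCompact A) (hB : IsCompact B)
    (hA_ne : A.Nonempty) (hB_ne : B.Nonempty) : volume A + volume B ≤ volume (A + B) := by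
  obtain ⟨a, haA, ha⟩ := hA.exists_isGreatest hA_ne
  obtain ⟨b, hbB, hb⟩ := hB.exists_isLeast hB_ne
  have hB' : IsCompact ((fun x => a + x) '' B) := hB.image (by fun_prop)
  -- The translates `A + b` and `a + B` of `A` and `B` meet only at `a + b`.
  have hinter : (fun x => x + b) '' A ∩ (fun x => a + x) '' B ⊆ {a + b} := by
    rintro _ ⟨⟨x, hx, rfl⟩, ⟨y, hy, hxy⟩⟩
    have hxa : x ≤ a := ha hx
    have hby : b ≤ y := hb hy
    rw [Set.mem_singleton_iff]
    linarith [show a + y = x + b from hxy]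
  calc volume A + volume B = volume ((fun x => x + b) '' A) + volume ((fun x => a + x) '' B) := by
        simp [Set.image_add_right, Set.image_add_left, measure_preimage_add_right,
          measure_preimage_add]
    _ = volume ((fun x => x + b) '' A ∪ (fun x => a + x) '' B) :=
        (measure_union₀ hB'.measurableSet.nullMeasurableSet
          (measure_mono_null hinter (by simp))).symm
    _ ≤ volume (A + B) := measure_mono (Set.union_subset
        (Set.image_subset_iff.2 fun _ hx => Set.add_mem_add hx hbB)
        (Set.image_subset_iff.2 fun _ hx => Set.add_mem_add haA hx))

open scoped Pointwise in
lemma volume_add_volume_le_two_mul_volume_of_midpoint {A B M : Set ℝ} (hA : MeasurableSet A)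
    (hB : MeasurableSet B) (hA_ne : A.Nonempty) (hB_ne : B.Nonempty)
    (hM : ∀ a ∈ A, ∀ b ∈ B, (a + b) / 2 ∈ M) : volume A + volume B ≤ 2 * volume M := by
  obtain ⟨a₀, ha₀⟩ := hA_ne
  obtain ⟨b₀, hb₀⟩ := hB_ne
  have hcompact : ∀ K ⊆ A, IsCompact K → ∀ L ⊆ B, IsCompact L →
      volume K + volume L ≤ 2 * volume M := by
    intro K hKA hK L hLB hL
    have hsub : (insert a₀ K + insert b₀ L : Set ℝ) ⊆ (2 : ℝ) • M := by
      rintro _ ⟨x, hx, y, hy, rfl⟩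
      exact ⟨(x + y) / 2, hM x (Set.insert_subset ha₀ hKA hx) y (Set.insert_subset hb₀ hLB hy),
        by simp only [smul_eq_mul]; ring⟩
    calc volume K + volume L ≤ volume (insert a₀ K) + volume (insert b₀ L) := by
          gcongr <;> exact Set.subset_insert _ _
      _ ≤ volume (insert a₀ K + insert b₀ L) := volume_add_volume_le_of_isCompact
          (hK.insert a₀) (hL.insert b₀) (Set.insert_nonempty _ _) (Set.insert_nonempty _ _)
      _ ≤ volume ((2 : ℝ) • M) := measure_mono hsub
      _ = 2 * volume M := by simp
  rw [hA.measure_eq_iSup_isCompact, hB.measure_eq_iSup_isCompact]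
  simp only [iSup_and']
  exact ENNReal.biSup_add_biSup_le' ⟨∅, Set.empty_subset _, isCompact_empty⟩
    ⟨∅, Set.empty_subset _, isCompact_empty⟩
    fun K hK L hL => hcompact K hK.1 hK.2 L hL.1 hL.2

lemma four_mul_mul_le_add_sq (x y : ℝ≥0∞) : 4 * (x * y) ≤ (x + y) ^ 2 := by
  rcases eq_or_ne x ∞ with rfl | hx
  · simp
  rcases eq_or_ne y ∞ with rfl | hy
  · simp
  lift x to ℝ≥0 using hx
  lift y to ℝ≥0 using hy
  norm_cast
  simpa only [mul_assoc] using four_mul_le_sq_add x y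

lemma measurable_volume_lt (u : ℝ → ℝ) : Measurable fun t => volume {x | t < u x} :=
  Antitone.measurable fun _ _ hst => measure_mono fun _ hx => hst.trans_lt hx

lemma lintegral_ofReal_add_le_of_midpoint {f g h : ℝ → ℝ} (hf : Measurable f)
    (hg : Measurable g) (hh : Measurable h) (hf_nonneg : ∀ x, 0 ≤ f x)
    (hg_nonneg : ∀ x, 0 ≤ g x) (hh_nonneg : ∀ x, 0 ≤ h x)
    (hf_sup : IsLUB (Set.range f) 1) (hg_sup : IsLUB (Set.range g) 1)
    (hfgh : ∀ a b, f a * g b ≤ h ((a + b) / 2) ^ 2) :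
    (∫⁻ x, ENNReal.ofReal (f x)) + ∫⁻ x, ENNReal.ofReal (g x) ≤
      2 * ∫⁻ x, ENNReal.ofReal (h x) := by
  rw [lintegral_eq_lintegral_meas_lt _ (Eventually.of_forall hf_nonneg) hf.aemeasurable,
    lintegral_eq_lintegral_meas_lt _ (Eventually.of_forall hg_nonneg) hg.aemeasurable,
    lintegral_eq_lintegral_meas_lt _ (Eventually.of_forall hh_nonneg) hh.aemeasurable,
    ← lintegral_add_left (measurable_volume_lt f),
    ← lintegral_const_mul' _ _ ENNReal.ofNat_ne_top]
  refine setLIntegral_mono' measurableSet_Ioi fun t (ht : 0 < t) => ?_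
  rcases lt_or_ge t 1 with ht₁ | ht₁
  · have hsuperlevel : ∀ {u : ℝ → ℝ}, IsLUB (Set.range u) 1 → {x | t < u x}.Nonempty :=
      fun hu => by simpa [Set.Nonempty] using (lt_isLUB_iff hu).1 ht₁
    refine volume_add_volume_le_two_mul_volume_of_midpoint (measurableSet_lt measurable_const hf)
      (measurableSet_lt measurable_const hg) (hsuperlevel hf_sup) (hsuperlevel hg_sup) ?_
    intro a (ha : t < f a) b (hb : t < g b)
    have : t ^ 2 < h ((a + b) / 2) ^ 2 := by nlinarith [hfgh a b]
    exact lt_of_pow_lt_pow_left₀ 2 (hh_nonneg _) this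
  · have hempty : ∀ {u : ℝ → ℝ}, IsLUB (Set.range u) 1 → {x | t < u x} = ∅ := fun hu =>
      Set.eq_empty_of_forall_notMem fun x hx => hx.not_ge ((hu.1 ⟨x, rfl⟩).trans ht₁)
    simp [hempty hf_sup, hempty hg_sup]

lemma mul_le_sq_of_inv_mul_add_le {a b : ℝ} (ha : 0 < a) (hb : 0 < b) {I J H : ℝ≥0∞}
    (h : ENNReal.ofReal a⁻¹ * I + ENNReal.ofReal b⁻¹ * J ≤
      2 * (ENNReal.ofReal (√(a * b))⁻¹ * H)) : I * J ≤ H ^ 2 := by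
  have hinv : ENNReal.ofReal (a * b) * ENNReal.ofReal (a * b)⁻¹ = 1 := by
    rw [← ENNReal.ofReal_mul (by positivity), mul_inv_cancel₀ (by positivity), ENNReal.ofReal_one]
  have hsqrt : ENNReal.ofReal (√(a * b))⁻¹ ^ 2 = ENNReal.ofReal (a * b)⁻¹ := by
    rw [← ENNReal.ofReal_pow (by positivity), inv_pow, Real.sq_sqrt (by positivity)]
  have hprod : ENNReal.ofReal a⁻¹ * ENNReal.ofReal b⁻¹ = ENNReal.ofReal (a * b)⁻¹ := by
    rw [← ENNReal.ofReal_mul (by positivity), ← mul_inv]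
  have hscaled : ENNReal.ofReal (a * b)⁻¹ * (4 * (I * J)) ≤
      ENNReal.ofReal (a * b)⁻¹ * (4 * H ^ 2) :=
    calc ENNReal.ofReal (a * b)⁻¹ * (4 * (I * J))
        = 4 * (ENNReal.ofReal a⁻¹ * I * (ENNReal.ofReal b⁻¹ * J)) := by rw [← hprod]; ring
      _ ≤ (ENNReal.ofReal a⁻¹ * I + ENNReal.ofReal b⁻¹ * J) ^ 2 := four_mul_mul_le_add_sq _ _
      _ ≤ (2 * (ENNReal.ofReal (√(a * b))⁻¹ * H)) ^ 2 := by gcongr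
      _ = ENNReal.ofReal (a * b)⁻¹ * (4 * H ^ 2) := by rw [← hsqrt]; ring
  have hcancel := mul_le_mul_right hscaled (ENNReal.ofReal (a * b))
  rw [← mul_assoc, ← mul_assoc (ENNReal.ofReal _), hinv, one_mul, one_mul] at hcancel
  exact (ENNReal.mul_le_mul_iff_right (by simp) (by simp)).1 hcancel

lemma isLUB_range_inv_iSup_mul {ι : Type*} [Nonempty ι] {u : ι → ℝ} (hu : BddAbove (Set.range u))
    (hpos : 0 < ⨆ x, u x) : IsLUB (Set.range fun x => (⨆ x, u x)⁻¹ * u x) 1 := by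
  have := (isLUB_ciSup hu).mul_left (inv_pos.2 hpos).le
  rwa [inv_mul_cancel₀ hpos.ne', ← Set.range_comp] at this

lemma lintegral_ofReal_mul_le_of_midpoint {f g h : ℝ → ℝ} (hf : Measurable f)
    (hg : Measurable g) (hh : Measurable h) (hf_nonneg : ∀ x, 0 ≤ f x)
    (hg_nonneg : ∀ x, 0 ≤ g x) (hh_nonneg : ∀ x, 0 ≤ h x) (hf_bdd : BddAbove (Set.range f))
    (hg_bdd : BddAbove (Set.range g)) (hfgh : ∀ a b, f a * g b ≤ h ((a + b) / 2) ^ 2) :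
    (∫⁻ x, ENNReal.ofReal (f x)) * ∫⁻ x, ENNReal.ofReal (g x) ≤
      (∫⁻ x, ENNReal.ofReal (h x)) ^ 2 := by
  set A := ⨆ x, f x
  set B := ⨆ x, g x
  rcases (Real.iSup_nonneg hf_nonneg : 0 ≤ A).eq_or_lt with hA | hA
  · have : ∀ x, f x = 0 := fun x => le_antisymm (hA ▸ le_ciSup hf_bdd x) (hf_nonneg x)
    simp [this]
  rcases (Real.iSup_nonneg hg_nonneg : 0 ≤ B).eq_or_lt with hB | hB
  · have : ∀ x, g x = 0 := fun x => le_antisymm (hB ▸ le_ciSup hg_bdd x) (hg_nonneg x)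
    simp [this]
  refine mul_le_sq_of_inv_mul_add_le hA hB ?_
  have hnormalized : ∀ a b, A⁻¹ * f a * (B⁻¹ * g b) ≤ ((√(A * B))⁻¹ * h ((a + b) / 2)) ^ 2 := by
    intro a b
    rw [mul_pow, inv_pow, Real.sq_sqrt (by positivity), mul_inv, mul_mul_mul_comm]
    gcongr
    exact hfgh a b
  have key := lintegral_ofReal_add_le_of_midpoint (by fun_prop) (by fun_prop) (by fun_prop)
    (fun x => mul_nonneg (by positivity) (hf_nonneg x))
    (fun x => mul_nonneg (by positivity) (hg_nonneg x))
    (fun x => mul_nonneg (by positivity) (hh_nonneg x))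
    (isLUB_range_inv_iSup_mul hf_bdd hA) (isLUB_range_inv_iSup_mul hg_bdd hB) hnormalized
  simpa only [ENNReal.ofReal_mul (inv_nonneg.2 (Real.sqrt_nonneg (A * B))),
    ENNReal.ofReal_mul (inv_pos.2 hA).le, ENNReal.ofReal_mul (inv_pos.2 hB).le,
    lintegral_const_mul' _ _ ENNReal.ofReal_ne_top] using key

lemma iSup_lintegral_min_natCast {α : Type*} [MeasurableSpace α] {μ : Measure α} {u : α → ℝ≥0∞}
    (hu : Measurable u) : ⨆ n : ℕ, ∫⁻ x, min (u x) n ∂μ = ∫⁻ x, u x ∂μ := by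
  rw [← lintegral_iSup (fun n => hu.min measurable_const)
    (fun m n hmn x => min_le_min le_rfl (by exact_mod_cast hmn))]
  refine lintegral_congr fun x => ?_
  rw [← inf_iSup_eq, ENNReal.iSup_natCast, inf_top_eq]

theorem lintegral_mul_le_of_midpoint {f g : ℝ → ℝ≥0∞} {h : ℝ → ℝ} (hf : Measurable f)
    (hg : Measurable g) (hh : Measurable h) (hh_nonneg : ∀ x, 0 ≤ h x)
    (hfgh : ∀ a b, f a * g b ≤ ENNReal.ofReal (h ((a + b) / 2) ^ 2)) :
    (∫⁻ x, f x) * ∫⁻ x, g x ≤ (∫⁻ x, ENNReal.ofReal (h x)) ^ 2 := by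
  have hle : ∀ (u : ℝ → ℝ≥0∞) (k : ℕ) x, (min (u x) k).toReal ≤ k := fun u k x =>
    ENNReal.toReal_le_of_le_ofReal k.cast_nonneg (by simp)
  have htrunc : ∀ m n : ℕ, (∫⁻ x, min (f x) m) * ∫⁻ x, min (g x) n ≤
      (∫⁻ x, ENNReal.ofReal (h x)) ^ 2 := by
    intro m n
    have := lintegral_ofReal_mul_le_of_midpoint (f := fun x => (min (f x) m).toReal)
      (g := fun x => (min (g x) n).toReal) (h := h) (hf.min measurable_const).ennreal_toReal
      (hg.min measurable_const).ennreal_toReal hh (fun _ => ENNReal.toReal_nonneg)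
      (fun _ => ENNReal.toReal_nonneg) hh_nonneg
      ⟨m, Set.forall_mem_range.2 (hle f m)⟩ ⟨n, Set.forall_mem_range.2 (hle g n)⟩
      (fun a b => by
        rw [← ENNReal.toReal_mul]
        refine ENNReal.toReal_le_of_le_ofReal (sq_nonneg _) (le_trans ?_ (hfgh a b))
        gcongr <;> exact min_le_left _ _)
    have hfin : ∀ (u : ℝ → ℝ≥0∞) (k : ℕ) x, min (u x) k ≠ ∞ := fun u k x =>
      ne_top_of_le_ne_top (ENNReal.natCast_ne_top k) (min_le_right _ _)
    simpa only [ENNReal.ofReal_toReal (hfin _ _ _)] using this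
  rw [← iSup_lintegral_min_natCast hf, ← iSup_lintegral_min_natCast hg]
  simp only [ENNReal.iSup_mul, ENNReal.mul_iSup]
  exact iSup_le fun m => iSup_le fun n => htrunc n m

lemma setLIntegral_Ioi_zero_eq_lintegral_exp_mul (u : ℝ → ℝ≥0∞) :
    ∫⁻ s in Set.Ioi (0 : ℝ), u s = ∫⁻ a, ENNReal.ofReal (exp a) * u (exp a) := by
  rw [← Real.range_exp, ← Set.image_univ,
    lintegral_image_eq_lintegral_abs_deriv_mul MeasurableSet.univ
      (fun x _ => (Real.hasDerivAt_exp x).hasDerivWithinAt) Real.exp_injective.injOn]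
  simp [abs_of_pos (exp_pos _)]

lemma setLIntegral_Ioi_exp_neg_sq_div_two :
    ∫⁻ s in Set.Ioi (0 : ℝ), ENNReal.ofReal (exp (-(s ^ 2 / 2))) = ENNReal.ofReal √(π / 2) := by
  have hexp : ∀ s : ℝ, exp (-(s ^ 2 / 2)) = exp (-(1 / 2) * s ^ 2) := fun s => by ring_nf
  have hsqrt : √(π / (1 / 2)) / 2 = √(π / 2) := by
    rw [show π / 2 = π / (1 / 2) / 2 ^ 2 by ring, Real.sqrt_div' _ (sq_nonneg 2),
      Real.sqrt_sq zero_le_two]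
  simp only [hexp]
  rw [← ofReal_integral_eq_lintegral_ofReal
    (integrable_exp_neg_mul_sq (by norm_num)).integrableOn
    (Eventually.of_forall fun _ => (exp_pos _).le), integral_gaussian_Ioi, hsqrt]

-- Prékopa–Leindler in the variable `a = log s`, where `s t = ((a + b) / 2).exp ^ 2`.
theorem setLIntegral_Ioi_mul_le_of_mul_le_exp {φ ψ : ℝ → ℝ≥0∞} (hφ : Measurable φ)
    (hψ : Measurable ψ) {M : ℝ} (hM : 0 ≤ M)
    (h : ∀ s, 0 < s → ∀ t, 0 < t → φ s * ψ t ≤ ENNReal.ofReal (M * exp (-(s * t)))) :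
    (∫⁻ s in Set.Ioi 0, φ s) * ∫⁻ t in Set.Ioi 0, ψ t ≤ ENNReal.ofReal (M * (π / 2)) := by
  have hmid : ∀ a b, ENNReal.ofReal (exp a) * φ (exp a) * (ENNReal.ofReal (exp b) * ψ (exp b)) ≤
      ENNReal.ofReal ((exp ((a + b) / 2) *
        (√M * exp (-(exp ((a + b) / 2) ^ 2 / 2)))) ^ 2) := by
    intro a b
    have hexp : exp ((a + b) / 2) ^ 2 = exp a * exp b := by
      rw [← Real.exp_nat_mul, ← Real.exp_add]; congr 1; push_cast; ring
    have hsq : (exp ((a + b) / 2) * (√M * exp (-(exp ((a + b) / 2) ^ 2 / 2)))) ^ 2 =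
        exp a * exp b * (M * exp (-(exp a * exp b))) := by
      rw [mul_pow, mul_pow, hexp, Real.sq_sqrt hM, ← Real.exp_nat_mul]
      congr 3; push_cast; ring
    rw [hsq, ENNReal.ofReal_mul (by positivity), ENNReal.ofReal_mul (exp_pos a).le,
      mul_mul_mul_comm]
    gcongr
    exact h _ (exp_pos _) _ (exp_pos _)
  rw [setLIntegral_Ioi_zero_eq_lintegral_exp_mul φ, setLIntegral_Ioi_zero_eq_lintegral_exp_mul ψ]
  refine (lintegral_mul_le_of_midpoint (by fun_prop) (by fun_prop)
    (h := fun a => exp a * (√M * exp (-(exp a ^ 2 / 2)))) (by fun_prop)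
    (fun a => by positivity) hmid).trans (le_of_eq ?_)
  simp only [ENNReal.ofReal_mul (exp_pos _).le]
  rw [← setLIntegral_Ioi_zero_eq_lintegral_exp_mul
    (fun s => ENNReal.ofReal (√M * exp (-(s ^ 2 / 2))))]
  simp only [ENNReal.ofReal_mul (Real.sqrt_nonneg M)]
  rw [lintegral_const_mul' _ _ ENNReal.ofReal_ne_top, setLIntegral_Ioi_exp_neg_sq_div_two,
    mul_pow, ← ENNReal.ofReal_pow (by positivity), ← ENNReal.ofReal_pow (by positivity),
    Real.sq_sqrt hM, Real.sq_sqrt (by positivity), ENNReal.ofReal_mul hM]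

end PrekopaLeindler

section AxialSum

/-- The orthogonal sum `ℝ ⊕ F`. Its first summand plays the role of the axis of a cone, so that
`F` is the tangent hyperplane at the unit vector `toLp 2 (1, 0)`. -/
abbrev AxialSum (F : Type*) : Type _ := WithLp 2 (ℝ × F)

variable {E F : Type*} [NormedAddCommGroup E] [InnerProductSpace ℝ E] [FiniteDimensional ℝ E]
  [NormedAddCommGroup F] [InnerProductSpace ℝ F] [FiniteDimensional ℝ F]

lemma finrank_axialSum : Module.finrank ℝ (AxialSum F) = Module.finrank ℝ F + 1 := by
  rw [(WithLp.linearEquiv 2 ℝ (ℝ × F)).finrank_eq, Module.finrank_prod, Module.finrank_self,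
    add_comm]

omit [InnerProductSpace ℝ F] [FiniteDimensional ℝ F] in
lemma norm_sq_axialSum (s : ℝ) (y : F) :
    ‖(WithLp.toLp 2 (s, y) : AxialSum F)‖ ^ 2 = s ^ 2 + ‖y‖ ^ 2 := by
  simp [WithLp.prod_norm_sq_eq_of_L2]

omit [FiniteDimensional ℝ F] in
lemma inner_axialSum (s t : ℝ) (x y : F) :
    ⟪(WithLp.toLp 2 (s, x) : AxialSum F), WithLp.toLp 2 (t, y)⟫ = s * t + ⟪x, y⟫ := by
  simp [WithLp.prod_inner_apply, mul_comm]

lemma exists_linearIsometryEquiv_of_finrank_eq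
    (h : Module.finrank ℝ E = Module.finrank ℝ F) : Nonempty (E ≃ₗᵢ[ℝ] F) :=
  ⟨(stdOrthonormalBasis ℝ E).equiv (stdOrthonormalBasis ℝ F) (finCongr h)⟩

lemma exists_axialSum_linearIsometryEquiv (h : Module.finrank ℝ E = Module.finrank ℝ F + 1)
    {e : E} (he : ‖e‖ = 1) : ∃ Φ : AxialSum F ≃ₗᵢ[ℝ] E, Φ (WithLp.toLp 2 (1, 0)) = e := by
  obtain ⟨Ψ⟩ := exists_linearIsometryEquiv_of_finrank_eq (finrank_axialSum (F := F) |>.trans h.symm)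
  have hnorm : ‖Ψ (WithLp.toLp 2 (1, 0))‖ = ‖e‖ := by
    rw [Ψ.norm_map, he, ← sq_eq_sq₀ (norm_nonneg _) zero_le_one, norm_sq_axialSum]
    simp
  exact ⟨Ψ.trans (ℝ ∙ (Ψ (WithLp.toLp 2 (1, 0)) - e))ᗮ.reflection, Submodule.reflection_sub hnorm⟩

end AxialSum

section HalfSpace

variable {F : Type*} [NormedAddCommGroup F] [InnerProductSpace ℝ F] [FiniteDimensional ℝ F]
  [MeasurableSpace F] [BorelSpace F]

lemma exists_setIntegral_Ioi_eq_half {φ : ℝ → ℝ} (hφ : Integrable φ) (hpos : 0 < ∫ s, φ s) :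
    ∃ c, ∫ s in Set.Ioi c, φ s = (∫ s, φ s) / 2 := by
  set A := ∫ s in Set.Ioi (0 : ℝ), φ s
  set B := ∫ s in Set.Iic (0 : ℝ), φ s
  have hAB : B + A = ∫ s, φ s :=
    intervalIntegral.integral_Iic_add_Ioi hφ.integrableOn hφ.integrableOn
  have hcont : Continuous fun b => ∫ s in (0 : ℝ)..b, φ s :=
    intervalIntegral.continuous_primitive (fun a b => hφ.intervalIntegrable) 0
  have htop := intervalIntegral_tendsto_integral_Ioi (0 : ℝ) hφ.integrableOn tendsto_id
  have hbot := intervalIntegral_tendsto_integral_Iic (0 : ℝ) hφ.integrableOn tendsto_id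
  have hge : ∃ b, (A - B) / 2 ≤ ∫ s in (0 : ℝ)..b, φ s :=
    (htop.eventually (Ici_mem_nhds (show (A - B) / 2 < A by linarith))).exists
  have hle : ∃ b, ∫ s in (0 : ℝ)..b, φ s ≤ (A - B) / 2 := by
    obtain ⟨b, hb⟩ := (hbot.eventually (Ici_mem_nhds (show (B - A) / 2 < B by linarith))).exists
    refine ⟨b, ?_⟩
    rw [intervalIntegral.integral_symm]
    linarith [show (B - A) / 2 ≤ ∫ s in b..0, φ s from hb]
  obtain ⟨c, hc : ∫ s in (0 : ℝ)..c, φ s = (A - B) / 2⟩ :=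
    mem_range_of_exists_le_of_exists_ge hcont hle hge
  have hsub : A - ∫ s in Set.Ioi c, φ s = ∫ s in (0 : ℝ)..c, φ s :=
    intervalIntegral.integral_Ioi_sub_Ioi' hφ.integrableOn hφ.integrableOn
  exact ⟨c, by linarith⟩

lemma exists_setIntegral_Ioi_prod_eq_half {f : ℝ × F → ℝ} (hf : Integrable f)
    (hpos : 0 < ∫ q, f q) :
    ∃ c : ℝ, ∫ q in Set.Ioi c ×ˢ Set.univ, f q = (∫ q, f q) / 2 := by
  rw [Measure.volume_eq_prod] at hf hpos ⊢
  rw [integral_prod f hf] at hpos ⊢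
  obtain ⟨c, hc⟩ := exists_setIntegral_Ioi_eq_half hf.integral_prod_left hpos
  exact ⟨c, by rw [setIntegral_prod f hf.integrableOn]; simpa using hc⟩

lemma lintegral_setLIntegral_Ioi_shear {k : ℝ × F → ℝ≥0∞} (hk : Measurable k) (p w : F) :
    ∫⁻ y, ∫⁻ s in Set.Ioi (0 : ℝ), k (s, p + y + s • w) =
      ∫⁻ q in Set.Ioi (0 : ℝ) ×ˢ Set.univ, k q := by
  rw [Measure.volume_eq_prod, ← Measure.prod_restrict, Measure.restrict_univ,
    lintegral_prod _ hk.aemeasurable, lintegral_lintegral_swap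
      (Measurable.aemeasurable (by fun_prop))]
  refine lintegral_congr fun s => ?_
  rw [← lintegral_add_right_eq_self (μ := volume) (fun y => k (s, y)) (p + s • w)]
  exact lintegral_congr fun y => by congr 2; abel

lemma setLIntegral_Ioi_zero_comp_sub (u : ℝ → ℝ≥0∞) (c : ℝ) :
    ∫⁻ t in Set.Ioi 0, u (t - c) = ∫⁻ t in Set.Ioi (-c), u t := by
  rw [← lintegral_indicator measurableSet_Ioi, ← lintegral_indicator measurableSet_Ioi,
    ← lintegral_add_right_eq_self _ c]
  simp only [Set.indicator, Set.mem_Ioi, neg_lt_iff_pos_add, add_sub_cancel_right]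

lemma lintegral_eq_lintegral_Ioi_add_Iio {g : ℝ × F → ℝ≥0∞} (hg : Measurable g) (w : F) :
    ∫⁻ q, g q = (∫⁻ y, ∫⁻ t in Set.Ioi (-⟪w, y⟫), g (t, y)) +
      ∫⁻ y, ∫⁻ t in Set.Iio (-⟪w, y⟫), g (t, y) := by
  have hmeas : Measurable fun y => ∫⁻ t in Set.Ioi (-⟪w, y⟫), g (t, y) := by
    simp only [← lintegral_indicator measurableSet_Ioi]
    exact Measurable.lintegral_prod_left' (f := {q : ℝ × F | -⟪w, q.2⟫ < q.1}.indicator g)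
      (hg.indicator (measurableSet_lt (by fun_prop) (by fun_prop)))
  rw [Measure.volume_eq_prod, lintegral_prod_symm _ hg.aemeasurable, ← lintegral_add_left hmeas]
  refine lintegral_congr fun y => ?_
  rw [setLIntegral_congr (Iio_ae_eq_Iic (a := -⟪w, y⟫)), ← Set.compl_Ioi]
  exact (lintegral_add_compl _ measurableSet_Ioi).symm

lemma measurePreserving_neg_fst : MeasurePreserving (fun q : ℝ × F => (-q.1, q.2)) :=
  (Measure.measurePreserving_neg (volume : Measure ℝ)).prod (MeasurePreserving.id volume)

lemma measurableEmbedding_neg_fst {Y : Type*} [MeasurableSpace Y] :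
    MeasurableEmbedding (fun q : ℝ × Y => (-q.1, q.2)) :=
  (MeasurableEquiv.prodCongr (MeasurableEquiv.neg ℝ) (MeasurableEquiv.refl Y)).measurableEmbedding

lemma setIntegral_Ioi_prod_add_Iio_prod {G : Type*} [NormedAddCommGroup G] [NormedSpace ℝ G]
    {f : ℝ × F → G} (hf : Integrable f) :
    (∫ q in Set.Ioi (0 : ℝ) ×ˢ Set.univ, f q) + ∫ q in Set.Iio (0 : ℝ) ×ˢ Set.univ, f q =
      ∫ q, f q := by
  have hcompl : (Set.Ioi (0 : ℝ) ×ˢ Set.univ)ᶜ = Set.Iic (0 : ℝ) ×ˢ (Set.univ : Set F) := by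
    ext q; simp
  rw [← integral_add_compl (measurableSet_Ioi.prod .univ) hf, hcompl, Measure.volume_eq_prod,
    ← Measure.prod_restrict, ← Measure.prod_restrict, ← Measure.prod_restrict,
    Measure.restrict_congr_set Iio_ae_eq_Iic]

end HalfSpace

section FunctionalSantalo

/-- The functional Santaló inequality on `E`, for functions `f` whose exponential transform
`z ↦ ∫ f(x) exp⟪z, x⟫ dx` is minimal at the origin. -/
def FunctionalSantalo (E : Type*) [NormedAddCommGroup E] [InnerProductSpace ℝ E]
    [FiniteDimensional ℝ E] [MeasurableSpace E] [BorelSpace E] : Prop :=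
  ∀ f g : E → ℝ≥0∞, Measurable f → Measurable g →
    (∀ x y, f x * g y ≤ ENNReal.ofReal (exp (-⟪x, y⟫))) →
    (∀ z, ∫⁻ x, f x ≤ ∫⁻ x, f x * ENNReal.ofReal (exp ⟪z, x⟫)) →
    (∫⁻ x, f x) * ∫⁻ y, g y ≤ ENNReal.ofReal ((2 * π) ^ Module.finrank ℝ E)

lemma lintegral_le_lintegral_mul_exp {X : Type*} [MeasurableSpace X] {μ : Measure X} {h k : X → ℝ}
    (h_nonneg : ∀ x, 0 ≤ h x) (hh : Integrable h μ) (hhk : Integrable (fun x => h x * k x) μ)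
    (hk : ∫ x, h x * k x ∂μ = 0) :
    ∫⁻ x, ENNReal.ofReal (h x) ∂μ ≤
      ∫⁻ x, ENNReal.ofReal (h x) * ENNReal.ofReal (exp (k x)) ∂μ := by
  have hsum : ∫ x, h x ∂μ = ∫ x, (h x + h x * k x) ∂μ := by
    rw [integral_add hh hhk, hk, add_zero]
  rw [← ofReal_integral_eq_lintegral_ofReal hh (Eventually.of_forall h_nonneg), hsum]
  calc ENNReal.ofReal (∫ x, (h x + h x * k x) ∂μ)
      ≤ ∫⁻ x, ENNReal.ofReal (h x + h x * k x) ∂μ := ENNReal.ofReal_le_of_le_toReal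
        ((integral_eq_lintegral_pos_part_sub_lintegral_neg_part (hh.add hhk)).trans_le
          (sub_le_self _ ENNReal.toReal_nonneg))
    _ ≤ _ := by
        refine lintegral_mono fun x => ?_
        rw [← ENNReal.ofReal_mul (h_nonneg x)]
        refine ENNReal.ofReal_le_ofReal ?_
        nlinarith [Real.add_one_le_exp (k x), h_nonneg x]

variable {F : Type*} [NormedAddCommGroup F] [InnerProductSpace ℝ F] [FiniteDimensional ℝ F]
  [MeasurableSpace F] [BorelSpace F]

lemma FunctionalSantalo.lintegral_mul_le (hF : FunctionalSantalo F) {c : ℝ} (hc : 0 < c)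
    {f g : F → ℝ≥0∞} (hf : Measurable f) (hg : Measurable g)
    (hfg : ∀ x y, f x * g y ≤ ENNReal.ofReal (c * exp (-⟪x, y⟫)))
    (hmin : ∀ z, ∫⁻ x, f x ≤ ∫⁻ x, f x * ENNReal.ofReal (exp ⟪z, x⟫)) :
    (∫⁻ x, f x) * ∫⁻ y, g y ≤ ENNReal.ofReal (c * (2 * π) ^ Module.finrank ℝ F) := by
  have hinv : ENNReal.ofReal c * ENNReal.ofReal c⁻¹ = 1 := by
    rw [← ENNReal.ofReal_mul hc.le, mul_inv_cancel₀ hc.ne', ENNReal.ofReal_one]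
  have hscaled := hF f (fun y => ENNReal.ofReal c⁻¹ * g y) hf (by fun_prop) (fun x y =>
    calc f x * (ENNReal.ofReal c⁻¹ * g y) = ENNReal.ofReal c⁻¹ * (f x * g y) := by ring
      _ ≤ ENNReal.ofReal c⁻¹ * ENNReal.ofReal (c * exp (-⟪x, y⟫)) := by gcongr; exact hfg x y
      _ = ENNReal.ofReal (exp (-⟪x, y⟫)) := by
        rw [ENNReal.ofReal_mul hc.le, ← mul_assoc, mul_comm (ENNReal.ofReal c⁻¹), hinv,
          one_mul]) hmin
  rw [lintegral_const_mul _ hg] at hscaled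
  calc (∫⁻ x, f x) * ∫⁻ y, g y
      = ENNReal.ofReal c * ENNReal.ofReal c⁻¹ * ((∫⁻ x, f x) * ∫⁻ y, g y) := by
        rw [hinv, one_mul]
    _ = ENNReal.ofReal c * ((∫⁻ x, f x) * (ENNReal.ofReal c⁻¹ * ∫⁻ y, g y)) := by ring
    _ ≤ ENNReal.ofReal c * ENNReal.ofReal ((2 * π) ^ Module.finrank ℝ F) := by gcongr
    _ = _ := by rw [← ENNReal.ofReal_mul hc.le]

lemma integrable_smul_snd_sub_sub_smul {h : ℝ × F → ℝ} (hh : Integrable h)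
    (hh' : Integrable fun q => ‖q‖ * h q) (h_nonneg : ∀ q, 0 ≤ h q) (p w : F) :
    Integrable fun q => h q • (q.2 - p - q.1 • w) := by
  refine Integrable.mono' ((hh'.const_mul (1 + ‖w‖)).add (hh.const_mul ‖p‖))
    (hh.aestronglyMeasurable.smul (Measurable.aestronglyMeasurable (by fun_prop)))
    (Eventually.of_forall fun q => ?_)
  have hnorm : ‖q.2 - p - q.1 • w‖ ≤ ‖q‖ + ‖p‖ + ‖q‖ * ‖w‖ := by
    refine (norm_sub_le _ _).trans (add_le_add ((norm_sub_le _ _).trans ?_) ?_)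
    · gcongr; exact norm_snd_le q
    · rw [norm_smul]; gcongr; exact norm_fst_le q
  rw [norm_smul, Real.norm_of_nonneg (h_nonneg q)]
  simp only [Pi.add_apply]
  nlinarith [h_nonneg q]

lemma lintegral_shear_le_lintegral_shear_mul_exp {h : ℝ × F → ℝ} (hm : Measurable h)
    (h_nonneg : ∀ q, 0 ≤ h q) (hh : Integrable h) (hh' : Integrable fun q => ‖q‖ * h q) (p w : F)
    (hbary : ∫ q in Set.Ioi (0 : ℝ) ×ˢ Set.univ, h q • (q.2 - p - q.1 • w) = 0) (z : F) :
    ∫⁻ y, ∫⁻ s in Set.Ioi (0 : ℝ), ENNReal.ofReal (h (s, p + y + s • w)) ≤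
      ∫⁻ y, (∫⁻ s in Set.Ioi (0 : ℝ), ENNReal.ofReal (h (s, p + y + s • w))) *
        ENNReal.ofReal (exp ⟪z, y⟫) := by
  have htilt : ∫⁻ y, (∫⁻ s in Set.Ioi (0 : ℝ), ENNReal.ofReal (h (s, p + y + s • w))) *
        ENNReal.ofReal (exp ⟪z, y⟫) =
      ∫⁻ q in Set.Ioi (0 : ℝ) ×ˢ Set.univ,
        ENNReal.ofReal (h q) * ENNReal.ofReal (exp ⟪z, q.2 - p - q.1 • w⟫) := by
    rw [← lintegral_setLIntegral_Ioi_shear (by fun_prop) p w]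
    refine lintegral_congr fun y => ?_
    rw [← lintegral_mul_const _ (by fun_prop)]
    exact lintegral_congr fun s => by congr 4; simp [add_sub_right_comm]
  rw [htilt, lintegral_setLIntegral_Ioi_shear (k := fun q => ENNReal.ofReal (h q)) (by fun_prop)]
  have hint := (integrable_smul_snd_sub_sub_smul hh hh' h_nonneg p w).restrict
    (s := Set.Ioi (0 : ℝ) ×ˢ Set.univ)
  refine lintegral_le_lintegral_mul_exp h_nonneg hh.restrict ?_ ?_
  · simpa only [real_inner_smul_right] using hint.const_inner (𝕜 := ℝ) z
  · have := integral_inner (𝕜 := ℝ) hint z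
    rw [hbary, inner_zero_right] at this
    simpa only [real_inner_smul_right] using this

lemma FunctionalSantalo.setLIntegral_Ioi_mul_le (hF : FunctionalSantalo F) {h : ℝ × F → ℝ}
    (hm : Measurable h) (h_nonneg : ∀ q, 0 ≤ h q) (hh : Integrable h)
    (hh' : Integrable fun q => ‖q‖ * h q) (p w : F)
    (hbary : ∫ q in Set.Ioi (0 : ℝ) ×ˢ Set.univ, h q • (q.2 - p - q.1 • w) = 0)
    {g : ℝ × F → ℝ≥0∞} (hg : Measurable g)
    (hfg : ∀ s x t y, ENNReal.ofReal (h (s, p + x)) * g (t, y) ≤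
      ENNReal.ofReal (exp (-(s * t + ⟪x, y⟫)))) :
    (∫⁻ q in Set.Ioi (0 : ℝ) ×ˢ Set.univ, ENNReal.ofReal (h q)) *
      ∫⁻ y, ∫⁻ t in Set.Ioi (-⟪w, y⟫), g (t, y) ≤
        ENNReal.ofReal (π / 2 * (2 * π) ^ Module.finrank ℝ F) := by
  rw [← lintegral_setLIntegral_Ioi_shear (by fun_prop) p w]
  simp only [← setLIntegral_Ioi_zero_comp_sub]
  refine hF.lintegral_mul_le (by positivity) ?_ ?_ (fun x y => ?_)
    (lintegral_shear_le_lintegral_shear_mul_exp hm h_nonneg hh hh' p w hbary)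
  · exact Measurable.lintegral_prod_right' (ν := volume.restrict (Set.Ioi (0 : ℝ)))
      (f := fun q : F × ℝ => ENNReal.ofReal (h (q.2, p + q.1 + q.2 • w))) (by fun_prop)
  · exact Measurable.lintegral_prod_right' (ν := volume.restrict (Set.Ioi (0 : ℝ)))
      (f := fun q : F × ℝ => g (q.2 - ⟪w, q.1⟫, q.1)) (by fun_prop)
  · rw [mul_comm (π / 2)]
    refine setLIntegral_Ioi_mul_le_of_mul_le_exp (by fun_prop) (by fun_prop) (exp_pos _).le
      fun s _ t _ => ?_
    have hpair := hfg s (x + s • w) (t - ⟪w, y⟫) y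
    rw [← add_assoc] at hpair
    refine hpair.trans (le_of_eq ?_)
    rw [← Real.exp_add, inner_add_left, real_inner_smul_left]
    ring_nf

end FunctionalSantalo

section SantaloPoint

variable {F : Type*} [NormedAddCommGroup F] [InnerProductSpace ℝ F] [FiniteDimensional ℝ F]
  [MeasurableSpace F] [BorelSpace F]

lemma setIntegral_mul_abs_fst_pos {h : ℝ × F → ℝ} (h_nonneg : ∀ q, 0 ≤ h q) (hh : Integrable h)
    (hh_fst : Integrable fun q => h q * q.1) {s : Set (ℝ × F)} (hs : ∀ q ∈ s, q.1 ≠ 0)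
    (hpos : 0 < ∫ q in s, h q) : 0 < ∫ q in s, h q * |q.1| := by
  have hint : Integrable fun q => h q * |q.1| :=
    hh_fst.norm.congr (Eventually.of_forall fun q => by simp [abs_of_nonneg (h_nonneg q)])
  rw [setIntegral_pos_iff_support_of_nonneg_ae (Eventually.of_forall h_nonneg)
    hh.integrableOn] at hpos
  rw [setIntegral_pos_iff_support_of_nonneg_ae
    (Eventually.of_forall fun q => mul_nonneg (h_nonneg q) (abs_nonneg _)) hint.integrableOn]
  exact hpos.trans_le (measure_mono fun q hq =>
    ⟨mul_ne_zero hq.1 (abs_ne_zero.2 (hs q hq.2)), hq.2⟩)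

lemma integrable_mul_fst {h : ℝ × F → ℝ} (h_nonneg : ∀ q, 0 ≤ h q) (hh : Integrable h)
    (hh' : Integrable fun q => ‖q‖ * h q) : Integrable fun q => h q * q.1 := by
  refine hh'.mono' (hh.aestronglyMeasurable.mul (by fun_prop)) (Eventually.of_forall fun q => ?_)
  rw [norm_mul, Real.norm_of_nonneg (h_nonneg q), mul_comm]
  exact mul_le_mul_of_nonneg_right (norm_fst_le q) (h_nonneg q)

lemma setIntegral_smul_snd_sub_sub_smul {h : ℝ × F → ℝ} (h_nonneg : ∀ q, 0 ≤ h q)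
    (hh : Integrable h) (hh' : Integrable fun q => ‖q‖ * h q) (p w : F) (s : Set (ℝ × F)) :
    ∫ q in s, h q • (q.2 - p - q.1 • w) =
      (∫ q in s, h q • q.2) - (∫ q in s, h q) • p - (∫ q in s, h q * q.1) • w := by
  have hsnd : Integrable fun q : ℝ × F => h q • q.2 := by
    simpa using integrable_smul_snd_sub_sub_smul hh hh' h_nonneg 0 0
  have hp : Integrable fun q => h q • p := hh.smul_const p
  have hw : Integrable fun q : ℝ × F => (h q * q.1) • w :=
    (integrable_mul_fst h_nonneg hh hh').smul_const w
  simp only [smul_sub, smul_smul]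
  rw [integral_sub (f := fun q : ℝ × F => h q • q.2 - h q • p) (hsnd.sub hp).integrableOn
      hw.integrableOn, integral_sub hsnd.integrableOn hp.integrableOn, integral_smul_const,
    integral_smul_const]

lemma exists_barycenter_halves_eq_zero {h : ℝ × F → ℝ} (h_nonneg : ∀ q, 0 ≤ h q)
    (hh : Integrable h) (hh' : Integrable fun q => ‖q‖ * h q) (hpos : 0 < ∫ q, h q)
    (hhalf : ∫ q in Set.Ioi (0 : ℝ) ×ˢ Set.univ, h q = (∫ q, h q) / 2) :
    ∃ p w : F, ∫ q in Set.Ioi (0 : ℝ) ×ˢ Set.univ, h q • (q.2 - p - q.1 • w) = 0 ∧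
      ∫ q in Set.Iio (0 : ℝ) ×ˢ Set.univ, h q • (q.2 - p - q.1 • w) = 0 := by
  set I := ∫ q, h q
  set P : Set (ℝ × F) := Set.Ioi (0 : ℝ) ×ˢ Set.univ
  set N : Set (ℝ × F) := Set.Iio (0 : ℝ) ×ˢ Set.univ
  have hhalf_neg : ∫ q in N, h q = I / 2 := by
    linarith [setIntegral_Ioi_prod_add_Iio_prod hh]
  have hfst := integrable_mul_fst h_nonneg hh hh'
  set S₁ := ∫ q in P, h q * q.1
  set S₂ := ∫ q in N, h q * q.1
  set X₁ := ∫ q in P, h q • q.2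
  set X₂ := ∫ q in N, h q • q.2
  have hS₁ : 0 < S₁ := by
    have habs : S₁ = ∫ q in P, h q * |q.1| :=
      setIntegral_congr_fun (measurableSet_Ioi.prod .univ) fun q hq => by
        simp only [abs_of_pos (show 0 < q.1 from hq.1)]
    rw [habs]
    exact setIntegral_mul_abs_fst_pos h_nonneg hh hfst (fun q hq => ne_of_gt hq.1) (by linarith)
  have hS₂ : S₂ < 0 := by
    have habs : S₂ = ∫ q in N, -(h q * |q.1|) :=
      setIntegral_congr_fun (measurableSet_Iio.prod .univ) fun q hq => by
        simp only [abs_of_neg (show q.1 < 0 from hq.1), mul_neg, neg_neg]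
    rw [habs, integral_neg, neg_lt_zero]
    exact setIntegral_mul_abs_fst_pos h_nonneg hh hfst (fun q hq => ne_of_lt hq.1) (by linarith)
  -- The two conditions are the linear equations `(I / 2) • p + Sᵢ • w = Xᵢ`.
  set w := (S₁ - S₂)⁻¹ • (X₁ - X₂)
  have hw_eq : (S₁ - S₂) • w = X₁ - X₂ := smul_inv_smul₀ (by linarith) _
  refine ⟨(I / 2)⁻¹ • (X₁ - S₁ • w), w, ?_, ?_⟩
  · rw [setIntegral_smul_snd_sub_sub_smul h_nonneg hh hh', hhalf, smul_inv_smul₀ (by linarith)]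
    abel
  · rw [setIntegral_smul_snd_sub_sub_smul h_nonneg hh hh', hhalf_neg,
      smul_inv_smul₀ (by linarith)]
    rw [sub_smul] at hw_eq
    rw [show X₂ - (X₁ - S₁ • w) - S₂ • w = S₁ • w - S₂ • w - (X₁ - X₂) by abel, hw_eq, sub_self]

lemma FunctionalSantalo.setLIntegral_Iio_mul_le (hF : FunctionalSantalo F) {h : ℝ × F → ℝ}
    (hm : Measurable h) (h_nonneg : ∀ q, 0 ≤ h q) (hh : Integrable h)
    (hh' : Integrable fun q => ‖q‖ * h q) (p w : F)
    (hbary : ∫ q in Set.Iio (0 : ℝ) ×ˢ Set.univ, h q • (q.2 - p - q.1 • w) = 0)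
    {g : ℝ × F → ℝ≥0∞} (hg : Measurable g)
    (hfg : ∀ s x t y, ENNReal.ofReal (h (s, p + x)) * g (t, y) ≤
      ENNReal.ofReal (exp (-(s * t + ⟪x, y⟫)))) :
    (∫⁻ q in Set.Iio (0 : ℝ) ×ˢ Set.univ, ENNReal.ofReal (h q)) *
      ∫⁻ y, ∫⁻ t in Set.Iio (-⟪w, y⟫), g (t, y) ≤
        ENNReal.ofReal (π / 2 * (2 * π) ^ Module.finrank ℝ F) := by
  have hpre : (fun q : ℝ × F => (-q.1, q.2)) ⁻¹' (Set.Iio 0 ×ˢ Set.univ) =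
      Set.Ioi 0 ×ˢ Set.univ := by ext q; simp
  have hmass : ∫⁻ q in Set.Ioi (0 : ℝ) ×ˢ Set.univ, ENNReal.ofReal (h (-q.1, q.2)) =
      ∫⁻ q in Set.Iio (0 : ℝ) ×ˢ Set.univ, ENNReal.ofReal (h q) := by
    rw [← hpre]
    exact measurePreserving_neg_fst.setLIntegral_comp_preimage (measurableSet_Iio.prod .univ)
      (f := fun q => ENNReal.ofReal (h q)) (by fun_prop)
  have hdual : ∀ y, ∫⁻ t in Set.Ioi (-⟪-w, y⟫), g (-t, y) =
      ∫⁻ t in Set.Iio (-⟪w, y⟫), g (t, y) := by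
    intro y
    rw [← (Measure.measurePreserving_neg (volume : Measure ℝ)).setLIntegral_comp_preimage
      measurableSet_Iio (f := fun t => g (t, y)) (by fun_prop)]
    congr 2
    ext t; simp
  have hbary' : ∫ q in Set.Ioi (0 : ℝ) ×ˢ Set.univ,
      h (-q.1, q.2) • (q.2 - p - q.1 • -w) = 0 := by
    have hflip := measurePreserving_neg_fst.setIntegral_preimage_emb measurableEmbedding_neg_fst
      (fun q : ℝ × F => h q • (q.2 - p - q.1 • w)) (Set.Iio 0 ×ˢ Set.univ)
    rw [hpre, hbary] at hflip
    simpa using hflip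
  simp only [← hmass, ← hdual]
  refine hF.setLIntegral_Ioi_mul_le (by fun_prop) (fun q => h_nonneg _)
    (measurePreserving_neg_fst.integrable_comp_of_integrable hh) ?_ p (-w) hbary'
    (g := fun q => g (-q.1, q.2)) (by fun_prop) fun s x t y => by simpa using hfg (-s) x (-t) y
  refine (measurePreserving_neg_fst.integrable_comp_of_integrable hh').congr
    (Eventually.of_forall fun q => ?_)
  simp [Prod.norm_def]

lemma FunctionalSantalo.exists_santalo_point_of_median (hF : FunctionalSantalo F)
    {h : ℝ × F → ℝ} (hm : Measurable h) (h_nonneg : ∀ q, 0 ≤ h q) (hh : Integrable h)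
    (hh' : Integrable fun q => ‖q‖ * h q) (hpos : 0 < ∫ q, h q)
    (hhalf : ∫ q in Set.Ioi (0 : ℝ) ×ˢ Set.univ, h q = (∫ q, h q) / 2) :
    ∃ p, ∀ g : ℝ × F → ℝ≥0∞, Measurable g →
      (∀ s x t y, ENNReal.ofReal (h (s, p + x)) * g (t, y) ≤
        ENNReal.ofReal (exp (-(s * t + ⟪x, y⟫)))) →
      (∫⁻ q, ENNReal.ofReal (h q)) * ∫⁻ q, g q ≤
        ENNReal.ofReal ((2 * π) ^ (Module.finrank ℝ F + 1)) := by
  obtain ⟨p, w, hIoi, hIio⟩ := exists_barycenter_halves_eq_zero h_nonneg hh hh' hpos hhalf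
  refine ⟨p, fun g hg hfg => ?_⟩
  have hIoi_le := hF.setLIntegral_Ioi_mul_le hm h_nonneg hh hh' p w hIoi hg hfg
  have hIio_le := hF.setLIntegral_Iio_mul_le hm h_nonneg hh hh' p w hIio hg hfg
  have hhalf_neg : ∫ q in Set.Iio (0 : ℝ) ×ˢ Set.univ, h q = (∫ q, h q) / 2 := by
    linarith [setIntegral_Ioi_prod_add_Iio_prod hh]
  rw [← ofReal_integral_eq_lintegral_ofReal hh.integrableOn (Eventually.of_forall h_nonneg)]
    at hIoi_le hIio_le
  rw [hhalf] at hIoi_le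
  rw [hhalf_neg] at hIio_le
  rw [← ofReal_integral_eq_lintegral_ofReal hh (Eventually.of_forall h_nonneg),
    lintegral_eq_lintegral_Ioi_add_Iio hg w, ← mul_div_cancel₀ (∫ q, h q) (two_ne_zero' ℝ),
    ENNReal.ofReal_mul zero_le_two, mul_assoc, mul_add]
  calc _ ≤ ENNReal.ofReal 2 * (ENNReal.ofReal (π / 2 * (2 * π) ^ Module.finrank ℝ F) +
          ENNReal.ofReal (π / 2 * (2 * π) ^ Module.finrank ℝ F)) := by gcongr
    _ = _ := by
      rw [← ENNReal.ofReal_add (by positivity) (by positivity), ← ENNReal.ofReal_mul zero_le_two]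
      congr 1
      ring

lemma FunctionalSantalo.exists_santalo_point (hF : FunctionalSantalo F) {f : ℝ × F → ℝ}
    (hm : Measurable f) (f_nonneg : ∀ q, 0 ≤ f q) (hf : Integrable f)
    (hf' : Integrable fun q => ‖q‖ * f q) :
    ∃ c p, ∀ g : ℝ × F → ℝ≥0∞, Measurable g →
      (∀ s x t y, ENNReal.ofReal (f (c + s, p + x)) * g (t, y) ≤
        ENNReal.ofReal (exp (-(s * t + ⟪x, y⟫)))) →
      (∫⁻ q, ENNReal.ofReal (f q)) * ∫⁻ q, g q ≤
        ENNReal.ofReal ((2 * π) ^ (Module.finrank ℝ F + 1)) := by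
  have : (volume : Measure (ℝ × F)).IsAddHaarMeasure := Measure.prod.instIsAddHaarMeasure _ _
  rcases (integral_nonneg (μ := volume) (f := f) f_nonneg).eq_or_lt with hzero | hpos
  · refine ⟨0, 0, fun g _ _ => ?_⟩
    rw [← ofReal_integral_eq_lintegral_ofReal hf (Eventually.of_forall f_nonneg), ← hzero]
    simp
  obtain ⟨c, hc⟩ := exists_setIntegral_Ioi_prod_eq_half hf hpos
  set v : ℝ × F := (c, 0) with hv
  have hshift : ∫ q, f (q + v) = ∫ q, f q := integral_add_right_eq_self f v
  have hf_shift : Integrable fun q => f (q + v) := hf.comp_add_right v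
  have hf_shift' : Integrable fun q => ‖q‖ * f (q + v) := by
    refine ((hf'.comp_add_right v).add (hf_shift.const_mul ‖v‖)).mono'
      (Measurable.aestronglyMeasurable (by fun_prop)) (Eventually.of_forall fun q => ?_)
    have hnorm : ‖q‖ ≤ ‖q + v‖ + ‖v‖ := by simpa using norm_sub_le (q + v) v
    rw [Real.norm_of_nonneg (mul_nonneg (norm_nonneg _) (f_nonneg _))]
    simp only [Pi.add_apply]
    nlinarith [f_nonneg (q + v)]
  have hhalf : ∫ q in Set.Ioi (0 : ℝ) ×ˢ Set.univ, f (q + v) = (∫ q, f (q + v)) / 2 := by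
    rw [hshift, ← hc, ← (measurePreserving_add_right volume v).setIntegral_preimage_emb
      (measurableEmbedding_addRight v) f (Set.Ioi c ×ˢ Set.univ)]
    congr 2
    ext q; simp [hv]
  obtain ⟨p, hp⟩ := hF.exists_santalo_point_of_median (h := fun q => f (q + v)) (by fun_prop)
    (fun q => f_nonneg _) hf_shift hf_shift' (by rwa [hshift]) hhalf
  refine ⟨c, p, fun g hg hfg => ?_⟩
  rw [← lintegral_add_right_eq_self (fun q => ENNReal.ofReal (f q)) v]
  exact hp g hg fun s x t y => by simpa [hv, add_comm] using hfg s x t y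

end SantaloPoint

section Truncation

variable {X : Type*} [NormedAddCommGroup X]

/-- The bounded, compactly supported truncation of `g`, cut off at the value `n` and outside the
ball of radius `n`. -/
def truncation (g : X → ℝ≥0∞) (n : ℕ) : X → ℝ :=
  (Metric.closedBall 0 n).indicator fun x => (min (g x) n).toReal

lemma ofReal_truncation (g : X → ℝ≥0∞) (n : ℕ) (x : X) :
    ENNReal.ofReal (truncation g n x) =
      (Metric.closedBall 0 n).indicator (fun x => min (g x) n) x := by
  have hfin : min (g x) n ≠ ∞ := (min_le_right _ _).trans_lt (ENNReal.natCast_lt_top n) |>.ne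
  by_cases hx : x ∈ Metric.closedBall 0 (n : ℝ) <;>
    simp only [truncation, Set.indicator, hx, if_true, if_false, ENNReal.ofReal_toReal hfin,
      ENNReal.ofReal_zero]

lemma truncation_nonneg (g : X → ℝ≥0∞) (n : ℕ) (x : X) : 0 ≤ truncation g n x :=
  Set.indicator_nonneg (fun _ _ => ENNReal.toReal_nonneg) x

lemma truncation_le (g : X → ℝ≥0∞) (n : ℕ) (x : X) : truncation g n x ≤ n :=
  Set.indicator_le' (fun _ _ => ENNReal.toReal_le_of_le_ofReal n.cast_nonneg
    (by simp)) (fun _ _ => n.cast_nonneg) x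

lemma ofReal_truncation_le (g : X → ℝ≥0∞) (n : ℕ) (x : X) :
    ENNReal.ofReal (truncation g n x) ≤ g x := by
  rw [ofReal_truncation]
  exact (Set.indicator_le_self _ _ x).trans (min_le_left _ _)

lemma monotone_ofReal_truncation (g : X → ℝ≥0∞) :
    Monotone fun (n : ℕ) x => ENNReal.ofReal (truncation g n x) := by
  intro m n hmn x
  have hmn' : (m : ℝ) ≤ n := by exact_mod_cast hmn
  simp only [ofReal_truncation]
  exact (Set.indicator_le_indicator_of_subset (Metric.closedBall_subset_closedBall hmn')
    (fun _ => zero_le) x).trans (Set.indicator_le_indicator (min_le_min le_rfl (by gcongr)))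

lemma iSup_ofReal_truncation (g : X → ℝ≥0∞) (x : X) :
    ⨆ n, ENNReal.ofReal (truncation g n x) = g x := by
  refine le_antisymm (iSup_le fun n => ofReal_truncation_le g n x)
    (le_of_forall_lt fun a ha => ?_)
  obtain ⟨k, hk⟩ := ENNReal.exists_nat_gt (ne_top_of_lt ha)
  obtain ⟨l, hl⟩ := exists_nat_ge ‖x‖
  have hmem : x ∈ Metric.closedBall 0 ((max k l : ℕ) : ℝ) := by
    simpa using Or.inr hl
  refine lt_iSup_iff.2 ⟨max k l, ?_⟩
  rw [ofReal_truncation, Set.indicator_of_mem hmem]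
  exact lt_min ha (hk.trans_le (by exact_mod_cast le_max_left k l))

variable [MeasurableSpace X] [BorelSpace X] {g : X → ℝ≥0∞}

lemma measurable_truncation (hg : Measurable g) (n : ℕ) : Measurable (truncation g n) :=
  (hg.min measurable_const).ennreal_toReal.indicator measurableSet_closedBall

variable [ProperSpace X] {μ : Measure X} [IsFiniteMeasureOnCompacts μ]

lemma integrable_norm_pow_mul_truncation (hg : Measurable g) (n k : ℕ) :
    Integrable (fun x => ‖x‖ ^ k * truncation g n x) μ := by
  have hbound : Integrable ((Metric.closedBall (0 : X) n).indicator fun _ => (n : ℝ) ^ k * n) μ :=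
    (integrable_indicator_iff measurableSet_closedBall).2
      (integrableOn_const (isCompact_closedBall _ _).measure_lt_top.ne)
  have hm := measurable_truncation hg n
  refine hbound.mono' (by fun_prop) (Eventually.of_forall fun x => ?_)
  rw [Real.norm_of_nonneg (mul_nonneg (by positivity) (truncation_nonneg g n x))]
  by_cases hx : x ∈ Metric.closedBall 0 (n : ℝ)
  · rw [Set.indicator_of_mem hx]
    have hx' : ‖x‖ ≤ n := by simpa using hx
    gcongr
    exacts [truncation_nonneg g n x, truncation_le g n x]
  · rw [truncation, Set.indicator_of_notMem hx, Set.indicator_of_notMem hx, mul_zero]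

end Truncation

section SantaloInduction

variable {E F : Type*} [NormedAddCommGroup E] [InnerProductSpace ℝ E] [FiniteDimensional ℝ E]
  [MeasurableSpace E] [BorelSpace E] [NormedAddCommGroup F] [InnerProductSpace ℝ F]
  [FiniteDimensional ℝ F] [MeasurableSpace F] [BorelSpace F]

lemma FunctionalSantalo.congr (Φ : E ≃ₗᵢ[ℝ] F) (hE : FunctionalSantalo E) :
    FunctionalSantalo F := by
  intro f g hf hg hfg hmin
  have hcomp : ∀ {u : F → ℝ≥0∞}, Measurable u → ∫⁻ x, u (Φ x) = ∫⁻ y, u y := fun hu =>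
    Φ.measurePreserving.lintegral_comp hu
  have hΦ := Φ.continuous.measurable
  rw [← hcomp hf, ← hcomp hg, ← Φ.toLinearEquiv.finrank_eq]
  refine hE _ _ (hf.comp hΦ) (hg.comp hΦ) (fun x y => by simpa using hfg (Φ x) (Φ y)) fun z => ?_
  have hz := hmin (Φ z)
  rw [← hcomp hf, ← hcomp (by fun_prop)] at hz
  simpa only [Function.comp_apply, Φ.inner_map_map] using hz

lemma functionalSantalo_zero : FunctionalSantalo (EuclideanSpace ℝ (Fin 0)) := by
  intro f g _ _ hfg _
  rw [volume_euclideanSpace_eq_dirac, lintegral_dirac, lintegral_dirac]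
  simpa using hfg 0 0

lemma FunctionalSantalo.lintegral_mul_lintegral_truncation_le (hF : FunctionalSantalo F)
    {f g : AxialSum F → ℝ≥0∞} (hf : Measurable f) (hg : Measurable g)
    (hfg : ∀ x y, f x * g y ≤ ENNReal.ofReal (exp (-⟪x, y⟫)))
    (hmin : ∀ z, ∫⁻ x, f x ≤ ∫⁻ x, f x * ENNReal.ofReal (exp ⟪z, x⟫)) (n : ℕ) :
    (∫⁻ x, f x) * ∫⁻ q, ENNReal.ofReal (truncation (fun q : ℝ × F => g (WithLp.toLp 2 q)) n q) ≤
      ENNReal.ofReal ((2 * π) ^ Module.finrank ℝ (AxialSum F)) := by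
  have : (volume : Measure (ℝ × F)).IsAddHaarMeasure := Measure.prod.instIsAddHaarMeasure _ _
  have htoLp := WithLp.volume_preserving_toLp ℝ F
  set G : ℝ × F → ℝ := truncation (fun q : ℝ × F => g (WithLp.toLp 2 q)) n
  have hgm : Measurable fun q : ℝ × F => g (WithLp.toLp 2 q) := hg.comp htoLp.measurable
  have hGm : Measurable G := measurable_truncation hgm n
  obtain ⟨c, p, hcp⟩ := hF.exists_santalo_point hGm (truncation_nonneg _ n)
    (by simpa using integrable_norm_pow_mul_truncation (μ := volume) hgm n 0)
    (by simpa using integrable_norm_pow_mul_truncation (μ := volume) hgm n 1)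
  -- Translating `G` by `v` multiplies `f` by `exp ⟪v, ·⟫`, which does not decrease `∫⁻ f`.
  set v : AxialSum F := WithLp.toLp 2 (c, p)
  have hpair : ∀ s x t y, ENNReal.ofReal (G (c + s, p + x)) *
      (f (WithLp.toLp 2 (t, y)) * ENNReal.ofReal (exp ⟪v, WithLp.toLp 2 (t, y)⟫)) ≤
        ENNReal.ofReal (exp (-(s * t + ⟪x, y⟫))) := by
    intro s x t y
    set z : AxialSum F := WithLp.toLp 2 (t, y)
    calc _ ≤ g (WithLp.toLp 2 (c + s, p + x)) * (f z * ENNReal.ofReal (exp ⟪v, z⟫)) := by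
          gcongr; exact ofReal_truncation_le _ _ _
      _ = f z * g (WithLp.toLp 2 (c + s, p + x)) * ENNReal.ofReal (exp ⟪v, z⟫) := by ring
      _ ≤ ENNReal.ofReal (exp (-⟪z, WithLp.toLp 2 (c + s, p + x)⟫)) *
            ENNReal.ofReal (exp ⟪v, z⟫) := by gcongr; exact hfg _ _
      _ = _ := by
        rw [← ENNReal.ofReal_mul (exp_pos _).le, ← Real.exp_add, inner_axialSum, inner_axialSum,
          inner_add_right, real_inner_comm y, real_inner_comm y]
        ring_nf
  have hbound := hcp (fun q => f (WithLp.toLp 2 q) *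
    ENNReal.ofReal (exp ⟪v, WithLp.toLp 2 q⟫)) (by fun_prop) hpair
  rw [mul_comm, ← finrank_axialSum] at hbound
  refine le_trans ?_ hbound
  gcongr
  rw [htoLp.lintegral_comp (f := fun x => f x * ENNReal.ofReal (exp ⟪v, x⟫)) (by fun_prop)]
  exact hmin v

lemma FunctionalSantalo.axialSum (hF : FunctionalSantalo F) : FunctionalSantalo (AxialSum F) := by
  intro f g hf hg hfg hmin
  have hgm : Measurable fun q : ℝ × F => g (WithLp.toLp 2 q) :=
    hg.comp (WithLp.volume_preserving_toLp ℝ F).measurable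
  rw [← (WithLp.volume_preserving_toLp ℝ F).lintegral_comp hg]
  rw [lintegral_congr fun q => (iSup_ofReal_truncation (fun q : ℝ × F => g (WithLp.toLp 2 q))
    q).symm, lintegral_iSup (fun n => (measurable_truncation hgm n).ennreal_ofReal)
    (monotone_ofReal_truncation _), ENNReal.mul_iSup]
  exact iSup_le (hF.lintegral_mul_lintegral_truncation_le hf hg hfg hmin)

theorem functionalSantalo (E : Type*) [NormedAddCommGroup E] [InnerProductSpace ℝ E]
    [FiniteDimensional ℝ E] [MeasurableSpace E] [BorelSpace E] : FunctionalSantalo E := by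
  have hstd : ∀ n : ℕ, FunctionalSantalo (EuclideanSpace ℝ (Fin n)) := by
    intro n
    induction n with
    | zero => exact functionalSantalo_zero
    | succ n ih =>
      obtain ⟨Φ⟩ := exists_linearIsometryEquiv_of_finrank_eq
        (E := AxialSum (EuclideanSpace ℝ (Fin n))) (F := EuclideanSpace ℝ (Fin (n + 1)))
        (by simp [finrank_axialSum])
      exact ih.axialSum.congr Φ
  exact (hstd _).congr (stdOrthonormalBasis ℝ E).repr.symm

end SantaloInduction

section PolarCoordinates

variable {E F : Type*} [NormedAddCommGroup E] [InnerProductSpace ℝ E] [FiniteDimensional ℝ E]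
  [MeasurableSpace E] [BorelSpace E]
  [NormedAddCommGroup F] [InnerProductSpace ℝ F] [FiniteDimensional ℝ F]
  [MeasurableSpace F] [BorelSpace F]

variable (E) in
/-- The total surface area of the unit sphere of `E`. -/
def sphereMass : ℝ≥0∞ := (volume : Measure E).toSphere Set.univ

variable (E) in
/-- The uniform probability measure on the unit sphere of `E`, as a measure on `E`. -/
def sphereProb : Measure E :=
  (sphereMass E)⁻¹ • (volume : Measure E).toSphere.map Subtype.val

lemma sphereMass_ne_zero [Nontrivial E] : sphereMass E ≠ 0 := by
  rw [sphereMass, Measure.toSphere_apply_univ]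
  refine mul_ne_zero ?_ (Metric.measure_ball_pos _ _ one_pos).ne'
  exact_mod_cast Module.finrank_pos.ne'

lemma sphereMass_ne_top : sphereMass E ≠ ∞ := measure_ne_top _ _

instance [Nontrivial E] : IsProbabilityMeasure (sphereProb E) := ⟨by
  rw [sphereProb, Measure.smul_apply, Measure.map_apply measurable_subtype_coe .univ]
  exact ENNReal.inv_mul_cancel sphereMass_ne_zero sphereMass_ne_top⟩

lemma ae_norm_eq_one_sphereProb : ∀ᵐ x ∂sphereProb E, ‖x‖ = 1 := by
  refine Measure.ae_smul_measure ?_ _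
  rw [ae_map_iff measurable_subtype_coe.aemeasurable
    (measurableSet_eq_fun (by fun_prop) (by fun_prop))]
  exact Eventually.of_forall fun x => by simp

lemma map_toSphere_map_subtypeVal (Φ : E ≃ₗᵢ[ℝ] F) :
    ((volume : Measure E).toSphere.map Subtype.val).map Φ =
      (volume : Measure F).toSphere.map Subtype.val := by
  have hΦ : Measurable Φ := Φ.continuous.measurable
  ext s hs
  rw [Measure.map_apply hΦ hs, Measure.map_apply measurable_subtype_coe (hΦ hs),
    Measure.map_apply measurable_subtype_coe hs,
    Measure.toSphere_apply' _ (measurable_subtype_coe (hΦ hs)),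
    Measure.toSphere_apply' _ (measurable_subtype_coe hs), Φ.toLinearEquiv.finrank_eq,
    ← Φ.measurePreserving.measure_preimage_emb Φ.toHomeomorph.measurableEmbedding]
  congr 2
  ext x
  simp only [Set.mem_smul, Set.mem_image, Set.mem_preimage, Subtype.exists,
    mem_sphere_zero_iff_norm]
  constructor
  · rintro ⟨r, hr, y, ⟨z, hz, hzs, rfl⟩, rfl⟩
    exact ⟨r, hr, Φ z, ⟨Φ z, by simpa using hz, hzs, rfl⟩, by simp⟩
  · rintro ⟨r, hr, y, ⟨z, hz, hzs, rfl⟩, h⟩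
    refine ⟨r, hr, Φ.symm z, ⟨Φ.symm z, by simpa using hz, by simpa using hzs, rfl⟩, ?_⟩
    rw [← map_smul, h, Φ.symm_apply_apply]

lemma map_sphereProb (Φ : E ≃ₗᵢ[ℝ] F) : (sphereProb E).map Φ = sphereProb F := by
  have hmass : sphereMass E = sphereMass F := by
    have h := congrArg (fun μ => μ Set.univ) (map_toSphere_map_subtypeVal Φ)
    simpa [sphereMass, Measure.map_apply Φ.continuous.measurable .univ,
      Measure.map_apply measurable_subtype_coe .univ] using h
  rw [sphereProb, Measure.map_smul, map_toSphere_map_subtypeVal, hmass, sphereProb]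

lemma measureReal_sphereProb_neg (A : Set E) :
    (sphereProb E).real (-A) = (sphereProb E).real A := by
  conv_rhs => rw [Measure.real, ← map_sphereProb (LinearIsometryEquiv.neg ℝ)]
  exact congrArg ENNReal.toReal
    ((LinearIsometryEquiv.neg ℝ).toHomeomorph.toMeasurableEquiv.map_apply A).symm

lemma measureReal_sphereProb_inter_sphere (A : Set E) :
    (sphereProb E).real (A ∩ Metric.sphere 0 1) = (sphereProb E).real A := by
  refine measureReal_congr ?_
  filter_upwards [ae_norm_eq_one_sphereProb] with x hx
  exact propext (and_iff_left (mem_sphere_zero_iff_norm.2 hx))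

lemma lintegral_eq_lintegral_toSphere [Nontrivial E] {H : E → ℝ≥0∞} (hH : Measurable H) :
    ∫⁻ x, H x = ∫⁻ u, (∫⁻ r in Set.Ioi (0 : ℝ),
      H (r • (u : E)) * ENNReal.ofReal (r ^ (Module.finrank ℝ E - 1)))
        ∂(volume : Measure E).toSphere := by
  have hH_polar : ∀ x : ({0}ᶜ : Set E),
      H ((homeomorphUnitSphereProd _ x).2.1 • ((homeomorphUnitSphereProd _ x).1 : E)) = H x := by
    intro x
    rw [homeomorphUnitSphereProd_apply_fst_coe, homeomorphUnitSphereProd_apply_snd_coe,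
      smul_inv_smul₀ (norm_ne_zero_iff.2 x.2)]
  have hpolar := (volume : Measure E).measurePreserving_homeomorphUnitSphereProd.lintegral_comp
    (f := fun p => H (p.2.1 • p.1.1)) (by fun_prop)
  simp only [hH_polar] at hpolar
  have hcompl : ∫⁻ x, H x = ∫⁻ x : ({0}ᶜ : Set E), H x ∂volume.comap Subtype.val := by
    rw [lintegral_subtype_comap (measurableSet_singleton _).compl, restrict_compl_singleton]
  rw [hcompl, hpolar, lintegral_prod _ (Measurable.aemeasurable (by fun_prop))]
  refine lintegral_congr fun u => ?_
  rw [Measure.volumeIoiPow, lintegral_withDensity_eq_lintegral_mul _ (by fun_prop) (by fun_prop),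
    ← lintegral_subtype_comap measurableSet_Ioi]
  refine lintegral_congr fun r => ?_
  simp [mul_comm]

theorem lintegral_eq_polar [Nontrivial E] {H : E → ℝ≥0∞} (hH : Measurable H) :
    ∫⁻ x, H x = sphereMass E * ∫⁻ u, (∫⁻ r in Set.Ioi (0 : ℝ),
      H (r • u) * ENNReal.ofReal (r ^ (Module.finrank ℝ E - 1))) ∂sphereProb E := by
  have hradial : Measurable fun u : E => ∫⁻ r in Set.Ioi (0 : ℝ),
      H (r • u) * ENNReal.ofReal (r ^ (Module.finrank ℝ E - 1)) :=
    Measurable.lintegral_prod_right' (ν := volume.restrict (Set.Ioi (0 : ℝ)))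
      (f := fun q : E × ℝ => H (q.2 • q.1) * ENNReal.ofReal (q.2 ^ (Module.finrank ℝ E - 1)))
      (by fun_prop)
  rw [sphereProb, lintegral_smul_measure, smul_eq_mul, ← mul_assoc,
    ENNReal.mul_inv_cancel sphereMass_ne_zero sphereMass_ne_top, one_mul,
    lintegral_map hradial measurable_subtype_coe, lintegral_eq_lintegral_toSphere hH]

theorem lintegral_comp_normalize_mul [Nontrivial E] {κ : E → ℝ≥0∞} (hκ : Measurable κ)
    {w : ℝ → ℝ≥0∞} (hw : Measurable w) :
    ∫⁻ x, κ (‖x‖⁻¹ • x) * w ‖x‖ = sphereMass E * ((∫⁻ u, κ u ∂sphereProb E) *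
      ∫⁻ r in Set.Ioi (0 : ℝ), w r * ENNReal.ofReal (r ^ (Module.finrank ℝ E - 1))) := by
  rw [lintegral_eq_polar (by fun_prop), ← lintegral_mul_const _ hκ]
  congr 1
  refine lintegral_congr_ae (ae_norm_eq_one_sphereProb.mono fun u hu => ?_)
  dsimp only
  rw [← lintegral_const_mul _ (by fun_prop)]
  refine setLIntegral_congr_fun measurableSet_Ioi fun r (hr : 0 < r) => ?_
  have hnorm : ‖r • u‖ = r := by rw [norm_smul, hu, mul_one, Real.norm_of_nonneg hr.le]
  rw [hnorm, inv_smul_smul₀ hr.ne', mul_assoc]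

lemma lintegral_exp_neg_mul_pow (n : ℕ) :
    ∫⁻ r in Set.Ioi (0 : ℝ), ENNReal.ofReal (exp (-r)) * ENNReal.ofReal (r ^ n) =
      ENNReal.ofReal (Nat.factorial n) := by
  have hconv := Real.GammaIntegral_convergent (s := n + 1) (by positivity)
  have hint := Real.Gamma_eq_integral (s := n + 1) (by positivity)
  simp only [add_sub_cancel_right, rpow_natCast, Gamma_nat_eq_factorial] at hconv hint
  rw [hint, ofReal_integral_eq_lintegral_ofReal hconv]
  · exact setLIntegral_congr_fun measurableSet_Ioi fun r _ =>
      (ENNReal.ofReal_mul (exp_pos _).le).symm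
  · filter_upwards [ae_restrict_mem measurableSet_Ioi] with r (hr : 0 < r)
    positivity

lemma measure_ne_zero_of_sphereProb_ne_zero [Nontrivial E] {A : Set E} (hA : MeasurableSet A)
    (hsmul : ∀ x ∈ A, ∀ t : ℝ, 0 ≤ t → t • x ∈ A) (hprob : sphereProb E A ≠ 0) :
    volume A ≠ 0 := by
  intro hvol
  have hpolar := lintegral_comp_normalize_mul (E := E) (measurable_one.indicator hA)
    (w := fun r => ENNReal.ofReal (exp (-r))) (by fun_prop)
  rw [lintegral_indicator_one hA, lintegral_exp_neg_mul_pow] at hpolar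
  have hzero : ∫⁻ x : E, A.indicator 1 (‖x‖⁻¹ • x) * ENNReal.ofReal (exp (-‖x‖)) = 0 := by
    refine (lintegral_congr_ae ?_).trans lintegral_zero
    filter_upwards [compl_mem_ae_iff.2 hvol, compl_mem_ae_iff.2 (measure_singleton 0)]
      with x hxA (hx0 : x ≠ 0)
    rw [Set.indicator_of_notMem, zero_mul]
    exact fun h => hxA (by simpa [smul_smul, hx0] using hsmul _ h ‖x‖ (norm_nonneg x))
  have hfact : ENNReal.ofReal (Nat.factorial (Module.finrank ℝ E - 1)) ≠ 0 :=
    (ENNReal.ofReal_pos.2 (by positivity)).ne'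
  exact mul_ne_zero sphereMass_ne_zero (mul_ne_zero hprob hfact) (hpolar.symm.trans hzero)

end PolarCoordinates

section Slicing

variable {F : Type*} [NormedAddCommGroup F] [InnerProductSpace ℝ F] [FiniteDimensional ℝ F]
  [MeasurableSpace F] [BorelSpace F]

lemma lintegral_halfPlane {k : ℝ → ℝ → ℝ≥0∞} (hk : Measurable (Function.uncurry k)) :
    ∫⁻ s, ∫⁻ r in Set.Ioi (0 : ℝ), k s r =
      ∫⁻ ρ in Set.Ioi (0 : ℝ), ∫⁻ θ in Set.Ioo 0 π,
        ENNReal.ofReal ρ * k (ρ * cos θ) (ρ * sin θ) := by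
  set G : ℝ × ℝ → ℝ≥0∞ := {p : ℝ × ℝ | 0 < p.2}.indicator (Function.uncurry k)
  have hG : Measurable G := hk.indicator (measurableSet_lt (by fun_prop) (by fun_prop))
  have hleft : ∫⁻ s, ∫⁻ r in Set.Ioi (0 : ℝ), k s r = ∫⁻ p, G p := by
    rw [Measure.volume_eq_prod, lintegral_prod _ hG.aemeasurable]
    exact lintegral_congr fun s => (lintegral_indicator measurableSet_Ioi _).symm
  have hangle : ∀ ρ ∈ Set.Ioi (0 : ℝ), ∀ θ, (Set.Ioo (-π) π).indicator
      (fun θ => ENNReal.ofReal ρ * G (ρ * cos θ, ρ * sin θ)) θ =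
        (Set.Ioo 0 π).indicator
          (fun θ => ENNReal.ofReal ρ * k (ρ * cos θ) (ρ * sin θ)) θ := by
    intro ρ (hρ : 0 < ρ) θ
    by_cases hθ : θ ∈ Set.Ioo 0 π
    · rw [Set.indicator_of_mem hθ, Set.indicator_of_mem
        (show θ ∈ Set.Ioo (-π) π from ⟨by linarith [hθ.1, pi_pos], hθ.2⟩)]
      exact congrArg _ (Set.indicator_of_mem (mul_pos hρ (sin_pos_of_mem_Ioo hθ)) _)
    · rw [Set.indicator_of_notMem hθ, Set.indicator_apply_eq_zero]
      intro hθ'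
      have hsin : sin θ ≤ 0 := sin_nonpos_of_nonpos_of_neg_pi_le
        (not_lt.1 fun h => hθ ⟨h, hθ'.2⟩) hθ'.1.le
      rw [show G (ρ * cos θ, ρ * sin θ) = 0 from Set.indicator_of_notMem
        (not_lt.2 (mul_nonpos_of_nonneg_of_nonpos hρ.le hsin)) _, mul_zero]
  have hpolar : Measurable fun p : ℝ × ℝ =>
      ENNReal.ofReal p.1 * G (p.1 * cos p.2, p.1 * sin p.2) := by fun_prop
  rw [hleft, ← lintegral_comp_polarCoord_symm, polarCoord_target, Measure.volume_eq_prod,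
    ← Measure.prod_restrict]
  simp only [polarCoord_symm_apply, smul_eq_mul]
  rw [lintegral_prod _ hpolar.aemeasurable]
  refine setLIntegral_congr_fun measurableSet_Ioi fun ρ hρ => ?_
  dsimp only
  rw [← lintegral_indicator measurableSet_Ioo, ← lintegral_indicator measurableSet_Ioo]
  exact lintegral_congr (hangle ρ hρ)

lemma lintegral_axialSum_eq_polar [Nontrivial F] {H : AxialSum F → ℝ≥0∞} (hH : Measurable H) :
    ∫⁻ x, H x = sphereMass F * ∫⁻ u, (∫⁻ ρ in Set.Ioi (0 : ℝ), ∫⁻ θ in Set.Ioo 0 π,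
      ENNReal.ofReal ρ * (H (WithLp.toLp 2 (ρ * cos θ, (ρ * sin θ) • u)) *
        ENNReal.ofReal ((ρ * sin θ) ^ (Module.finrank ℝ F - 1)))) ∂sphereProb F := by
  have hk : Measurable fun q : (F × ℝ) × ℝ => H (WithLp.toLp 2 (q.1.2, q.2 • q.1.1)) *
      ENNReal.ofReal (q.2 ^ (Module.finrank ℝ F - 1)) := by fun_prop
  have hk_radial : Measurable fun q : F × ℝ => ∫⁻ r in Set.Ioi (0 : ℝ),
      H (WithLp.toLp 2 (q.2, r • q.1)) * ENNReal.ofReal (r ^ (Module.finrank ℝ F - 1)) :=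
    Measurable.lintegral_prod_right' (ν := volume.restrict (Set.Ioi (0 : ℝ))) hk
  rw [← (WithLp.volume_preserving_toLp ℝ F).lintegral_comp hH, Measure.volume_eq_prod,
    lintegral_prod (fun q => H (WithLp.toLp 2 q)) (by fun_prop)]
  simp_rw [fun s : ℝ => lintegral_eq_polar (E := F) (H := fun y => H (WithLp.toLp 2 (s, y)))
    (by fun_prop)]
  rw [lintegral_const_mul _ (Measurable.lintegral_prod_left' (μ := sphereProb F) hk_radial),
    lintegral_lintegral_swap]
  rotate_left
  · exact (hk_radial.comp measurable_swap).aemeasurable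
  congr 1
  exact lintegral_congr fun u => lintegral_halfPlane (by unfold Function.uncurry; fun_prop)

lemma lintegral_halfPlane_comp_normalize_mul_exp [Nontrivial F] {κ : AxialSum F → ℝ≥0∞}
    (hκ : Measurable κ) {u : F} (hu : ‖u‖ = 1) :
    ∫⁻ ρ in Set.Ioi (0 : ℝ), ∫⁻ θ in Set.Ioo 0 π,
      ENNReal.ofReal ρ * (κ (‖(WithLp.toLp 2 (ρ * cos θ, (ρ * sin θ) • u) : AxialSum F)‖⁻¹ •
        WithLp.toLp 2 (ρ * cos θ, (ρ * sin θ) • u)) *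
        ENNReal.ofReal (exp (-‖(WithLp.toLp 2 (ρ * cos θ, (ρ * sin θ) • u) : AxialSum F)‖)) *
        ENNReal.ofReal ((ρ * sin θ) ^ (Module.finrank ℝ F - 1))) =
      ENNReal.ofReal (Nat.factorial (Module.finrank ℝ F)) * ∫⁻ θ in Set.Ioo 0 π,
        κ (WithLp.toLp 2 (cos θ, sin θ • u)) *
          ENNReal.ofReal (sin θ ^ (Module.finrank ℝ F - 1)) := by
  set m := Module.finrank ℝ F
  have hm : m - 1 + 1 = m := Nat.sub_add_cancel Module.finrank_pos
  rw [← lintegral_exp_neg_mul_pow, ← lintegral_mul_const _ (by fun_prop)]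
  refine setLIntegral_congr_fun measurableSet_Ioi fun ρ (hρ : 0 < ρ) => ?_
  rw [← lintegral_const_mul _ (by fun_prop)]
  refine setLIntegral_congr_fun measurableSet_Ioo fun θ _ => ?_
  have hsmul : (WithLp.toLp 2 (ρ * cos θ, (ρ * sin θ) • u) : AxialSum F) =
      ρ • WithLp.toLp 2 (cos θ, sin θ • u) := by
    rw [← WithLp.toLp_smul, Prod.smul_mk, smul_smul, smul_eq_mul]
  have hnorm : ‖(WithLp.toLp 2 (ρ * cos θ, (ρ * sin θ) • u) : AxialSum F)‖ = ρ := by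
    rw [← sq_eq_sq₀ (norm_nonneg _) hρ.le, norm_sq_axialSum, norm_smul, hu, mul_one,
      Real.norm_eq_abs, sq_abs, mul_pow, mul_pow, ← mul_add, cos_sq_add_sin_sq, mul_one]
  have hpow : ENNReal.ofReal ((ρ * sin θ) ^ (m - 1)) =
      ENNReal.ofReal (ρ ^ (m - 1)) * ENNReal.ofReal (sin θ ^ (m - 1)) := by
    rw [mul_pow, ENNReal.ofReal_mul (by positivity)]
  have hpow' : ENNReal.ofReal (ρ ^ m) = ENNReal.ofReal (ρ ^ (m - 1)) * ENNReal.ofReal ρ := by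
    rw [← ENNReal.ofReal_mul (by positivity), ← pow_succ, hm]
  rw [hnorm, hsmul, inv_smul_smul₀ hρ.ne', hpow, hpow']
  ring

lemma lintegral_sphereProb_axialSum_mul_sphereMass [Nontrivial F] {κ : AxialSum F → ℝ≥0∞}
    (hκ : Measurable κ) :
    (∫⁻ x, κ x ∂sphereProb (AxialSum F)) * sphereMass (AxialSum F) =
      sphereMass F * ∫⁻ u, (∫⁻ θ in Set.Ioo 0 π, κ (WithLp.toLp 2 (cos θ, sin θ • u)) *
        ENNReal.ofReal (sin θ ^ (Module.finrank ℝ F - 1))) ∂sphereProb F := by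
  set m := Module.finrank ℝ F
  -- Both sides are computed by integrating `κ (‖x‖⁻¹ • x) * exp (-‖x‖)` in polar coordinates.
  have hpolar := lintegral_comp_normalize_mul (E := AxialSum F) hκ
    (w := fun r => ENNReal.ofReal (exp (-r))) (by fun_prop)
  rw [finrank_axialSum, Nat.add_sub_cancel, lintegral_exp_neg_mul_pow,
    lintegral_axialSum_eq_polar (by fun_prop)] at hpolar
  have hfact : ENNReal.ofReal (Nat.factorial m) ≠ 0 := (ENNReal.ofReal_pos.2 (by positivity)).ne'
  rw [lintegral_congr_ae (ae_norm_eq_one_sphereProb.mono fun u hu =>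
      lintegral_halfPlane_comp_normalize_mul_exp hκ hu),
    lintegral_const_mul' _ _ ENNReal.ofReal_ne_top] at hpolar
  refine (ENNReal.mul_right_inj hfact ENNReal.ofReal_ne_top).1 ?_
  calc ENNReal.ofReal (Nat.factorial m) *
        ((∫⁻ x, κ x ∂sphereProb (AxialSum F)) * sphereMass (AxialSum F))
      = sphereMass (AxialSum F) * ((∫⁻ x, κ x ∂sphereProb (AxialSum F)) *
          ENNReal.ofReal (Nat.factorial m)) := by ring
    _ = _ := by rw [← hpolar]; ring

end Slicing

section SolidAngle

variable {F : Type*} [NormedAddCommGroup F] [InnerProductSpace ℝ F] [FiniteDimensional ℝ F]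
  [MeasurableSpace F] [BorelSpace F]

lemma ofReal_Dfun_eq_lintegral (d : ℕ) {x : ℝ} (hx_nonneg : 0 ≤ x) (hx_le : x ≤ π) :
    ENNReal.ofReal (Dfun d x) = ∫⁻ t in Set.Ioc 0 x, ENNReal.ofReal (sin t ^ (d - 1)) := by
  rw [Dfun, intervalIntegral.integral_of_le hx_nonneg, ofReal_integral_eq_lintegral_ofReal]
  · exact (Continuous.intervalIntegrable (by fun_prop) _ _).1
  · filter_upwards [ae_restrict_mem measurableSet_Ioc] with t ht
    exact pow_nonneg (sin_nonneg_of_nonneg_of_le_pi ht.1.le (ht.2.trans hx_le)) _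

lemma setLIntegral_sin_pow_indicator (d : ℕ) {x : ℝ} (hx : x ∈ Set.Icc 0 π) {S : Set ℝ}
    (hS : ∀ θ ∈ Set.Ioo 0 π, θ ≠ x → (θ ∈ S ↔ θ < x)) :
    ∫⁻ θ in Set.Ioo 0 π, S.indicator 1 θ * ENNReal.ofReal (sin θ ^ (d - 1)) =
      ENNReal.ofReal (Dfun d x) := by
  rw [ofReal_Dfun_eq_lintegral d hx.1 hx.2, ← lintegral_indicator measurableSet_Ioo,
    ← lintegral_indicator measurableSet_Ioc]
  refine lintegral_congr_ae ?_
  filter_upwards [compl_mem_ae_iff.2 (measure_singleton x),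
    compl_mem_ae_iff.2 (measure_singleton π)] with θ (hθx : θ ≠ x) (hθπ : θ ≠ π)
  by_cases hθ : θ ∈ Set.Ioo 0 π
  · have hiff := hS θ hθ hθx
    by_cases hlt : θ < x
    · rw [Set.indicator_of_mem hθ, Set.indicator_of_mem (hiff.2 hlt),
        Set.indicator_of_mem (show θ ∈ Set.Ioc 0 x from ⟨hθ.1, hlt.le⟩), Pi.one_apply, one_mul]
    · rw [Set.indicator_of_mem hθ, Set.indicator_of_notMem (mt hiff.1 hlt), zero_mul,
        Set.indicator_of_notMem fun h => hlt (lt_of_le_of_ne h.2 hθx)]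
  · rw [Set.indicator_of_notMem hθ, Set.indicator_of_notMem]
    exact fun h => hθ ⟨h.1, lt_of_le_of_ne (h.2.trans hx.2) hθπ⟩

theorem sphereProb_axialSum_mul_Dfun_pi [Nontrivial F] {A : Set (AxialSum F)}
    (hA : MeasurableSet A) {α : F → ℝ} (hα : ∀ u, ‖u‖ = 1 → α u ∈ Set.Icc 0 π)
    (hmem : ∀ u, ‖u‖ = 1 → ∀ θ ∈ Set.Ioo 0 π, θ ≠ α u →
      ((WithLp.toLp 2 (cos θ, sin θ • u) : AxialSum F) ∈ A ↔ θ < α u)) :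
    sphereProb (AxialSum F) A * ENNReal.ofReal (Dfun (Module.finrank ℝ F) π) =
      ∫⁻ u, ENNReal.ofReal (Dfun (Module.finrank ℝ F) (α u)) ∂sphereProb F := by
  have hslice : ∀ {B : Set (AxialSum F)} {β : F → ℝ}, MeasurableSet B →
      (∀ u, ‖u‖ = 1 → β u ∈ Set.Icc 0 π) →
      (∀ u, ‖u‖ = 1 → ∀ θ ∈ Set.Ioo 0 π, θ ≠ β u →
        ((WithLp.toLp 2 (cos θ, sin θ • u) : AxialSum F) ∈ B ↔ θ < β u)) →
      sphereProb (AxialSum F) B * sphereMass (AxialSum F) = sphereMass F *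
        ∫⁻ u, ENNReal.ofReal (Dfun (Module.finrank ℝ F) (β u)) ∂sphereProb F := by
    intro B β hB hβ hmemB
    rw [← lintegral_indicator_one hB,
      lintegral_sphereProb_axialSum_mul_sphereMass (measurable_one.indicator hB)]
    congr 1
    exact lintegral_congr_ae <| ae_norm_eq_one_sphereProb.mono fun u hu =>
      setLIntegral_sin_pow_indicator _ (hβ u hu)
        (S := {θ | WithLp.toLp 2 (cos θ, sin θ • u) ∈ B}) (hmemB u hu)
  have huniv := hslice (β := fun _ => π) .univ (fun _ _ => ⟨pi_pos.le, le_rfl⟩)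
    fun _ _ θ hθ _ => iff_of_true trivial hθ.2
  rw [measure_univ, one_mul, lintegral_const, measure_univ, mul_one] at huniv
  have hA_slice := hslice hA hα hmem
  rw [huniv, mul_left_comm] at hA_slice
  exact (ENNReal.mul_right_inj sphereMass_ne_zero sphereMass_ne_top).1 hA_slice

end SolidAngle

section Axis

variable {E : Type*} [NormedAddCommGroup E] [InnerProductSpace ℝ E]

/-- `e` spans an axis of the closed convex cone `C`: it lies in the interior of `C`, and `C` meets
the half-space `{x | ⟪e, x⟫ ≤ 0}` in the origin only. -/
structure IsAxis (C : ProperCone ℝ E) (e : E) : Prop where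
  mem_interior : e ∈ interior (C : Set E)
  inner_pos : ∀ x ∈ C, x ≠ 0 → 0 < ⟪e, x⟫

lemma exists_pos_add_smul_mem_of_mem_interior {A : Set E} {x : E} (hx : x ∈ interior A) (v : E) :
    ∃ ε : ℝ, 0 < ε ∧ x + ε • v ∈ A := by
  have hcont : Continuous fun t : ℝ => x + t • v := by fun_prop
  have htend : Tendsto (fun t : ℝ => x + t • v) (𝓝[>] 0) (𝓝 x) := by
    simpa using (hcont.tendsto 0).mono_left nhdsWithin_le_nhds
  obtain ⟨t, ht, ht_pos⟩ := ((htend.eventually (mem_interior_iff_mem_nhds.1 hx)).and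
    self_mem_nhdsWithin).exists
  exact ⟨t, ht_pos, ht⟩

lemma exists_pos_mul_norm_le_inner [FiniteDimensional ℝ E] (C : ProperCone ℝ E) {v : E}
    (hv : ∀ x ∈ C, x ≠ 0 → 0 < ⟪v, x⟫) : ∃ δ : ℝ, 0 < δ ∧ ∀ x ∈ C, δ * ‖x‖ ≤ ⟪v, x⟫ := by
  have hcompact : IsCompact ((C : Set E) ∩ Metric.sphere 0 1) :=
    (isCompact_sphere _ _).inter_left C.isClosed
  obtain ⟨δ, hδ, hδ_le⟩ : ∃ δ : ℝ, 0 < δ ∧ ∀ u ∈ (C : Set E) ∩ Metric.sphere 0 1, δ ≤ ⟪v, u⟫ :=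
    hcompact.exists_forall_le' (by fun_prop) fun u hu =>
      hv u hu.1 (ne_zero_of_mem_unit_sphere ⟨u, hu.2⟩)
  refine ⟨δ, hδ, fun x hx => ?_⟩
  rcases eq_or_ne x 0 with rfl | hx0
  · simp
  have hunit : δ ≤ ⟪v, ‖x‖⁻¹ • x⟫ :=
    hδ_le _ ⟨C.smul_mem hx (by positivity), by simp [norm_smul, hx0]⟩
  rwa [inner_smul_right, inv_mul_eq_div, le_div_iff₀ (norm_pos_iff.2 hx0)] at hunit

lemma mem_interior_innerDual_iff [FiniteDimensional ℝ E] {C : ProperCone ℝ E} {v : E} :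
    v ∈ interior (ProperCone.innerDual (C : Set E) : Set E) ↔ ∀ x ∈ C, x ≠ 0 → 0 < ⟪v, x⟫ := by
  refine ⟨fun hv x hx hx0 => ?_, fun hv => ?_⟩
  · obtain ⟨ε, hε, hmem⟩ := exists_pos_add_smul_mem_of_mem_interior hv (-x)
    have hinner : 0 ≤ ⟪x, v + ε • -x⟫ := hmem hx
    rw [inner_add_right, real_inner_smul_right, inner_neg_right, real_inner_self_eq_norm_sq,
      real_inner_comm] at hinner
    have hpos : 0 < ε * ‖x‖ ^ 2 := mul_pos hε (pow_pos (norm_pos_iff.2 hx0) 2)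
    linarith
  · obtain ⟨δ, hδ, hδ_le⟩ := exists_pos_mul_norm_le_inner C hv
    refine mem_interior.2 ⟨Metric.ball v δ, fun w hw x hx => ?_, Metric.isOpen_ball,
      Metric.mem_ball_self hδ⟩
    rw [Metric.mem_ball, dist_eq_norm] at hw
    have hdiff := (abs_le.1 (abs_real_inner_le_norm (w - v) x)).1
    rw [inner_sub_left] at hdiff
    have hle := hδ_le x hx
    rw [innerₗ_apply_apply, real_inner_comm]
    nlinarith [norm_nonneg x]

namespace IsAxis

variable {C : ProperCone ℝ E} {e : E}

lemma inner_nonneg (hC : IsAxis C e) {x : E} (hx : x ∈ C) : 0 ≤ ⟪e, x⟫ := by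
  rcases eq_or_ne x 0 with rfl | hx0
  · simp
  · exact (hC.inner_pos x hx hx0).le

lemma innerDual [FiniteDimensional ℝ E] (hC : IsAxis C e) :
    IsAxis (ProperCone.innerDual (C : Set E)) e where
  mem_interior := mem_interior_innerDual_iff.2 hC.inner_pos
  inner_pos := mem_interior_innerDual_iff.1 (by
    rw [ProperCone.innerDual_innerDual]
    exact hC.mem_interior)

end IsAxis

end Axis

section ConeHeight

variable {F : Type*} [NormedAddCommGroup F] [InnerProductSpace ℝ F]
  {C : ProperCone ℝ (AxialSum F)}

/-- The function on `F` whose epigraph is the cone `C` with axis `ℝ`. -/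
def coneHeight (C : ProperCone ℝ (AxialSum F)) (y : F) : ℝ :=
  sInf {s : ℝ | WithLp.toLp 2 (s, y) ∈ C}

/-- The angle between the axis `ℝ` and the boundary of the cone `C` in the direction `u`. -/
def coneAngle (C : ProperCone ℝ (AxialSum F)) (u : F) : ℝ :=
  π / 2 - arctan (coneHeight C u)

lemma tan_coneAngle (u : F) : tan (coneAngle C u) = (coneHeight C u)⁻¹ := by
  rw [coneAngle, tan_pi_div_two_sub, tan_arctan]

lemma smul_mem_properCone_iff {E : Type*} [AddCommGroup E] [TopologicalSpace E] [Module ℝ E]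
    {C : ProperCone ℝ E} {x : E} {t : ℝ} (ht : 0 < t) : t • x ∈ C ↔ x ∈ C :=
  ⟨fun h => by simpa [smul_smul, ht.ne'] using C.smul_mem h (inv_pos.2 ht).le,
    fun h => C.smul_mem h ht.le⟩

namespace IsAxis

lemma mem_iff_coneHeight_le (hC : IsAxis C (WithLp.toLp 2 (1, 0))) {s : ℝ} {y : F} :
    WithLp.toLp 2 (s, y) ∈ C ↔ coneHeight C y ≤ s := by
  have hbdd : BddBelow {s : ℝ | WithLp.toLp 2 (s, y) ∈ C} :=
    ⟨0, fun s hs => by simpa [inner_axialSum] using hC.inner_nonneg hs⟩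
  have hclosed : IsClosed {s : ℝ | WithLp.toLp 2 (s, y) ∈ C} :=
    C.isClosed.preimage (by fun_prop : Continuous fun s : ℝ => WithLp.toLp 2 (s, y))
  have hne : {s : ℝ | WithLp.toLp 2 (s, y) ∈ C}.Nonempty := by
    obtain ⟨ε, hε, hmem⟩ :=
      exists_pos_add_smul_mem_of_mem_interior hC.mem_interior (WithLp.toLp 2 (0, y))
    refine ⟨ε⁻¹, ?_⟩
    simpa [← WithLp.toLp_smul, ← WithLp.toLp_add, hε.ne', smul_smul] using
      C.smul_mem hmem (inv_pos.2 hε).le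
  refine ⟨fun h => csInf_le hbdd h, fun h => ?_⟩
  have hadd := add_mem (hclosed.csInf_mem hne hbdd)
    (C.smul_mem (interior_subset hC.mem_interior) (sub_nonneg.2 h))
  simpa [← WithLp.toLp_smul, ← WithLp.toLp_add, coneHeight] using hadd

lemma coneHeight_mem (hC : IsAxis C (WithLp.toLp 2 (1, 0))) (y : F) :
    WithLp.toLp 2 (coneHeight C y, y) ∈ C :=
  hC.mem_iff_coneHeight_le.2 le_rfl

lemma coneHeight_pos (hC : IsAxis C (WithLp.toLp 2 (1, 0))) {y : F} (hy : y ≠ 0) :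
    0 < coneHeight C y := by
  simpa [inner_axialSum] using hC.inner_pos _ (hC.coneHeight_mem y) fun h => hy (by
    simpa using congrArg WithLp.snd h)

lemma coneHeight_smul (hC : IsAxis C (WithLp.toLp 2 (1, 0))) {r : ℝ} (hr : 0 < r) (y : F) :
    coneHeight C (r • y) = r * coneHeight C y := by
  refine eq_of_forall_ge_iff fun s => ?_
  rw [← hC.mem_iff_coneHeight_le, ← le_div_iff₀' hr, ← hC.mem_iff_coneHeight_le,
    ← smul_mem_properCone_iff hr (x := WithLp.toLp 2 (s / r, y)), ← WithLp.toLp_smul,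
    Prod.smul_mk, smul_eq_mul, mul_div_cancel₀ _ hr.ne']

lemma measurable_coneHeight [MeasurableSpace F] [BorelSpace F]
    (hC : IsAxis C (WithLp.toLp 2 (1, 0))) : Measurable (coneHeight C) := by
  refine measurable_of_Iic fun s => ?_
  have hpre : coneHeight C ⁻¹' Set.Iic s = {y | WithLp.toLp 2 (s, y) ∈ C} :=
    Set.ext fun y => hC.mem_iff_coneHeight_le.symm
  rw [hpre]
  exact (C.isClosed.preimage
    (by fun_prop : Continuous fun y : F => WithLp.toLp 2 (s, y))).measurableSet

lemma measurable_coneAngle [MeasurableSpace F] [BorelSpace F]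
    (hC : IsAxis C (WithLp.toLp 2 (1, 0))) : Measurable (coneAngle C) :=
  measurable_const.sub (measurable_arctan.comp hC.measurable_coneHeight)

lemma coneAngle_mem_Ioo (hC : IsAxis C (WithLp.toLp 2 (1, 0))) {u : F} (hu : ‖u‖ = 1) :
    coneAngle C u ∈ Set.Ioo 0 (π / 2) := by
  have hpos := hC.coneHeight_pos (norm_ne_zero_iff.1 (hu.trans_ne one_ne_zero))
  exact ⟨sub_pos.2 (arctan_lt_pi_div_two _), sub_lt_self _ (arctan_pos.2 hpos)⟩

lemma mem_iff_le_coneAngle (hC : IsAxis C (WithLp.toLp 2 (1, 0))) {u : F} {θ : ℝ}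
    (hθ : θ ∈ Set.Ioo 0 π) : WithLp.toLp 2 (cos θ, sin θ • u) ∈ C ↔ θ ≤ coneAngle C u := by
  have hsin := sin_pos_of_mem_Ioo hθ
  have hpoint : (WithLp.toLp 2 (cos θ, sin θ • u) : AxialSum F) =
      sin θ • WithLp.toLp 2 (tan (π / 2 - θ), u) := by
    rw [← WithLp.toLp_smul, Prod.smul_mk, tan_pi_div_two_sub, tan_eq_sin_div_cos, inv_div,
      smul_eq_mul, mul_div_cancel₀ _ hsin.ne']
  have harctan : arctan (tan (π / 2 - θ)) = π / 2 - θ :=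
    arctan_tan (by linarith [hθ.2]) (by linarith [hθ.1])
  rw [hpoint, smul_mem_properCone_iff hsin, hC.mem_iff_coneHeight_le,
    ← arctan_strictMono.le_iff_le, harctan, coneAngle, le_sub_comm]

theorem sphereProb_mul_Dfun_pi [FiniteDimensional ℝ F] [MeasurableSpace F] [BorelSpace F]
    [Nontrivial F] (hC : IsAxis C (WithLp.toLp 2 (1, 0))) :
    sphereProb (AxialSum F) C * ENNReal.ofReal (Dfun (Module.finrank ℝ F) π) =
      ∫⁻ u, ENNReal.ofReal (Dfun (Module.finrank ℝ F) (coneAngle C u)) ∂sphereProb F :=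
  sphereProb_axialSum_mul_Dfun_pi C.isClosed.measurableSet
    (fun _ hu => ⟨(hC.coneAngle_mem_Ioo hu).1.le,
      by linarith [(hC.coneAngle_mem_Ioo hu).2, pi_pos]⟩)
    fun _ _ _ hθ hne => (hC.mem_iff_le_coneAngle hθ).trans hne.le_iff_lt

lemma coneHeight_mul_coneHeight_innerDual_nonneg [FiniteDimensional ℝ F]
    (hC : IsAxis C (WithLp.toLp 2 (1, 0))) (y y' : F) :
    0 ≤ coneHeight C y * coneHeight (ProperCone.innerDual (C : Set (AxialSum F))) y' +
      ⟪y, y'⟫ := by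
  simpa [inner_axialSum, mul_comm] using hC.innerDual.coneHeight_mem y' (hC.coneHeight_mem y)

end IsAxis

end ConeHeight

section Gaussian

variable {E : Type*} [NormedAddCommGroup E] [InnerProductSpace ℝ E] [FiniteDimensional ℝ E]
  [MeasurableSpace E] [BorelSpace E]

lemma integrable_exp_neg_mul_norm_sq {b : ℝ} (hb : 0 < b) :
    Integrable fun x : E => exp (-b * ‖x‖ ^ 2) := by
  refine not_imp_comm.1 integral_undef ?_
  rw [GaussianFourier.integral_rexp_neg_mul_sq_norm hb]
  positivity

variable (E) in
lemma lintegral_exp_neg_norm_sq_div_two :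
    ∫⁻ x : E, ENNReal.ofReal (exp (-‖x‖ ^ 2 / 2)) =
      ENNReal.ofReal ((2 * π) ^ ((Module.finrank ℝ E : ℝ) / 2)) := by
  have hhalf : ∀ x : E, exp (-‖x‖ ^ 2 / 2) = exp (-(1 / 2) * ‖x‖ ^ 2) := fun x => by
    congr 1; ring
  simp only [hhalf]
  rw [← ofReal_integral_eq_lintegral_ofReal (integrable_exp_neg_mul_norm_sq one_half_pos)
    (Eventually.of_forall fun _ => (exp_pos _).le),
    GaussianFourier.integral_rexp_neg_mul_sq_norm one_half_pos, div_div_eq_mul_div, div_one,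
    mul_comm π]

lemma integrable_one_add_norm_sq_mul_exp {c : ℝ} (hc : 0 < c) :
    Integrable fun x : E => (1 + ‖x‖ ^ 2) * exp (-c * ‖x‖ ^ 2) := by
  have hpoly : ∀ t : ℝ, 0 ≤ t → 1 + t ≤ (1 + 2 / c) * exp (c / 2 * t) := fun t ht =>
    calc 1 + t ≤ (1 + 2 / c) * (c / 2 * t + 1) := by
          have hexpand : (1 + 2 / c) * (c / 2 * t + 1) = 1 + t + (c / 2 * t + 2 / c) := by
            field_simp; ring
          rw [hexpand]
          exact le_add_of_nonneg_right (by positivity)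
      _ ≤ (1 + 2 / c) * exp (c / 2 * t) := by
          gcongr
          exact add_one_le_exp _
  refine ((integrable_exp_neg_mul_norm_sq (E := E) (half_pos hc)).const_mul (1 + 2 / c)).mono'
    (by fun_prop) (Eventually.of_forall fun x => ?_)
  rw [Real.norm_of_nonneg (by positivity)]
  calc (1 + ‖x‖ ^ 2) * exp (-c * ‖x‖ ^ 2)
      ≤ (1 + 2 / c) * exp (c / 2 * ‖x‖ ^ 2) * exp (-c * ‖x‖ ^ 2) := by
        gcongr
        exact hpoly _ (by positivity)
    _ = (1 + 2 / c) * exp (-(c / 2) * ‖x‖ ^ 2) := by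
        rw [mul_assoc, ← exp_add]
        ring_nf

lemma integrableOn_mul_exp_neg_inner_sq {C : ProperCone ℝ E} {v : E}
    (hv : ∀ x ∈ C, x ≠ 0 → 0 < ⟪v, x⟫) {g : E → ℝ} (hg : Measurable g) {M : ℝ}
    (hgM : ∀ x, |g x| ≤ M * (1 + ‖x‖ ^ 2)) :
    IntegrableOn (fun x => g x * exp (-⟪v, x⟫ ^ 2 / 2)) C := by
  obtain ⟨δ, hδ, hδ_le⟩ := exists_pos_mul_norm_le_inner C hv
  refine ((integrable_one_add_norm_sq_mul_exp (c := δ ^ 2 / 2)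
    (by positivity)).const_mul M).integrableOn.mono' (by fun_prop) ?_
  filter_upwards [ae_restrict_mem C.isClosed.measurableSet] with x hx
  rw [norm_mul, Real.norm_eq_abs, Real.norm_of_nonneg (exp_pos _).le, ← mul_assoc]
  refine mul_le_mul (hgM x) (exp_le_exp.2 ?_) (exp_pos _).le ((abs_nonneg _).trans (hgM x))
  have hsq := pow_le_pow_left₀ (by positivity) (hδ_le x hx) 2
  rw [mul_pow] at hsq
  linarith

lemma integrableOn_inner_mul_inner_mul_exp {C : ProperCone ℝ E} {v : E}
    (hv : ∀ x ∈ C, x ≠ 0 → 0 < ⟪v, x⟫) (z : E) :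
    IntegrableOn (fun x => ⟪v, x⟫ * ⟪z, x⟫ * exp (-⟪v, x⟫ ^ 2 / 2)) C :=
  integrableOn_mul_exp_neg_inner_sq hv (M := ‖v‖ * ‖z‖) (by fun_prop) fun x =>
    calc |⟪v, x⟫ * ⟪z, x⟫| ≤ ‖v‖ * ‖x‖ * (‖z‖ * ‖x‖) := by
          rw [abs_mul]
          gcongr <;> exact abs_real_inner_le_norm _ _
      _ = ‖v‖ * ‖z‖ * ‖x‖ ^ 2 := by ring
      _ ≤ ‖v‖ * ‖z‖ * (1 + ‖x‖ ^ 2) := by gcongr; exact le_add_of_nonneg_left zero_le_one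

lemma lintegral_Ioi_comp_mul {f : ℝ → ℝ≥0∞} (hf : Measurable f) {c : ℝ} (hc : 0 < c) :
    ∫⁻ r in Set.Ioi (0 : ℝ), f (c * r) = ENNReal.ofReal c⁻¹ * ∫⁻ r in Set.Ioi (0 : ℝ), f r := by
  have hmap := Measure.map_addHaar_smul (volume : Measure ℝ) hc.ne'
  rw [Module.finrank_self, pow_one, abs_of_pos (inv_pos.2 hc)] at hmap
  rw [← lintegral_indicator measurableSet_Ioi, ← lintegral_indicator measurableSet_Ioi,
    ← smul_eq_mul, ← lintegral_smul_measure, ← hmap,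
    lintegral_map (hf.indicator measurableSet_Ioi) (by fun_prop)]
  refine lintegral_congr fun r => ?_
  simp only [Set.indicator, smul_eq_mul, Set.mem_Ioi, mul_pos_iff_of_pos_left hc]

lemma lintegral_Ioi_exp_neg_sq_div_two_mul_pow (n : ℕ) {c : ℝ} (hc : 0 < c) :
    ∫⁻ r in Set.Ioi (0 : ℝ), ENNReal.ofReal (exp (-(r * c) ^ 2 / 2)) * ENNReal.ofReal (r ^ n) =
      ENNReal.ofReal (c⁻¹ ^ (n + 1)) * ∫⁻ r in Set.Ioi (0 : ℝ),
        ENNReal.ofReal (exp (-r ^ 2 / 2)) * ENNReal.ofReal (r ^ n) := by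
  have hscale : ∀ r : ℝ, ENNReal.ofReal (exp (-(r * c) ^ 2 / 2)) * ENNReal.ofReal (r ^ n) =
      ENNReal.ofReal (c⁻¹ ^ n) *
        (ENNReal.ofReal (exp (-(c * r) ^ 2 / 2)) * ENNReal.ofReal ((c * r) ^ n)) := fun r => by
    rw [mul_left_comm, ← ENNReal.ofReal_mul (p := c⁻¹ ^ n) (by positivity), ← mul_pow,
      inv_mul_cancel_left₀ hc.ne', mul_comm r c]
  simp only [hscale]
  rw [lintegral_const_mul _ (by fun_prop), lintegral_Ioi_comp_mul
    (f := fun r => ENNReal.ofReal (exp (-r ^ 2 / 2)) * ENNReal.ofReal (r ^ n)) (by fun_prop) hc,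
    ← mul_assoc, ← ENNReal.ofReal_mul (by positivity), ← pow_succ]

lemma lintegral_exp_neg_sq_div_two_of_homogeneous [Nontrivial E] {h : E → ℝ} (hh : Measurable h)
    (hpos : ∀ u, ‖u‖ = 1 → 0 < h u) (hsmul : ∀ r : ℝ, 0 < r → ∀ u, h (r • u) = r * h u) :
    ∫⁻ y, ENNReal.ofReal (exp (-h y ^ 2 / 2)) =
      ENNReal.ofReal ((2 * π) ^ ((Module.finrank ℝ E : ℝ) / 2)) *
        ∫⁻ u, ENNReal.ofReal ((h u)⁻¹ ^ Module.finrank ℝ E) ∂sphereProb E := by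
  set J : ℝ≥0∞ := ∫⁻ r in Set.Ioi (0 : ℝ),
    ENNReal.ofReal (exp (-r ^ 2 / 2)) * ENNReal.ofReal (r ^ (Module.finrank ℝ E - 1))
  have hpolar : ∀ k : E → ℝ, Measurable k → (∀ u, ‖u‖ = 1 → 0 < k u) →
      (∀ r : ℝ, 0 < r → ∀ u, k (r • u) = r * k u) →
      ∫⁻ y, ENNReal.ofReal (exp (-k y ^ 2 / 2)) = sphereMass E * J *
        ∫⁻ u, ENNReal.ofReal ((k u)⁻¹ ^ Module.finrank ℝ E) ∂sphereProb E := by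
    intro k hk hk_pos hk_smul
    rw [lintegral_eq_polar (by fun_prop), mul_assoc, ← lintegral_const_mul J (by fun_prop)]
    congr 1
    refine lintegral_congr_ae (ae_norm_eq_one_sphereProb.mono fun u hu => ?_)
    dsimp only
    rw [mul_comm J, ← Nat.sub_add_cancel (Module.finrank_pos (R := ℝ) (M := E)),
      ← lintegral_Ioi_exp_neg_sq_div_two_mul_pow _ (hk_pos u hu), Nat.add_sub_cancel]
    exact setLIntegral_congr_fun measurableSet_Ioi fun r hr => by rw [hk_smul r hr u]
  have hgauss : ENNReal.ofReal ((2 * π) ^ ((Module.finrank ℝ E : ℝ) / 2)) = sphereMass E * J := by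
    rw [← lintegral_exp_neg_norm_sq_div_two E, hpolar (fun x => ‖x‖) measurable_norm
      (fun u hu => hu ▸ one_pos) (fun r hr u => by rw [norm_smul, Real.norm_of_nonneg hr.le]),
      lintegral_congr_ae (g := fun _ => 1)
        (ae_norm_eq_one_sphereProb.mono fun u hu => by simp [hu]),
      lintegral_one, measure_univ, mul_one]
  rw [hpolar h hh hpos hsmul, hgauss]

end Gaussian

section ConeSantalo

/-- A unit axis `e` such that the cone, weighted by `⟪e, x⟫ * exp (-⟪e, x⟫ ^ 2 / 2)`, has its
barycentre on the line through `e`. Then the origin is the Santaló point of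
`exp (-coneHeight C y ^ 2 / 2)`. -/
structure IsCentredAxis {E : Type*} [NormedAddCommGroup E] [InnerProductSpace ℝ E]
    [FiniteDimensional ℝ E] [MeasurableSpace E] [BorelSpace E] (C : ProperCone ℝ E) (e : E) : Prop
    extends IsAxis C e where
  norm_eq_one : ‖e‖ = 1
  integral_eq_zero : ∀ z, ⟪e, z⟫ = 0 →
    ∫ x in (C : Set E), ⟪e, x⟫ * ⟪z, x⟫ * exp (-⟪e, x⟫ ^ 2 / 2) = 0

variable {F : Type*} [NormedAddCommGroup F] [InnerProductSpace ℝ F] [FiniteDimensional ℝ F]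
  [MeasurableSpace F] [BorelSpace F] {C : ProperCone ℝ (AxialSum F)}

lemma IsAxis.lintegral_exp_coneHeight [Nontrivial F] (hC : IsAxis C (WithLp.toLp 2 (1, 0))) :
    ∫⁻ y, ENNReal.ofReal (exp (-coneHeight C y ^ 2 / 2)) =
      ENNReal.ofReal ((2 * π) ^ ((Module.finrank ℝ F : ℝ) / 2)) *
        ∫⁻ u, ENNReal.ofReal (tan (coneAngle C u) ^ Module.finrank ℝ F) ∂sphereProb F := by
  simp only [tan_coneAngle]
  exact lintegral_exp_neg_sq_div_two_of_homogeneous hC.measurable_coneHeight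
    (fun u hu => hC.coneHeight_pos (norm_ne_zero_iff.1 (hu.trans_ne one_ne_zero)))
    fun r hr u => hC.coneHeight_smul hr u

theorem IsAxis.lintegral_tan_pow_mul_le_one [Nontrivial F]
    (hC : IsAxis C (WithLp.toLp 2 (1, 0)))
    (hmin : ∀ z, ∫⁻ y, ENNReal.ofReal (exp (-coneHeight C y ^ 2 / 2)) ≤
      ∫⁻ y, ENNReal.ofReal (exp (-coneHeight C y ^ 2 / 2)) * ENNReal.ofReal (exp ⟪z, y⟫)) :
    (∫⁻ u, ENNReal.ofReal (tan (coneAngle C u) ^ Module.finrank ℝ F) ∂sphereProb F) *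
      ∫⁻ u, ENNReal.ofReal (tan (coneAngle (ProperCone.innerDual (C : Set (AxialSum F))) u) ^
        Module.finrank ℝ F) ∂sphereProb F ≤ 1 := by
  set C' := ProperCone.innerDual (C : Set (AxialSum F))
  have hmeas := hC.measurable_coneHeight
  have hmeas' := hC.innerDual.measurable_coneHeight
  have hsantalo := functionalSantalo F (fun y => ENNReal.ofReal (exp (-coneHeight C y ^ 2 / 2)))
    (fun y => ENNReal.ofReal (exp (-coneHeight C' (-y) ^ 2 / 2)))
    (by fun_prop) (by fun_prop) (fun x y => by
      rw [← ENNReal.ofReal_mul (exp_pos _).le, ← exp_add]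
      refine ENNReal.ofReal_le_ofReal (exp_le_exp.2 ?_)
      have hdual := hC.coneHeight_mul_coneHeight_innerDual_nonneg x (-y)
      rw [inner_neg_right] at hdual
      linarith [two_mul_le_add_sq (coneHeight C x) (coneHeight C' (-y))]) hmin
  rw [lintegral_neg_eq_self (fun y => ENNReal.ofReal (exp (-coneHeight C' y ^ 2 / 2))),
    hC.lintegral_exp_coneHeight, hC.innerDual.lintegral_exp_coneHeight, mul_mul_mul_comm,
    ← ENNReal.ofReal_mul (by positivity), ← rpow_add (by positivity), add_halves,
    rpow_natCast] at hsantalo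
  have hne : ENNReal.ofReal ((2 * π) ^ Module.finrank ℝ F) ≠ 0 :=
    (ENNReal.ofReal_pos.2 (by positivity)).ne'
  rwa [ENNReal.mul_le_iff_le_inv hne ENNReal.ofReal_ne_top,
    ENNReal.inv_mul_cancel hne ENNReal.ofReal_ne_top] at hsantalo

lemma integral_Ici_mul_exp_neg_sq_div_two (a : ℝ) :
    ∫ s in Set.Ici a, s * exp (-s ^ 2 / 2) = exp (-a ^ 2 / 2) := by
  have hderiv : ∀ s : ℝ, HasDerivAt (fun s : ℝ => -exp (-s ^ 2 / 2)) (s * exp (-s ^ 2 / 2)) s := by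
    intro s
    have hsq : HasDerivAt (fun s : ℝ => -s ^ 2 / 2) (-s) s := by
      convert! (hasDerivAt_pow 2 s).fun_neg.div_const 2 using 1
      simp; ring
    convert! hsq.exp.fun_neg using 1
    ring
  have hint : Integrable fun s : ℝ => s * exp (-s ^ 2 / 2) := by
    convert! integrable_mul_exp_neg_mul_sq (b := 1 / 2) (by norm_num) using 4
    ring
  have htend : Tendsto (fun s : ℝ => -exp (-s ^ 2 / 2)) atTop (𝓝 0) := by
    have hsq : Tendsto (fun s : ℝ => -s ^ 2 / 2) atTop atBot := by
      simp only [neg_div]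
      exact tendsto_neg_atTop_atBot.comp
        ((tendsto_pow_atTop two_ne_zero).atTop_div_const two_pos)
    simpa using (tendsto_exp_atBot.comp hsq).neg
  rw [integral_Ici_eq_integral_Ioi, integral_Ioi_of_hasDerivAt_of_tendsto
    (hderiv a).continuousAt.continuousWithinAt (fun s _ => hderiv s) hint.integrableOn htend]
  ring

omit [MeasurableSpace F] [BorelSpace F] in
lemma IsAxis.exists_pos_mul_norm_le_coneHeight (hC : IsAxis C (WithLp.toLp 2 (1, 0))) :
    ∃ δ : ℝ, 0 < δ ∧ ∀ y, δ * ‖y‖ ≤ coneHeight C y := by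
  obtain ⟨δ, hδ, hδ_le⟩ := exists_pos_mul_norm_le_inner C hC.inner_pos
  refine ⟨δ, hδ, fun y => ?_⟩
  have hle := hδ_le _ (hC.coneHeight_mem y)
  simp only [inner_axialSum, one_mul, inner_zero_left, add_zero] at hle
  refine le_trans ?_ hle
  gcongr
  exact le_of_sq_le_sq (by rw [norm_sq_axialSum]; exact le_add_of_nonneg_left (sq_nonneg _))
    (norm_nonneg _)

lemma IsAxis.integrable_mul_exp_coneHeight (hC : IsAxis C (WithLp.toLp 2 (1, 0))) {g : F → ℝ}
    (hg : Measurable g) {M : ℝ} (hgM : ∀ y, |g y| ≤ M * (1 + ‖y‖ ^ 2)) :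
    Integrable fun y => g y * exp (-coneHeight C y ^ 2 / 2) := by
  obtain ⟨δ, hδ, hδ_le⟩ := hC.exists_pos_mul_norm_le_coneHeight
  have hmeas := hC.measurable_coneHeight
  refine ((integrable_one_add_norm_sq_mul_exp (c := δ ^ 2 / 2) (by positivity)).const_mul M).mono'
    (by fun_prop) (Eventually.of_forall fun y => ?_)
  rw [norm_mul, Real.norm_eq_abs, Real.norm_of_nonneg (exp_pos _).le, ← mul_assoc]
  refine mul_le_mul (hgM y) (exp_le_exp.2 ?_) (exp_pos _).le ((abs_nonneg _).trans (hgM y))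
  have hsq := pow_le_pow_left₀ (by positivity) (hδ_le y) 2
  rw [mul_pow] at hsq
  linarith

lemma IsAxis.setIntegral_fst_mul_inner_mul_exp (hC : IsAxis C (WithLp.toLp 2 (1, 0))) (z : F) :
    ∫ x in (C : Set (AxialSum F)), ⟪WithLp.toLp 2 (1, 0), x⟫ * ⟪WithLp.toLp 2 (0, z), x⟫ *
        exp (-⟪WithLp.toLp 2 (1, 0), x⟫ ^ 2 / 2) =
      ∫ y, exp (-coneHeight C y ^ 2 / 2) * ⟪z, y⟫ := by
  set g : AxialSum F → ℝ := (C : Set (AxialSum F)).indicator fun x =>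
    ⟪WithLp.toLp 2 (1, 0), x⟫ * ⟪WithLp.toLp 2 (0, z), x⟫ *
      exp (-⟪WithLp.toLp 2 (1, 0), x⟫ ^ 2 / 2) with hg
  have hg_int : Integrable g :=
    (integrableOn_inner_mul_inner_mul_exp hC.inner_pos _).integrable_indicator
      C.isClosed.measurableSet
  have hslice : ∀ y s, g (WithLp.toLp 2 (s, y)) =
      (Set.Ici (coneHeight C y)).indicator (fun s => ⟪z, y⟫ * (s * exp (-s ^ 2 / 2))) s := by
    intro y s
    by_cases hs : coneHeight C y ≤ s
    · rw [hg, Set.indicator_of_mem (hC.mem_iff_coneHeight_le.2 hs),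
        Set.indicator_of_mem (Set.mem_Ici.2 hs)]
      simp only [inner_axialSum, one_mul, inner_zero_left, add_zero, zero_mul, zero_add]
      ring
    · rw [hg, Set.indicator_of_notMem fun h => hs (hC.mem_iff_coneHeight_le.1 h),
        Set.indicator_of_notMem (Set.notMem_Ici.2 (not_le.1 hs))]
  have hmp := WithLp.volume_preserving_toLp ℝ F
  rw [← integral_indicator C.isClosed.measurableSet, ← hg,
    ← hmp.integral_comp (MeasurableEquiv.toLp 2 (ℝ × F)).measurableEmbedding,
    Measure.volume_eq_prod, integral_prod_symm]
  · refine integral_congr_ae (Eventually.of_forall fun y => ?_)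
    dsimp only
    simp only [hslice]
    rw [integral_indicator measurableSet_Ici, integral_const_mul,
      integral_Ici_mul_exp_neg_sq_div_two, mul_comm]
  · exact hmp.integrable_comp_of_integrable hg_int

theorem IsCentredAxis.lintegral_tan_pow_mul_le_one [Nontrivial F]
    (hC : IsCentredAxis C (WithLp.toLp 2 (1, 0))) :
    (∫⁻ u, ENNReal.ofReal (tan (coneAngle C u) ^ Module.finrank ℝ F) ∂sphereProb F) *
      ∫⁻ u, ENNReal.ofReal (tan (coneAngle (ProperCone.innerDual (C : Set (AxialSum F))) u) ^
        Module.finrank ℝ F) ∂sphereProb F ≤ 1 := by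
  refine hC.toIsAxis.lintegral_tan_pow_mul_le_one fun z =>
    lintegral_le_lintegral_mul_exp (fun _ => (exp_pos _).le) ?_ ?_ ?_
  · simpa using hC.integrable_mul_exp_coneHeight (g := fun _ => 1) (M := 1) (by fun_prop)
      fun y => by simp
  · simp only [mul_comm (exp _)]
    refine hC.integrable_mul_exp_coneHeight (M := ‖z‖) (by fun_prop) fun y => ?_
    refine (abs_real_inner_le_norm z y).trans ?_
    gcongr
    nlinarith [sq_nonneg (‖y‖ - 1)]
  · rw [← hC.setIntegral_fst_mul_inner_mul_exp]
    exact hC.integral_eq_zero _ (by simp)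

end ConeSantalo

section ChoiceOfAxis

variable {E : Type*} [NormedAddCommGroup E] [InnerProductSpace ℝ E] {C : ProperCone ℝ E}

open scoped Pointwise in
lemma smul_properCone_eq {r : ℝ} (hr : 0 < r) : r • (C : Set E) = C := Set.ext fun x => by
  rw [Set.mem_smul_set_iff_inv_smul_mem₀ hr.ne', SetLike.mem_coe, SetLike.mem_coe,
    smul_mem_properCone_iff (inv_pos.2 hr)]

lemma smul_mem_interior_properCone {r : ℝ} (hr : 0 < r) {x : E}
    (hx : x ∈ interior (C : Set E)) : r • x ∈ interior (C : Set E) := by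
  rw [← smul_properCone_eq hr, interior_smul₀ hr.ne']
  exact Set.smul_mem_smul_set hx

lemma inner_pos_or_inner_neg_of_inner_ne_zero (hC : ∀ x ∈ C, x ≠ 0 → -x ∉ C) {v : E}
    (hv : ∀ x ∈ C, x ≠ 0 → ⟪v, x⟫ ≠ 0) :
    (∀ x ∈ C, x ≠ 0 → 0 < ⟪v, x⟫) ∨ (∀ x ∈ C, x ≠ 0 → 0 < ⟪-v, x⟫) := by
  by_contra! h
  obtain ⟨⟨x, hx, hx0, hvx⟩, y, hy, hy0, hvy⟩ := h
  have hvx := lt_of_le_of_ne hvx (hv x hx hx0)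
  rw [inner_neg_left, neg_nonpos] at hvy
  have hvy := lt_of_le_of_ne hvy (hv y hy hy0).symm
  have hx_smul := C.smul_mem hx hvy.le
  have hy_smul := C.smul_mem hy (neg_nonneg.2 hvx.le)
  refine hv _ (add_mem hx_smul hy_smul) (fun hsum => ?_) ?_
  · refine hC _ hx_smul (smul_ne_zero hvy.ne' hx0) ?_
    rwa [neg_eq_of_add_eq_zero_right hsum]
  · rw [inner_add_right, inner_smul_right, inner_smul_right]
    ring

/- The translates `C + n • x` decrease to the empty set. -/
lemma measure_properCone_eq_zero_of_measurePreserving_sub [MeasurableSpace E]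
    [BorelSpace E] {μ : Measure E} {x : E} (hx : x ∈ C) (hx_neg : -x ∉ C)
    (hμ : MeasurePreserving (· - x) μ μ) (hfin : μ C ≠ ∞) : μ C = 0 := by
  have hiterate : ∀ n : ℕ, (· - x)^[n] = fun y => y - n • x := fun n => by
    simp only [sub_eq_add_neg, add_right_iterate, smul_neg]
  set T : ℕ → Set E := fun n => (· - x)^[n] ⁻¹' C with hT
  have hT_meas : ∀ n, MeasurableSet (T n) := fun n =>
    (hμ.iterate n).measurable C.isClosed.measurableSet
  have hT_eq : ∀ n, μ (T n) = μ C := fun n =>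
    (hμ.iterate n).measure_preimage C.isClosed.measurableSet.nullMeasurableSet
  have hT_anti : Antitone T := antitone_nat_of_succ_le fun n y hy => by
    simp only [hT, hiterate, Set.mem_preimage, SetLike.mem_coe] at hy ⊢
    have hadd := add_mem hy hx
    rwa [succ_nsmul, sub_add_eq_sub_sub, sub_add_cancel] at hadd
  have hT_inter : ⋂ n, T n = ∅ := by
    refine Set.eq_empty_iff_forall_notMem.2 fun y hy => hx_neg ?_
    have hlim : Tendsto (fun n : ℕ => (1 / ((n : ℝ) + 1)) • y - x) atTop (𝓝 (-x)) := by
      simpa using ((tendsto_one_div_add_atTop_nhds_zero_nat (𝕜 := ℝ)).smul_const y).sub_const x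
    refine C.isClosed.mem_of_tendsto hlim (Eventually.of_forall fun n => ?_)
    have hmem := Set.mem_iInter.1 hy (n + 1)
    simp only [hT, hiterate, Set.mem_preimage, SetLike.mem_coe] at hmem
    have hpos : (0 : ℝ) < n + 1 := by positivity
    have hsmul := C.smul_mem hmem (one_div_pos.2 hpos).le
    rwa [smul_sub, ← Nat.cast_smul_eq_nsmul ℝ, Nat.cast_add_one, smul_smul,
      one_div_mul_cancel hpos.ne', one_smul] at hsmul
  have htend := tendsto_measure_iInter_atTop (μ := μ) (fun n => (hT_meas n).nullMeasurableSet)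
    hT_anti ⟨0, by rwa [hT_eq]⟩
  rw [hT_inter, measure_empty, show μ ∘ T = fun _ => μ C from funext hT_eq] at htend
  exact tendsto_nhds_unique tendsto_const_nhds htend

lemma half_mul_norm_le_inner_add_smul {δ : ℝ} {v z x : E} (hv : δ * ‖x‖ ≤ ⟪v, x⟫) {t : ℝ}
    (ht : |t| * ‖z‖ ≤ δ / 2) : δ / 2 * ‖x‖ ≤ ⟪v + t • z, x⟫ := by
  have hperturb : |⟪t • z, x⟫| ≤ δ / 2 * ‖x‖ := by
    refine (abs_real_inner_le_norm _ _).trans ?_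
    rw [norm_smul, Real.norm_eq_abs]
    gcongr
  rw [inner_add_left]
  linarith [neg_le_of_abs_le hperturb]

lemma abs_inner_mul_inner_mul_exp_le {δ : ℝ} (hδ : 0 < δ) {v z x : E} (hv : δ * ‖x‖ ≤ ⟪v, x⟫)
    {t : ℝ} (ht : |t| < 1) (htz : |t| * ‖z‖ ≤ δ / 2) :
    |⟪v + t • z, x⟫ * ⟪z, x⟫ * exp (-⟪v + t • z, x⟫ ^ 2 / 2)| ≤
      (‖v‖ + ‖z‖) * ‖z‖ * ((1 + ‖x‖ ^ 2) * exp (-(δ ^ 2 / 8) * ‖x‖ ^ 2)) := by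
  have hnorm : ‖v + t • z‖ ≤ ‖v‖ + ‖z‖ := by
    refine (norm_add_le _ _).trans ?_
    rw [norm_smul, Real.norm_eq_abs]
    gcongr
    exact mul_le_of_le_one_left (norm_nonneg _) ht.le
  have hsq := pow_le_pow_left₀ (by positivity) (half_mul_norm_le_inner_add_smul hv htz) 2
  rw [abs_mul, abs_of_pos (exp_pos _), ← mul_assoc]
  gcongr ?_ * exp ?_
  · calc |⟪v + t • z, x⟫ * ⟪z, x⟫| ≤ (‖v‖ + ‖z‖) * ‖x‖ * (‖z‖ * ‖x‖) := by
          rw [abs_mul]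
          gcongr
          · exact (abs_real_inner_le_norm _ _).trans (by gcongr)
          · exact abs_real_inner_le_norm _ _
      _ = (‖v‖ + ‖z‖) * ‖z‖ * ‖x‖ ^ 2 := by ring
      _ ≤ (‖v‖ + ‖z‖) * ‖z‖ * (1 + ‖x‖ ^ 2) := by
        gcongr
        exact le_add_of_nonneg_left zero_le_one
  · linarith

lemma eventually_abs_mul_le {δ : ℝ} (hδ : 0 < δ) (c : ℝ) : ∀ᶠ t : ℝ in 𝓝 0, |t| * c ≤ δ := by
  have hcont : Continuous fun t : ℝ => |t| * c := by fun_prop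
  exact (hcont.tendsto' 0 0 (by simp)).eventually_le_const hδ

variable [FiniteDimensional ℝ E]

lemma exists_inner_pos_of_neg_notMem (hC : ∀ x ∈ C, x ≠ 0 → -x ∉ C) :
    ∃ v : E, ∀ x ∈ C, x ≠ 0 → 0 < ⟪v, x⟫ := by
  suffices h : (interior (ProperCone.innerDual (C : Set E) : Set E)).Nonempty from
    h.imp fun v hv => mem_interior_innerDual_iff.1 hv
  have hspan : Submodule.span ℝ (ProperCone.innerDual (C : Set E) : Set E) = ⊤ := by
    rw [← Submodule.orthogonal_eq_bot_iff, Submodule.eq_bot_iff]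
    intro z hz
    have hinner : ∀ y ∈ ProperCone.innerDual (C : Set E), ⟪y, z⟫ = 0 := fun y hy =>
      (Submodule.mem_orthogonal _ z).1 hz y (Submodule.subset_span hy)
    by_contra hz0
    refine hC z ?_ hz0 ?_ <;> rw [← ProperCone.innerDual_innerDual C]
    · exact fun y hy => (hinner y hy).ge
    · exact fun y hy => by simpa using (hinner y hy).le
  rw [(ProperCone.convex _).interior_nonempty_iff_affineSpan_eq_top,
    AffineSubspace.affineSpan_eq_top_iff_vectorSpan_eq_top_of_nonempty ℝ E E ⟨0, zero_mem _⟩,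
    eq_top_iff, ← hspan, Submodule.span_le]
  exact fun y hy => by simpa using vsub_mem_vectorSpan ℝ hy (zero_mem (ProperCone.innerDual _))

variable [MeasurableSpace E] [BorelSpace E]

/-- The energy whose minimizers, after adding `‖v‖ ^ 2 / 2`, are the centred axes of `C` up to
scaling. -/
def axisPotential (C : ProperCone ℝ E) (v : E) : ℝ≥0∞ :=
  ∫⁻ x in C, ENNReal.ofReal (exp (-⟪v, x⟫ ^ 2 / 2))

lemma lowerSemicontinuous_axisPotential : LowerSemicontinuous (axisPotential C) := by
  intro v
  refine lowerSemicontinuousAt_iff_le_liminf.2 ?_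
  refine le_trans (le_of_eq (lintegral_congr fun x => ?_))
    (lintegral_liminf_le' (f := fun (w : E) x => ENNReal.ofReal (exp (-⟪w, x⟫ ^ 2 / 2)))
      (fun w => by fun_prop))
  have hcont : Continuous fun w : E => ENNReal.ofReal (exp (-⟪w, x⟫ ^ 2 / 2)) :=
    ENNReal.continuous_ofReal.comp (by fun_prop)
  exact (hcont.tendsto v).liminf_eq.symm

lemma axisPotential_neg (v : E) : axisPotential C (-v) = axisPotential C v := by
  simp [axisPotential]

lemma integrableOn_exp_neg_inner_sq {v : E} (hv : ∀ x ∈ C, x ≠ 0 → 0 < ⟪v, x⟫) :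
    IntegrableOn (fun x => exp (-⟪v, x⟫ ^ 2 / 2)) C := by
  simpa using integrableOn_mul_exp_neg_inner_sq hv (g := fun _ => 1) (M := 1) (by fun_prop)
    fun x => by simp

lemma axisPotential_eq_ofReal {v : E} (hv : ∀ x ∈ C, x ≠ 0 → 0 < ⟪v, x⟫) :
    axisPotential C v = ENNReal.ofReal (∫ x in C, exp (-⟪v, x⟫ ^ 2 / 2)) :=
  (ofReal_integral_eq_lintegral_ofReal (integrableOn_exp_neg_inner_sq hv)
    (Eventually.of_forall fun _ => (exp_pos _).le)).symm

lemma inner_ne_zero_of_axisPotential_ne_top (hC : ∀ x ∈ C, x ≠ 0 → -x ∉ C)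
    (hvol : volume (C : Set E) ≠ 0) {v : E} (hv : axisPotential C v ≠ ∞) {x : E} (hx : x ∈ C)
    (hx0 : x ≠ 0) : ⟪v, x⟫ ≠ 0 := by
  intro hvx
  set w : E → ℝ≥0∞ := fun y => ENNReal.ofReal (exp (-⟪v, y⟫ ^ 2 / 2)) with hw
  have hw_meas : Measurable w := by fun_prop
  have hw_sub : ∀ y, w (y - x) = w y := fun y => by
    simp only [hw, inner_sub_right, hvx, sub_zero]
  have hpres : MeasurePreserving (· - x) (volume.withDensity w) (volume.withDensity w) := by
    refine ⟨by fun_prop, Measure.ext fun A hA => ?_⟩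
    have hA' : MeasurableSet ((· - x) ⁻¹' A) := measurable_sub_const x hA
    rw [Measure.map_apply (by fun_prop) hA, withDensity_apply _ hA', withDensity_apply _ hA,
      ← lintegral_indicator hA', ← lintegral_indicator hA,
      ← lintegral_sub_right_eq_self (A.indicator w) x]
    exact lintegral_congr fun y => by rw [Set.indicator, Set.indicator, hw_sub]; rfl
  have hdensity : volume.withDensity w C = axisPotential C v :=
    withDensity_apply _ C.isClosed.measurableSet
  have hzero := measure_properCone_eq_zero_of_measurePreserving_sub hx (hC x hx hx0) hpres
    (hdensity.trans_ne hv)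
  rw [withDensity_apply_eq_zero hw_meas] at hzero
  refine hvol (measure_mono_null (fun y hy => ?_) hzero)
  exact ⟨(ENNReal.ofReal_pos.2 (exp_pos _)).ne', hy⟩

lemma exists_axisPotential_add_norm_sq_min (hC : ∀ x ∈ C, x ≠ 0 → -x ∉ C) :
    ∃ v : E, axisPotential C v ≠ ∞ ∧ ∀ w, axisPotential C v + ENNReal.ofReal (‖v‖ ^ 2 / 2) ≤
      axisPotential C w + ENNReal.ofReal (‖w‖ ^ 2 / 2) := by
  obtain ⟨v₀, hv₀⟩ := exists_inner_pos_of_neg_notMem hC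
  set Φ : E → ℝ≥0∞ := fun w => axisPotential C w + ENNReal.ofReal (‖w‖ ^ 2 / 2) with hΦ
  have hΦ_fin : Φ v₀ ≠ ∞ := by
    simp only [hΦ, axisPotential_eq_ofReal hv₀]
    exact ENNReal.add_ne_top.2 ⟨ENNReal.ofReal_ne_top, ENNReal.ofReal_ne_top⟩
  have hΦ_lsc : LowerSemicontinuous Φ := lowerSemicontinuous_axisPotential.add
    (ENNReal.continuous_ofReal.comp (by fun_prop)).lowerSemicontinuous
  have hΦ_nonneg : 0 ≤ (Φ v₀).toReal := ENNReal.toReal_nonneg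
  set R : ℝ := ‖v₀‖ + 2 * (Φ v₀).toReal + 1 with hR
  have hv₀_mem : v₀ ∈ Metric.closedBall (0 : E) R := by
    simp only [hR, mem_closedBall_zero_iff]
    linarith
  obtain ⟨v, -, hv⟩ := (hΦ_lsc.lowerSemicontinuousOn (Metric.closedBall 0 R)).exists_isMinOn
    ⟨v₀, hv₀_mem⟩ (isCompact_closedBall _ _)
  refine ⟨v, ne_top_of_le_ne_top hΦ_fin (le_self_add.trans (hv hv₀_mem)), fun w => ?_⟩
  by_cases hw : w ∈ Metric.closedBall (0 : E) R
  · exact hv hw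
  · rw [mem_closedBall_zero_iff, not_le] at hw
    calc Φ v ≤ Φ v₀ := hv hv₀_mem
      _ = ENNReal.ofReal (Φ v₀).toReal := (ENNReal.ofReal_toReal hΦ_fin).symm
      _ ≤ ENNReal.ofReal (‖w‖ ^ 2 / 2) :=
        ENNReal.ofReal_le_ofReal (by nlinarith [norm_nonneg v₀])
      _ ≤ Φ w := le_add_self

lemma hasDerivAt_setIntegral_exp_inner {v : E} (hv : ∀ x ∈ C, x ≠ 0 → 0 < ⟪v, x⟫) (z : E) :
    HasDerivAt (fun t : ℝ => ∫ x in C, exp (-⟪v + t • z, x⟫ ^ 2 / 2))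
      (-∫ x in C, ⟪v, x⟫ * ⟪z, x⟫ * exp (-⟪v, x⟫ ^ 2 / 2)) 0 := by
  obtain ⟨δ, hδ, hδ_le⟩ := exists_pos_mul_norm_le_inner C hv
  have hnhds : ∀ᶠ t : ℝ in 𝓝 0, |t| < 1 ∧ |t| * ‖z‖ ≤ δ / 2 :=
    (continuous_abs.tendsto' (0 : ℝ) 0 abs_zero).eventually_lt_const one_pos |>.and
      (eventually_abs_mul_le (half_pos hδ) ‖z‖)
  have hderiv := hasDerivAt_integral_of_dominated_loc_of_deriv_le
    (μ := volume.restrict (C : Set E))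
    (F := fun (t : ℝ) x => exp (-⟪v + t • z, x⟫ ^ 2 / 2))
    (F' := fun (t : ℝ) x => -(⟪v + t • z, x⟫ * ⟪z, x⟫ * exp (-⟪v + t • z, x⟫ ^ 2 / 2)))
    (bound := fun x => (‖v‖ + ‖z‖) * ‖z‖ * ((1 + ‖x‖ ^ 2) * exp (-(δ ^ 2 / 8) * ‖x‖ ^ 2)))
    hnhds (Eventually.of_forall fun t => by fun_prop)
    (by simpa [IntegrableOn] using integrableOn_exp_neg_inner_sq hv) (by fun_prop) ?_
    ((integrable_one_add_norm_sq_mul_exp (by positivity)).const_mul _).integrableOn ?_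
  · simpa only [zero_smul, add_zero, integral_neg] using hderiv.2
  · filter_upwards [ae_restrict_mem C.isClosed.measurableSet] with x hx t ht
    rw [norm_neg, Real.norm_eq_abs]
    exact abs_inner_mul_inner_mul_exp_le hδ (hδ_le x hx) ht.1 ht.2
  · refine Eventually.of_forall fun x t _ => ?_
    have hinner : HasDerivAt (fun t : ℝ => ⟪v + t • z, x⟫) ⟪z, x⟫ t := by
      simp only [inner_add_left, real_inner_smul_left]
      simpa using ((hasDerivAt_id t).mul_const ⟪z, x⟫).const_add ⟪v, x⟫
    convert! ((hinner.pow 2).neg.div_const 2).exp using 1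
    simp
    ring

lemma setIntegral_eq_inner_of_isMin {v : E} (hv : ∀ x ∈ C, x ≠ 0 → 0 < ⟪v, x⟫)
    (hmin : ∀ w, axisPotential C v + ENNReal.ofReal (‖v‖ ^ 2 / 2) ≤
      axisPotential C w + ENNReal.ofReal (‖w‖ ^ 2 / 2)) (z : E) :
    ∫ x in C, ⟪v, x⟫ * ⟪z, x⟫ * exp (-⟪v, x⟫ ^ 2 / 2) = ⟪v, z⟫ := by
  have hnorm : HasDerivAt (fun t : ℝ => ‖v + t • z‖ ^ 2 / 2) ⟪v, z⟫ 0 := by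
    have hline : HasDerivAt (fun t : ℝ => v + t • z) z 0 := by
      simpa using ((hasDerivAt_id (0 : ℝ)).smul_const z).const_add v
    convert! hline.norm_sq.div_const 2 using 1
    simp
  have hlocalMin : IsLocalMin (fun t : ℝ => (∫ x in C, exp (-⟪v + t • z, x⟫ ^ 2 / 2)) +
      ‖v + t • z‖ ^ 2 / 2) 0 := by
    obtain ⟨δ, hδ, hδ_le⟩ := exists_pos_mul_norm_le_inner C hv
    filter_upwards [eventually_abs_mul_le (half_pos hδ) ‖z‖] with t ht
    have hpos : ∀ x ∈ C, x ≠ 0 → 0 < ⟪v + t • z, x⟫ := fun x hx hx0 =>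
      (mul_pos (half_pos hδ) (norm_pos_iff.2 hx0)).trans_le
        (half_mul_norm_le_inner_add_smul (hδ_le x hx) ht)
    have hnonneg : ∀ w : E, 0 ≤ ∫ x in C, exp (-⟪w, x⟫ ^ 2 / 2) := fun w =>
      integral_nonneg fun x => (exp_pos _).le
    have hle := hmin (v + t • z)
    rw [axisPotential_eq_ofReal hv, axisPotential_eq_ofReal hpos,
      ← ENNReal.ofReal_add (hnonneg _) (by positivity),
      ← ENNReal.ofReal_add (hnonneg _) (by positivity),
      ENNReal.ofReal_le_ofReal_iff (add_nonneg (hnonneg _) (by positivity))] at hle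
    simpa using hle
  have hzero := hlocalMin.hasDerivAt_eq_zero ((hasDerivAt_setIntegral_exp_inner hv z).add hnorm)
  linarith

/- By stationarity, `⟪v, y⟫` is the integral of a function that is nonnegative on `C` whenever `y`
lies in the dual cone, so `v` lies in the interior of the bidual cone `C`. -/
lemma mem_interior_of_setIntegral_eq_inner (hC : (interior (C : Set E)).Nonempty) {v : E}
    (hv : ∀ x ∈ C, x ≠ 0 → 0 < ⟪v, x⟫)
    (hstat : ∀ z, ∫ x in C, ⟪v, x⟫ * ⟪z, x⟫ * exp (-⟪v, x⟫ ^ 2 / 2) = ⟪v, z⟫) :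
    v ∈ interior (C : Set E) := by
  rw [← ProperCone.innerDual_innerDual C, mem_interior_innerDual_iff]
  intro y hy hy0
  have hy_pos : ∀ x ∈ interior (C : Set E), 0 < ⟪y, x⟫ := fun x hx => by
    rw [← ProperCone.innerDual_innerDual C, mem_interior_innerDual_iff] at hx
    exact real_inner_comm x y ▸ hx y hy hy0
  have hx_ne : ∀ x ∈ interior (C : Set E), x ≠ 0 := by
    rintro _ hx rfl
    exact (hy_pos 0 hx).ne' (inner_zero_right y)
  have hv_nonneg : ∀ x ∈ C, 0 ≤ ⟪v, x⟫ := fun x hx => by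
    rcases eq_or_ne x 0 with rfl | hx0
    · exact (inner_zero_right v).ge
    · exact (hv x hx hx0).le
  rw [← hstat y, setIntegral_pos_iff_support_of_nonneg_ae _
    (integrableOn_inner_mul_inner_mul_exp hv y)]
  · exact (isOpen_interior.measure_pos volume hC).trans_le (measure_mono fun x hx =>
      ⟨(mul_pos (mul_pos (hv x (interior_subset hx) (hx_ne x hx)) (hy_pos x hx)) (exp_pos _)).ne',
        interior_subset hx⟩)
  · filter_upwards [ae_restrict_mem C.isClosed.measurableSet] with x hx
    have hyx : 0 ≤ ⟪x, y⟫ := hy hx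
    rw [real_inner_comm] at hyx
    exact mul_nonneg (mul_nonneg (hv_nonneg x hx) hyx) (exp_pos _).le

lemma interior_nonempty_of_volume_ne_zero {A : Set E} (hA : Convex ℝ A) (hA_closed : IsClosed A)
    (hvol : volume A ≠ 0) : (interior A).Nonempty := by
  by_contra! hempty
  have hfrontier := hA.addHaar_frontier volume
  rw [hA_closed.frontier_eq, hempty, Set.sdiff_empty] at hfrontier
  exact hvol hfrontier

lemma setIntegral_properCone_comp_smul {f : E → ℝ} {r : ℝ} (hr : 0 < r) :
    ∫ x in (C : Set E), f (r • x) = (r ^ Module.finrank ℝ E)⁻¹ * ∫ x in (C : Set E), f x := by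
  rw [Measure.setIntegral_comp_smul_of_pos _ _ _ hr, smul_properCone_eq hr, smul_eq_mul]

lemma IsAxis.isCentredAxis_normalize {v : E} (hv : IsAxis C v) (hv0 : v ≠ 0)
    (hzero : ∀ z, ⟪v, z⟫ = 0 → ∫ x in C, ⟪v, x⟫ * ⟪z, x⟫ * exp (-⟪v, x⟫ ^ 2 / 2) = 0) :
    IsCentredAxis C (‖v‖⁻¹ • v) where
  mem_interior := smul_mem_interior_properCone (inv_pos.2 (norm_pos_iff.2 hv0)) hv.mem_interior
  inner_pos x hx hx0 := by
    rw [real_inner_smul_left]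
    exact mul_pos (inv_pos.2 (norm_pos_iff.2 hv0)) (hv.inner_pos x hx hx0)
  norm_eq_one := norm_smul_inv_norm hv0
  integral_eq_zero z hz := by
    have hr : 0 < ‖v‖ := norm_pos_iff.2 hv0
    rw [real_inner_smul_left, mul_eq_zero_iff_left (inv_pos.2 hr).ne'] at hz
    have hscale := setIntegral_properCone_comp_smul (C := C) (f := fun x =>
      ⟪‖v‖⁻¹ • v, x⟫ * ⟪z, x⟫ * exp (-⟪‖v‖⁻¹ • v, x⟫ ^ 2 / 2)) hr
    have hinner : ∀ x, ⟪‖v‖⁻¹ • v, ‖v‖ • x⟫ = ⟪v, x⟫ := fun x => by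
      rw [real_inner_smul_left, real_inner_smul_right, inv_mul_cancel_left₀ hr.ne']
    simp only [hinner, real_inner_smul_right _ _ ‖v‖, mul_left_comm _ ‖v‖, mul_assoc ‖v‖,
      integral_const_mul, hzero z hz, mul_zero] at hscale
    exact (mul_eq_zero_iff_left (inv_pos.2 (pow_pos hr _)).ne').1 hscale.symm

theorem exists_isCentredAxis [Nontrivial E] (hC : ∀ x ∈ C, x ≠ 0 → -x ∉ C)
    (hvol : volume (C : Set E) ≠ 0) : ∃ e, IsCentredAxis C e := by
  obtain ⟨v, hv, hmin⟩ : ∃ v : E, (∀ x ∈ C, x ≠ 0 → 0 < ⟪v, x⟫) ∧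
      ∀ w, axisPotential C v + ENNReal.ofReal (‖v‖ ^ 2 / 2) ≤
        axisPotential C w + ENNReal.ofReal (‖w‖ ^ 2 / 2) := by
    obtain ⟨v, hv, hmin⟩ := exists_axisPotential_add_norm_sq_min hC
    rcases inner_pos_or_inner_neg_of_inner_ne_zero hC fun x hx hx0 =>
      inner_ne_zero_of_axisPotential_ne_top hC hvol hv hx hx0 with hpos | hneg
    · exact ⟨v, hpos, hmin⟩
    · exact ⟨-v, hneg, by simpa only [axisPotential_neg, norm_neg] using hmin⟩
  have hstat := setIntegral_eq_inner_of_isMin hv hmin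
  have hv_mem := mem_interior_of_setIntegral_eq_inner
    (interior_nonempty_of_volume_ne_zero C.convex C.isClosed hvol) hv hstat
  have hv0 : v ≠ 0 := by
    rintro rfl
    refine hvol (measure_mono_null (t := {0}) (fun x hx => ?_) (measure_singleton 0))
    by_contra hx0
    exact (hv x hx hx0).ne' (inner_zero_left x)
  exact ⟨_, IsAxis.isCentredAxis_normalize ⟨hv_mem, hv⟩ hv0 fun z hz => (hstat z).trans hz⟩

end ChoiceOfAxis

section HausdorffMeasureOnSphere

variable {E : Type*} [NormedAddCommGroup E] [InnerProductSpace ℝ E] [FiniteDimensional ℝ E]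
  [MeasurableSpace E] [BorelSpace E]

/-- Near `x` the sphere is the graph of `y ↦ √(1 - ‖y‖²)` over the hyperplane orthogonal to `x`. -/
lemma finiteAtFilter_hausdorffMeasure_nhdsWithin_sphere {n : ℕ}
    (hn : Module.finrank ℝ E = n + 1) {x : E} (hx : ‖x‖ = 1) :
    (μH[n] : Measure E).FiniteAtFilter (𝓝[Metric.sphere 0 1] x) := by
  obtain ⟨Φ, hΦ⟩ := exists_axialSum_linearIsometryEquiv (F := EuclideanSpace ℝ (Fin n))
    (by rw [hn, finrank_euclideanSpace_fin]) hx
  set g : EuclideanSpace ℝ (Fin n) → E := fun y => Φ (WithLp.toLp 2 (√(1 - ‖y‖ ^ 2), y)) with hg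
  have hg_contDiff : ContDiffAt ℝ 1 g 0 := by
    have hsqrt : ContDiffAt ℝ 1 (fun y : EuclideanSpace ℝ (Fin n) => √(1 - ‖y‖ ^ 2)) 0 :=
      (contDiffAt_const.sub (contDiff_norm_sq ℝ).contDiffAt).sqrt (by simp)
    exact Φ.contDiff.contDiffAt.comp _
      ((WithLp.prodContinuousLinearEquiv 2 ℝ ℝ _).symm.contDiff.contDiffAt.comp _
        (hsqrt.prodMk contDiffAt_id))
  obtain ⟨K, t, ht, hLip⟩ := hg_contDiff.exists_lipschitzOnWith
  let V : Set (AxialSum (EuclideanSpace ℝ (Fin n))) :=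
    {w | 0 < w.fst ∧ w.snd ∈ t ∩ Metric.ball 0 1}
  have hV_mem : Φ.symm ⁻¹' V ∈ 𝓝 x := by
    refine Φ.symm.continuous.continuousAt.preimage_mem_nhds ?_
    rw [← hΦ, Φ.symm_apply_apply]
    exact ((WithLp.fstL 2 ℝ ℝ _).continuous.continuousAt.eventually (lt_mem_nhds one_pos)).and
      ((WithLp.sndL 2 ℝ ℝ _).continuous.continuousAt.eventually
        (inter_mem ht (Metric.ball_mem_nhds 0 one_pos)))
  refine ⟨_, inter_mem_nhdsWithin _ hV_mem, ?_⟩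
  have hsub : Metric.sphere 0 1 ∩ Φ.symm ⁻¹' V ⊆ g '' (t ∩ Metric.ball 0 1) := by
    rintro z ⟨hz, hz_fst, hz_snd⟩
    obtain ⟨⟨s, y⟩, rfl⟩ := Φ.surjective.comp (WithLp.toLp_surjective 2) z
    simp only [Function.comp_apply, Φ.symm_apply_apply] at hz_fst hz_snd
    rw [mem_sphere_zero_iff_norm, Function.comp_apply, Φ.norm_map,
      ← sq_eq_sq₀ (norm_nonneg _) zero_le_one, norm_sq_axialSum] at hz
    refine ⟨y, hz_snd, ?_⟩
    simp only [hg, Function.comp_apply]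
    rw [show 1 - ‖y‖ ^ 2 = s ^ 2 by linarith, sqrt_sq (show 0 ≤ s from hz_fst.le)]
  have : (μH[n] : Measure (EuclideanSpace ℝ (Fin n))).IsAddHaarMeasure := by
    simpa using isAddHaarMeasure_hausdorffMeasure (E := EuclideanSpace ℝ (Fin n))
  refine (measure_mono hsub).trans_lt
    (((hLip.mono Set.inter_subset_left).hausdorffMeasure_image_le n.cast_nonneg).trans_lt ?_)
  exact ENNReal.mul_lt_top (by simp)
    ((measure_mono Set.inter_subset_right).trans_lt measure_ball_lt_top)

theorem hausdorffMeasure_sphere_ne_top {n : ℕ} (hn : Module.finrank ℝ E = n + 1) :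
    μH[n] (Metric.sphere (0 : E) 1) ≠ ∞ :=
  ((isCompact_sphere (0 : E) 1).measure_lt_top_of_nhdsWithin fun _ hx =>
    finiteAtFilter_hausdorffMeasure_nhdsWithin_sphere hn (mem_sphere_zero_iff_norm.1 hx)).ne

/-- The orthogonal projection to a hyperplane maps the sphere onto the unit ball. -/
theorem hausdorffMeasure_sphere_ne_zero {n : ℕ} (hn : Module.finrank ℝ E = n + 1) :
    μH[n] (Metric.sphere (0 : E) 1) ≠ 0 := by
  obtain ⟨Φ⟩ := exists_linearIsometryEquiv_of_finrank_eq
    (E := E) (F := AxialSum (EuclideanSpace ℝ (Fin n)))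
    (by rw [hn, finrank_axialSum, finrank_euclideanSpace_fin])
  have hLip : LipschitzWith 1 fun z => (Φ z).snd :=
    LipschitzWith.of_dist_le_mul fun z w => by
      rw [NNReal.coe_one, one_mul, dist_eq_norm, dist_eq_norm, ← WithLp.sub_snd, ← map_sub]
      exact (WithLp.norm_snd_le _ _).trans (Φ.norm_map _).le
  have hsub : Metric.ball 0 1 ⊆ (fun z => (Φ z).snd) '' Metric.sphere 0 1 := by
    intro y hy
    refine ⟨Φ.symm (WithLp.toLp 2 (√(1 - ‖y‖ ^ 2), y)), ?_, by simp⟩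
    rw [mem_ball_zero_iff] at hy
    rw [mem_sphere_zero_iff_norm, Φ.symm.norm_map, ← sq_eq_sq₀ (norm_nonneg _) zero_le_one,
      norm_sq_axialSum, sq_sqrt (by nlinarith [norm_nonneg y])]
    ring
  have : (μH[n] : Measure (EuclideanSpace ℝ (Fin n))).IsAddHaarMeasure := by
    simpa using isAddHaarMeasure_hausdorffMeasure (E := EuclideanSpace ℝ (Fin n))
  intro h0
  have hle := hLip.hausdorffMeasure_image_le n.cast_nonneg (Metric.sphere 0 1)
  rw [h0, mul_zero, nonpos_iff_eq_zero] at hle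
  exact (Metric.measure_ball_pos μH[n] _ one_pos).ne' (measure_mono_null hsub hle)

omit [FiniteDimensional ℝ E] in
lemma map_hausdorffMeasure_restrict_sphere {s : ℝ} (T : E ≃ₗᵢ[ℝ] E) :
    ((μH[s]).restrict (Metric.sphere (0 : E) 1)).map T =
      (μH[s]).restrict (Metric.sphere (0 : E) 1) := by
  have hT : Measurable T := T.continuous.measurable
  ext A hA
  rw [Measure.map_apply hT hA, Measure.restrict_apply (hT hA), Measure.restrict_apply hA,
    ← T.toIsometryEquiv.hausdorffMeasure_preimage s (A ∩ _)]
  congr 1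
  ext x
  simp

theorem hausdorffMeasure_restrict_sphere_eq_smul {n : ℕ} (hn : Module.finrank ℝ E = n + 1) :
    (μH[n]).restrict (Metric.sphere (0 : E) 1) =
      μH[n] (Metric.sphere (0 : E) 1) • sphereProb E := by
  have : Nontrivial E := Module.nontrivial_of_finrank_eq_succ hn
  have : IsFiniteMeasure ((μH[n]).restrict (Metric.sphere (0 : E) 1)) :=
    ⟨by simpa using (hausdorffMeasure_sphere_ne_top hn).lt_top⟩
  simpa using smul_eq_smul_of_map_linearIsometryEquiv_eq
    ((ae_restrict_mem Metric.isClosed_sphere.measurableSet).mono fun x hx => by simpa using hx)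
    ae_norm_eq_one_sphereProb map_hausdorffMeasure_restrict_sphere (map_sphereProb (E := E))

end HausdorffMeasureOnSphere

section DfunProperties

variable {d : ℕ}

lemma hasDerivAt_Dfun (x : ℝ) : HasDerivAt (Dfun d) (sin x ^ (d - 1)) x := by
  have hcont : Continuous fun t : ℝ => sin t ^ (d - 1) := by fun_prop
  exact intervalIntegral.integral_hasDerivAt_right (hcont.intervalIntegrable _ _)
    (hcont.stronglyMeasurableAtFilter _ _) hcont.continuousAt

lemma continuous_Dfun : Continuous (Dfun d) :=
  continuous_iff_continuousAt.2 fun x => (hasDerivAt_Dfun x).continuousAt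

lemma Dfun_zero : Dfun d 0 = 0 := intervalIntegral.integral_same

lemma Dfun_pi : Dfun d π = 2 * Dfun d (π / 2) := by
  have hcont : Continuous fun t : ℝ => sin t ^ (d - 1) := by fun_prop
  have hreflect : ∫ t in (π / 2)..π, sin t ^ (d - 1) = Dfun d (π / 2) := by
    simpa [Dfun, sub_half] using (intervalIntegral.integral_comp_sub_left (a := 0) (b := π / 2)
      (fun t : ℝ => sin t ^ (d - 1)) π).symm
  rw [Dfun, ← intervalIntegral.integral_add_adjacent_intervals (b := π / 2)
    (hcont.intervalIntegrable _ _) (hcont.intervalIntegrable _ _), hreflect, ← Dfun, two_mul]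

lemma strictMonoOn_Dfun : StrictMonoOn (Dfun d) (Set.Icc 0 π) := by
  refine strictMonoOn_of_deriv_pos (convex_Icc _ _) continuous_Dfun.continuousOn fun x hx => ?_
  rw [interior_Icc] at hx
  rw [(hasDerivAt_Dfun x).deriv]
  exact pow_pos (sin_pos_of_mem_Ioo hx) _

lemma Dfun_nonneg {x : ℝ} (hx : x ∈ Set.Icc 0 π) : 0 ≤ Dfun d x :=
  Dfun_zero (d := d) ▸ strictMonoOn_Dfun.monotoneOn ⟨le_rfl, pi_pos.le⟩ hx hx.1

lemma Dfun_pos {x : ℝ} (hx : x ∈ Set.Ioc 0 π) : 0 < Dfun d x :=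
  Dfun_zero (d := d) ▸ strictMonoOn_Dfun ⟨le_rfl, pi_pos.le⟩ ⟨hx.1.le, hx.2⟩ hx.1

lemma Dfun_le_one (hd : 2 ≤ d) {x : ℝ} (hx : x ∈ Set.Icc 0 (π / 2)) : Dfun d x ≤ 1 := by
  have hle : Dfun d x ≤ ∫ t in (0 : ℝ)..x, sin t := by
    refine intervalIntegral.integral_mono_on hx.1 (Continuous.intervalIntegrable (by fun_prop) _ _)
      (Continuous.intervalIntegrable (by fun_prop) _ _) fun t ht => ?_
    have hsin : 0 ≤ sin t :=
      sin_nonneg_of_nonneg_of_le_pi ht.1 (by linarith [ht.2, hx.2, pi_pos])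
    exact pow_le_of_le_one hsin (sin_le_one t) (by omega)
  rw [integral_sin, cos_zero] at hle
  linarith [cos_nonneg_of_neg_pi_div_two_le_of_le (by linarith [hx.1, pi_pos]) hx.2]

end DfunProperties

section AxialCoordinates

variable {E E' : Type*} [NormedAddCommGroup E] [InnerProductSpace ℝ E]
  [NormedAddCommGroup E'] [InnerProductSpace ℝ E'] {C : ProperCone ℝ E'} {Φ : E ≃ₗᵢ[ℝ] E'} {e : E}

lemma innerDual_comap_linearIsometryEquiv [CompleteSpace E] [CompleteSpace E']
    (C : ProperCone ℝ E') (Φ : E ≃ₗᵢ[ℝ] E') :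
    ProperCone.innerDual ((C.comap (Φ : E →L[ℝ] E')) : Set E) =
      (ProperCone.innerDual (C : Set E')).comap (Φ : E →L[ℝ] E') := by
  ext x
  refine ⟨fun h y hy => ?_, fun h y hy => ?_⟩
  · simpa [Φ.symm.inner_map_eq_flip] using h (x := Φ.symm y) (by simpa using hy)
  · simpa using h hy

lemma IsAxis.comap (hC : IsAxis C (Φ e)) : IsAxis (C.comap (Φ : E →L[ℝ] E')) e where
  mem_interior := by
    have h : Φ ⁻¹' interior C = interior (Φ ⁻¹' C) := Φ.toHomeomorph.preimage_interior _
    exact h ▸ hC.mem_interior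
  inner_pos x hx hx0 := by
    simpa using hC.inner_pos (Φ x) hx (by simpa using hx0)

variable [FiniteDimensional ℝ E] [MeasurableSpace E] [BorelSpace E]
  [FiniteDimensional ℝ E'] [MeasurableSpace E'] [BorelSpace E']

lemma sphereProb_comap_linearIsometryEquiv (C : ProperCone ℝ E') (Φ : E ≃ₗᵢ[ℝ] E') :
    sphereProb E (C.comap (Φ : E →L[ℝ] E')) = sphereProb E' C := by
  rw [← map_sphereProb Φ, Measure.map_apply Φ.continuous.measurable C.isClosed.measurableSet]
  rfl

lemma IsCentredAxis.comap (hC : IsCentredAxis C (Φ e)) :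
    IsCentredAxis (C.comap (Φ : E →L[ℝ] E')) e where
  toIsAxis := hC.toIsAxis.comap
  norm_eq_one := by simpa using hC.norm_eq_one
  integral_eq_zero z hz := by
    have h := hC.integral_eq_zero (Φ z) (by simpa using hz)
    rw [← Φ.measurePreserving.setIntegral_preimage_emb Φ.toHomeomorph.measurableEmbedding] at h
    simpa using h

end AxialCoordinates

section Deviation

variable {F : Type*} [NormedAddCommGroup F] [InnerProductSpace ℝ F] {d : ℕ} {e : Esp d}
  {Φ : AxialSum F ≃ₗᵢ[ℝ] Esp d}

lemma equator_eq_image_sphere (hΦ : Φ (WithLp.toLp 2 (1, 0)) = e) :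
    equator e = (fun u => Φ (WithLp.toLp 2 (0, u))) '' Metric.sphere (0 : F) 1 := by
  have hnorm : ∀ y : F, ‖Φ (WithLp.toLp 2 (0, y))‖ = ‖y‖ := fun y => by simp
  ext x
  constructor
  · rintro ⟨hx, hx_inner⟩
    obtain ⟨⟨s, y⟩, rfl⟩ := Φ.surjective.comp (WithLp.toLp_surjective 2) x
    obtain rfl : s = 0 := by simpa [← hΦ, inner_axialSum] using hx_inner
    exact ⟨y, by simpa [uSphere, hnorm] using hx, rfl⟩
  · rintro ⟨y, hy, rfl⟩
    exact ⟨by simpa [uSphere, hnorm] using hy, by simp [← hΦ]⟩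

lemma IsAxis.sphRadial_eq_coneAngle {C : ProperCone ℝ (Esp d)} (hC : IsAxis C e)
    (hΦ : Φ (WithLp.toLp 2 (1, 0)) = e) {u : F} (hu : ‖u‖ = 1) :
    sphRadial ((C : Set (Esp d)) ∩ uSphere d) e (Φ (WithLp.toLp 2 (0, u))) =
      coneAngle (C.comap (Φ : AxialSum F →L[ℝ] Esp d)) u := by
  have hC' : IsAxis (C.comap (Φ : AxialSum F →L[ℝ] Esp d)) (WithLp.toLp 2 (1, 0)) :=
    IsAxis.comap (hΦ.symm ▸ hC)
  obtain ⟨hpos, hlt⟩ := hC'.coneAngle_mem_Ioo hu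
  have hmem : ∀ t : ℝ, cos t • e + sin t • Φ (WithLp.toLp 2 (0, u)) ∈
      (C : Set (Esp d)) ∩ uSphere d ↔
      WithLp.toLp 2 (cos t, sin t • u) ∈ C.comap (Φ : AxialSum F →L[ℝ] Esp d) := by
    intro t
    have hpoint : cos t • e + sin t • Φ (WithLp.toLp 2 (0, u)) =
        Φ (WithLp.toLp 2 (cos t, sin t • u)) := by
      simp [← hΦ, ← map_smul, ← map_add, ← WithLp.toLp_smul, ← WithLp.toLp_add]
    have hnorm : ‖(WithLp.toLp 2 (cos t, sin t • u) : AxialSum F)‖ = 1 := by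
      rw [← sq_eq_sq₀ (norm_nonneg _) zero_le_one, norm_sq_axialSum, norm_smul, hu]
      simp
    rw [hpoint]
    simp [uSphere, hnorm]
  have hset : {t : ℝ | 0 ≤ t ∧ t ≤ π / 2 ∧ cos t • e + sin t • Φ (WithLp.toLp 2 (0, u)) ∈
      (C : Set (Esp d)) ∩ uSphere d} =
      Set.Icc 0 (coneAngle (C.comap (Φ : AxialSum F →L[ℝ] Esp d)) u) := by
    ext t
    simp only [hmem, Set.mem_ofPred_eq, Set.mem_Icc]
    rcases eq_or_ne t 0 with rfl | ht
    · simpa [pi_pos.le, hpos.le, pi_div_two_pos.le] using interior_subset hC'.mem_interior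
    · refine ⟨fun ⟨h0, _, h2⟩ => ⟨h0, (hC'.mem_iff_le_coneAngle ⟨h0.lt_of_ne' ht, ?_⟩).1 h2⟩,
        fun ⟨h0, h1⟩ => ⟨h0, h1.trans hlt.le,
          (hC'.mem_iff_le_coneAngle ⟨h0.lt_of_ne' ht, ?_⟩).2 h1⟩⟩ <;> linarith [pi_pos]
  rw [sphRadial, hset, csSup_Icc hpos.le]

variable [FiniteDimensional ℝ F] [MeasurableSpace F] [BorelSpace F]

theorem sigma0_eq_map_sphereProb [Nontrivial F] (hΦ : Φ (WithLp.toLp 2 (1, 0)) = e) :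
    sigma0 d e = (sphereProb F).map fun u => Φ (WithLp.toLp 2 (0, u)) := by
  have hrank : Module.finrank ℝ F = d := by
    simpa [finrank_axialSum] using Φ.toLinearEquiv.finrank_eq
  obtain ⟨n, rfl⟩ : ∃ n, d = n + 1 := Nat.exists_eq_succ_of_ne_zero
    (hrank ▸ Module.finrank_pos.ne')
  have hiso : Isometry fun u : F => Φ (WithLp.toLp 2 (0, u)) :=
    Φ.isometry.comp (Isometry.of_dist_eq fun u v => by simp)
  have hmap : ((μH[(n : ℝ)]).restrict (Metric.sphere (0 : F) 1)).map
      (fun u => Φ (WithLp.toLp 2 (0, u))) = (μH[(n : ℝ)]).restrict (equator e) := by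
    rw [equator_eq_image_sphere hΦ,
      ← Set.preimage_image_eq (Metric.sphere (0 : F) 1) hiso.injective,
      ← hiso.isClosedEmbedding.measurableEmbedding.restrict_map,
      hiso.map_hausdorffMeasure (.inl n.cast_nonneg),
      Measure.restrict_restrict_of_subset (Set.image_subset_range _ _),
      Set.preimage_image_eq _ hiso.injective]
  rw [sigma0, Nat.cast_add_one, add_sub_cancel_right, ← hmap, equator_eq_image_sphere hΦ,
    hiso.hausdorffMeasure_image (.inl n.cast_nonneg),
    hausdorffMeasure_restrict_sphere_eq_smul hrank, Measure.map_smul, smul_smul,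
    ENNReal.inv_mul_cancel (hausdorffMeasure_sphere_ne_zero hrank)
      (hausdorffMeasure_sphere_ne_top hrank), one_smul]

lemma IsAxis.L2dev_sq_eq_variance [Nontrivial F] {C : ProperCone ℝ (Esp d)} (hC : IsAxis C e)
    (hΦ : Φ (WithLp.toLp 2 (1, 0)) = e) :
    L2dev d ((C : Set (Esp d)) ∩ uSphere d) e ^ 2 = ProbabilityTheory.variance
      (fun u => Dfun d (coneAngle (C.comap (Φ : AxialSum F →L[ℝ] Esp d)) u)) (sphereProb F) := by
  have hC' : IsAxis (C.comap (Φ : AxialSum F →L[ℝ] Esp d)) (WithLp.toLp 2 (1, 0)) :=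
    IsAxis.comap (hΦ.symm ▸ hC)
  have hemb : MeasurableEmbedding fun u : F => Φ (WithLp.toLp 2 (0, u)) :=
    (Φ.isometry.comp (Isometry.of_dist_eq fun u v => by simp)).isClosedEmbedding.measurableEmbedding
  have hmeas : AEMeasurable (fun u => Dfun d
      (coneAngle (C.comap (Φ : AxialSum F →L[ℝ] Esp d)) u)) (sphereProb F) :=
    (continuous_Dfun.measurable.comp hC'.measurable_coneAngle).aemeasurable
  have hae : ∀ᵐ u ∂sphereProb F, Dfun d (sphRadial ((C : Set (Esp d)) ∩ uSphere d) e
      (Φ (WithLp.toLp 2 (0, u)))) =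
      Dfun d (coneAngle (C.comap (Φ : AxialSum F →L[ℝ] Esp d)) u) :=
    ae_norm_eq_one_sphereProb.mono fun u hu => by rw [hC.sphRadial_eq_coneAngle hΦ hu]
  rw [L2dev, sq_sqrt (integral_nonneg fun _ => sq_nonneg _), avgD, sigma0_eq_map_sphereProb hΦ,
    hemb.integral_map, hemb.integral_map, integral_congr_ae hae,
    ProbabilityTheory.variance_eq_integral hmeas]
  exact integral_congr_ae (hae.mono fun u hu => by simp only [hu])

lemma Delta2_nonneg (K : Set (Esp d)) : 0 ≤ Delta2 d K :=
  Real.sInf_nonneg (by rintro _ ⟨_, -, rfl⟩; exact sqrt_nonneg _)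

lemma Delta2_le_L2dev {K : Set (Esp d)} (he : e ∈ negIntPolar d K) : Delta2 d K ≤ L2dev d K e :=
  csInf_le ⟨0, by rintro _ ⟨_, -, rfl⟩; exact sqrt_nonneg _⟩ ⟨e, he, rfl⟩

theorem IsAxis.Delta2_sq_le_variance [Nontrivial F] {C : ProperCone ℝ (Esp d)} (hC : IsAxis C e)
    (hΦ : Φ (WithLp.toLp 2 (1, 0)) = e) :
    Delta2 d ((C : Set (Esp d)) ∩ uSphere d) ^ 2 ≤ ProbabilityTheory.variance
      (fun u => Dfun d (coneAngle (C.comap (Φ : AxialSum F →L[ℝ] Esp d)) u)) (sphereProb F) := by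
  have he : e ∈ negIntPolar d ((C : Set (Esp d)) ∩ uSphere d) :=
    ⟨by simp [uSphere, ← hΦ], fun x hx =>
      hC.inner_pos x hx.1 (ne_zero_of_mem_unit_sphere ⟨x, hx.2⟩)⟩
  rw [← hC.L2dev_sq_eq_variance hΦ]
  exact pow_le_pow_left₀ (Delta2_nonneg _) (Delta2_le_L2dev he) 2

end Deviation

section AngularBalls

variable {E : Type*} [NormedAddCommGroup E] [InnerProductSpace ℝ E] [FiniteDimensional ℝ E]
  [MeasurableSpace E] [BorelSpace E] {n : ℕ} {e : E} {a : ℝ}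

lemma measurable_angle (e : E) : Measurable fun x : E => InnerProductGeometry.angle x e := by
  unfold InnerProductGeometry.angle
  fun_prop

lemma measureReal_sphereProb_mul_Dfun_pi_of_angle (hn : Module.finrank ℝ E = n + 1) (hn0 : n ≠ 0)
    (he : ‖e‖ = 1) (ha : a ∈ Set.Icc 0 π) {A : Set E} (hA : MeasurableSet A)
    (hmem : ∀ x, ‖x‖ = 1 → InnerProductGeometry.angle x e ≠ a →
      (x ∈ A ↔ InnerProductGeometry.angle x e < a)) :
    (sphereProb E).real A * Dfun n π = Dfun n a := by
  have := NeZero.mk hn0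
  obtain ⟨Φ, hΦ⟩ := exists_axialSum_linearIsometryEquiv (F := EuclideanSpace ℝ (Fin n))
    (by simpa using hn) he
  have hpolar : ∀ u : EuclideanSpace ℝ (Fin n), ‖u‖ = 1 → ∀ θ ∈ Set.Ioo 0 π,
      ‖Φ (WithLp.toLp 2 (cos θ, sin θ • u))‖ = 1 ∧
      InnerProductGeometry.angle (Φ (WithLp.toLp 2 (cos θ, sin θ • u))) e = θ := by
    intro u hu θ hθ
    have hnorm : ‖Φ (WithLp.toLp 2 (cos θ, sin θ • u))‖ = 1 := by
      rw [Φ.norm_map, ← sq_eq_sq₀ (norm_nonneg _) zero_le_one, norm_sq_axialSum, norm_smul, hu]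
      simp
    refine ⟨hnorm, ?_⟩
    rw [InnerProductGeometry.angle, hnorm, he, ← hΦ, Φ.inner_map_map, inner_axialSum]
    simpa using arccos_cos hθ.1.le hθ.2.le
  have h := sphereProb_axialSum_mul_Dfun_pi (F := EuclideanSpace ℝ (Fin n)) (α := fun _ => a)
    (Φ.continuous.measurable hA) (fun _ _ => ha) fun u hu θ hθ hne => by
      obtain ⟨hnorm, hangle⟩ := hpolar u hu θ hθ
      simpa [hangle] using hmem _ hnorm (hangle.symm ▸ hne)
  rw [← Measure.map_apply Φ.continuous.measurable hA, map_sphereProb, lintegral_const,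
    measure_univ, mul_one, finrank_euclideanSpace_fin] at h
  simpa [Measure.real, ENNReal.toReal_mul, Dfun_nonneg ha, Dfun_nonneg ⟨pi_pos.le, le_rfl⟩]
    using congrArg ENNReal.toReal h

lemma geo_eq_angle {d : ℕ} {x y : Esp d} (hx : ‖x‖ = 1) (hy : ‖y‖ = 1) :
    geo x y = InnerProductGeometry.angle x y := by
  simp [geo, InnerProductGeometry.angle, hx, hy]

lemma measureReal_sphereProb_cap_mul_Dfun_pi {d : ℕ} (hd : d ≠ 0) {e : Esp d} (he : ‖e‖ = 1)
    (ha : a ∈ Set.Icc 0 π) : (sphereProb (Esp d)).real (cap e a) * Dfun d π = Dfun d a := by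
  have hclosed : IsClosed (cap e a) :=
    Metric.isClosed_sphere.inter (isClosed_le (f := fun x => geo x e)
      (continuous_arccos.comp (by fun_prop)) continuous_const)
  refine measureReal_sphereProb_mul_Dfun_pi_of_angle (by simp) hd he ha hclosed.measurableSet
    fun x hx hne => ?_
  rw [← hne.le_iff_lt, ← geo_eq_angle hx he]
  exact and_iff_right (by simpa [uSphere] using hx)

end AngularBalls

section HittingHyperplanes

variable {E : Type*} [NormedAddCommGroup E] [InnerProductSpace ℝ E] {e : E} {a : ℝ}

/-- The normals of the hyperplanes through the origin that meet `K`. -/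
def hittingNormals (K : Set E) : Set E := {x | ∃ y ∈ K, ⟪x, y⟫ = 0}

lemma exists_mem_inter_sphere_inner_eq_zero [CompleteSpace E] {C : ProperCone ℝ E}
    (hC : ∀ x ∈ C, x ≠ 0 → -x ∉ C) {x : E} (hx : x ∉ ProperCone.innerDual (C : Set E))
    (hx_neg : -x ∉ ProperCone.innerDual (C : Set E)) :
    x ∈ hittingNormals ((C : Set E) ∩ Metric.sphere 0 1) := by
  simp only [ProperCone.mem_innerDual, not_forall, not_le, inner_neg_right, neg_neg_iff_pos,
    SetLike.mem_coe] at hx hx_neg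
  obtain ⟨y, hy, hxy⟩ := hx
  obtain ⟨z, hz, hxz⟩ := hx_neg
  set w := ⟪z, x⟫ • y + (-⟪y, x⟫) • z with hw
  have hz_mem : (-⟪y, x⟫) • z ∈ C := C.smul_mem hz (neg_nonneg.2 hxy.le)
  have hwC : w ∈ C := C.add_mem (C.smul_mem hy hxz.le) hz_mem
  have hxw : ⟪x, w⟫ = 0 := by
    rw [hw, inner_add_right, real_inner_smul_right, real_inner_smul_right, real_inner_comm y,
      real_inner_comm z]
    ring
  have hw0 : w ≠ 0 := by
    intro h0
    have hz0 : (-⟪y, x⟫) • z ≠ 0 :=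
      smul_ne_zero (neg_ne_zero.2 hxy.ne) (by rintro rfl; simp at hxz)
    refine hC _ hz_mem hz0 ?_
    rw [← eq_neg_of_add_eq_zero_left (hw ▸ h0)]
    exact C.smul_mem hy hxz.le
  refine ⟨‖w‖⁻¹ • w, ⟨C.smul_mem hwC (by positivity), by simp [norm_smul, hw0]⟩, ?_⟩
  rw [real_inner_smul_right, hxw, mul_zero]

lemma hittingNormals_subset_compl_angle_lt {K : Set E}
    (hK : ∀ y ∈ K, InnerProductGeometry.angle y e ≤ a) :
    hittingNormals K ⊆ {x | InnerProductGeometry.angle x e < π / 2 - a}ᶜ := by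
  rintro x ⟨y, hy, hxy⟩ hx
  have htriangle := InnerProductGeometry.angle_le_angle_add_angle x e y
  rw [InnerProductGeometry.inner_eq_zero_iff_angle_eq_pi_div_two] at hxy
  rw [hxy, InnerProductGeometry.angle_comm e] at htriangle
  linarith [hK y hy, Set.mem_ofPred_eq.mp hx]

variable [FiniteDimensional ℝ E] [MeasurableSpace E] [BorelSpace E]

/-- A hyperplane that misses a cone bounds a half-space containing it. -/
theorem one_le_measureReal_hittingNormals_add [Nontrivial E] {C : ProperCone ℝ E}
    (hC : ∀ x ∈ C, x ≠ 0 → -x ∉ C) :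
    1 ≤ (sphereProb E).real (hittingNormals ((C : Set E) ∩ Metric.sphere 0 1)) +
      2 * (sphereProb E).real (ProperCone.innerDual (C : Set E)) := by
  set P : Set E := (ProperCone.innerDual (C : Set E) : Set E)
  have hcover : Set.univ ⊆ hittingNormals ((C : Set E) ∩ Metric.sphere 0 1) ∪ (P ∪ -P) := by
    intro x _
    by_contra hx
    simp only [Set.mem_union, not_or] at hx
    exact hx.1 (exists_mem_inter_sphere_inner_eq_zero hC hx.2.1 hx.2.2)
  calc 1 = (sphereProb E).real Set.univ := probReal_univ.symm
    _ ≤ _ := measureReal_mono hcover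
    _ ≤ _ := measureReal_union_le _ _
    _ ≤ _ := add_le_add_right ((measureReal_union_le _ _).trans_eq
      (by rw [measureReal_sphereProb_neg, two_mul])) _

/-- Together with its negative, an angular ball of radius `π / 2 - a` around `e` misses the
normals of the hyperplanes that meet the angular ball of radius `a`. -/
theorem measureReal_hittingNormals_mul_Dfun_pi_le [Nontrivial E] {n : ℕ}
    (hn : Module.finrank ℝ E = n + 1) (hn0 : n ≠ 0) (he : ‖e‖ = 1)
    (ha : a ∈ Set.Icc 0 (π / 2)) {K : Set E}
    (hK : ∀ y ∈ K, InnerProductGeometry.angle y e ≤ a) :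
    (sphereProb E).real (hittingNormals K) * Dfun n π ≤ Dfun n π - 2 * Dfun n (π / 2 - a) := by
  set O : Set E := {x | InnerProductGeometry.angle x e < π / 2 - a}
  have hO : MeasurableSet O := measurable_angle e measurableSet_Iio
  have hball : (sphereProb E).real O * Dfun n π = Dfun n (π / 2 - a) :=
    measureReal_sphereProb_mul_Dfun_pi_of_angle hn hn0 he
      ⟨by linarith [ha.2], by linarith [ha.1, pi_pos]⟩ hO fun _ _ _ => Iff.rfl
  have hdisjoint : Disjoint O (-O) := by
    refine Set.disjoint_left.2 fun x hx hx' => ?_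
    rw [Set.mem_neg, Set.mem_ofPred_eq, InnerProductGeometry.angle_neg_left] at hx'
    linarith [Set.mem_ofPred_eq.mp hx, ha.1]
  have hsub : hittingNormals K ⊆ (O ∪ -O)ᶜ := by
    rw [Set.compl_union]
    have hmiss := hittingNormals_subset_compl_angle_lt hK
    exact Set.subset_inter hmiss fun x ⟨y, hy, hxy⟩ =>
      hmiss (a := -x) ⟨y, hy, by rw [inner_neg_left, hxy, neg_zero]⟩
  have hle : (sphereProb E).real (hittingNormals K) ≤ 1 - 2 * (sphereProb E).real O := by
    refine (measureReal_mono hsub).trans_eq ?_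
    rw [probReal_compl_eq_one_sub (hO.union hO.neg), measureReal_union hdisjoint hO.neg,
      measureReal_sphereProb_neg, two_mul]
  linarith [mul_le_mul_of_nonneg_right hle (Dfun_nonneg (d := n) ⟨pi_pos.le, le_rfl⟩)]

end HittingHyperplanes

section SphericalMeanWidth

variable {d : ℕ}

lemma sigmaMeas_eq_smul_sphereProb :
    sigmaMeas d = sigmaMeas d (uSphere d) • sphereProb (Esp d) := by
  rw [sigmaMeas, Measure.restrict_apply_self]
  exact hausdorffMeasure_restrict_sphere_eq_smul (by simp)

lemma omegaTot_pos : 0 < omegaTot d := by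
  have hrank : Module.finrank ℝ (Esp d) = d + 1 := by simp
  rw [omegaTot, sigmaMeas, Measure.restrict_apply_self]
  exact ENNReal.toReal_pos (hausdorffMeasure_sphere_ne_zero hrank)
    (hausdorffMeasure_sphere_ne_top hrank)

lemma toReal_sigmaMeas (A : Set (Esp d)) :
    (sigmaMeas d A).toReal = omegaTot d * (sphereProb (Esp d)).real A := by
  rw [sigmaMeas_eq_smul_sphereProb, Measure.smul_apply, smul_eq_mul, ENNReal.toReal_mul]
  rfl

lemma U1_eq (K : Set (Esp d)) : U1 d K = (sphereProb (Esp d)).real (hittingNormals K) / 2 := by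
  have := (omegaTot_pos (d := d)).ne'
  rw [U1, toReal_sigmaMeas, hittingNormals]
  field_simp

lemma U1_nonneg (K : Set (Esp d)) : 0 ≤ U1 d K := by
  rw [U1_eq]
  positivity

end SphericalMeanWidth

section TangentEstimates

lemma isMinOn_Ioo_of_hasDerivAt {f f' : ℝ → ℝ} {l r a : ℝ} (ha : a ∈ Set.Ioo l r)
    (hf : ∀ x ∈ Set.Ioo l r, HasDerivAt f (f' x) x)
    (hle : ∀ x ∈ Set.Ioo l r, x ≤ a → f' x ≤ 0) (hge : ∀ x ∈ Set.Ioo l r, a ≤ x → 0 ≤ f' x) :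
    IsMinOn f (Set.Ioo l r) a := by
  have hderiv : ∀ s ⊆ Set.Ioo l r, ContinuousOn f s ∧ ∀ x ∈ interior s,
      HasDerivWithinAt f (f' x) (interior s) x := fun s hs =>
    ⟨fun x hx => (hf x (hs hx)).continuousAt.continuousWithinAt,
      fun x hx => (hf x (hs (interior_subset hx))).hasDerivWithinAt⟩
  intro x hx
  rcases le_total x a with hxa | hxa
  · have hsub : Set.Icc x a ⊆ Set.Ioo l r := Set.Icc_subset_Ioo hx.1 ha.2
    obtain ⟨hcont, hder⟩ := hderiv _ hsub
    exact antitoneOn_of_hasDerivWithinAt_nonpos (convex_Icc x a) hcont hder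
      (fun y hy => hle y (hsub (interior_subset hy)) (interior_subset hy).2)
      ⟨le_rfl, hxa⟩ ⟨hxa, le_rfl⟩ hxa
  · have hsub : Set.Icc a x ⊆ Set.Ioo l r := Set.Icc_subset_Ioo ha.1 hx.2
    obtain ⟨hcont, hder⟩ := hderiv _ hsub
    exact monotoneOn_of_hasDerivWithinAt_nonneg (convex_Icc a x) hcont hder
      (fun y hy => hge y (hsub (interior_subset hy)) (interior_subset hy).1)
      ⟨le_rfl, hxa⟩ ⟨hxa, le_rfl⟩ hxa

/-- Here `ψ` is the derivative of `f` with respect to `g`, so the monotonicity hypothesis says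
that `f` is strongly convex as a function of `g`. -/
lemma quadratic_le_of_monotoneOn {f g g' ψ : ℝ → ℝ} {l r a c x : ℝ}
    (hg : ∀ y ∈ Set.Ioo l r, HasDerivAt g (g' y) y) (hg' : ∀ y ∈ Set.Ioo l r, 0 ≤ g' y)
    (hf : ∀ y ∈ Set.Ioo l r, HasDerivAt f (g' y * ψ y) y)
    (hψ : MonotoneOn (fun y => ψ y - 2 * c * g y) (Set.Ioo l r))
    (ha : a ∈ Set.Ioo l r) (hx : x ∈ Set.Ioo l r) :
    f a + ψ a * (g x - g a) + c * (g x - g a) ^ 2 ≤ f x := by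
  have hmin : IsMinOn (fun y => f y - (ψ a * (g y - g a) + c * (g y - g a) ^ 2))
      (Set.Ioo l r) a := by
    refine isMinOn_Ioo_of_hasDerivAt ha
      (f' := fun y => g' y * ((ψ y - 2 * c * g y) - (ψ a - 2 * c * g a))) (fun y hy => ?_)
      (fun y hy hya => mul_nonpos_of_nonneg_of_nonpos (hg' y hy) (sub_nonpos.2 (hψ hy ha hya)))
      (fun y hy hya => mul_nonneg (hg' y hy) (sub_nonneg.2 (hψ ha hy hya)))
    have hsub := (hg y hy).sub_const (g a)
    convert! (hf y hy).sub ((hsub.const_mul (ψ a)).add ((hsub.pow 2).const_mul c)) using 1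
    ring
  have hle : f a - (ψ a * (g a - g a) + c * (g a - g a) ^ 2) ≤
      f x - (ψ a * (g x - g a) + c * (g x - g a) ^ 2) := hmin hx
  rw [sub_self] at hle
  linarith

variable {d : ℕ} {a x : ℝ}

lemma sin_pos_and_cos_pos (hx : x ∈ Set.Ioo 0 (π / 2)) : 0 < sin x ∧ 0 < cos x :=
  ⟨sin_pos_of_pos_of_lt_pi hx.1 (by linarith [hx.2, pi_pos]),
    cos_pos_of_mem_Ioo ⟨by linarith [hx.1, pi_pos], hx.2⟩⟩

lemma hasDerivAt_tan_pow (hd : d ≠ 0) (hx : cos x ≠ 0) :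
    HasDerivAt (fun y => tan y ^ d) (sin x ^ (d - 1) * (d / cos x ^ (d + 1))) x := by
  convert! (hasDerivAt_tan hx).pow d using 1
  obtain ⟨m, rfl⟩ := Nat.exists_eq_add_one_of_ne_zero hd
  rw [tan_eq_sin_div_cos, Nat.add_sub_cancel, div_pow]
  field_simp
  ring

lemma hasDerivAt_div_cos_pow (hx : cos x ≠ 0) :
    HasDerivAt (fun y => d / cos y ^ (d + 1)) (d * (d + 1) * sin x / cos x ^ (d + 2)) x := by
  convert! (((hasDerivAt_cos x).pow (d + 1)).inv (pow_ne_zero _ hx)).const_mul (d : ℝ) using 1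
  simp only [Pi.pow_apply, Nat.add_sub_cancel]
  push_cast
  field_simp
  ring

lemma quadratic_le_tan_pow (hd : d ≠ 0) {c : ℝ}
    (hc : ∀ y ∈ Set.Ioo 0 (π / 2), 2 * c * (sin y ^ (d - 1) * cos y ^ (d + 2)) ≤
      d * (d + 1) * sin y) (ha : a ∈ Set.Ioo 0 (π / 2)) (hx : x ∈ Set.Ioo 0 (π / 2)) :
    tan a ^ d + d / cos a ^ (d + 1) * (Dfun d x - Dfun d a) + c * (Dfun d x - Dfun d a) ^ 2 ≤
      tan x ^ d := by
  have hder : ∀ y ∈ Set.Ioo 0 (π / 2), HasDerivAt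
      (fun y => d / cos y ^ (d + 1) - 2 * c * Dfun d y)
      (d * (d + 1) * sin y / cos y ^ (d + 2) - 2 * c * sin y ^ (d - 1)) y := fun y hy =>
    (hasDerivAt_div_cos_pow (sin_pos_and_cos_pos hy).2.ne').sub
      ((hasDerivAt_Dfun y).const_mul (2 * c))
  refine quadratic_le_of_monotoneOn (ψ := fun y => d / cos y ^ (d + 1))
    (fun y _ => hasDerivAt_Dfun y) (fun y hy => pow_nonneg (sin_pos_and_cos_pos hy).1.le _)
    (fun y hy => hasDerivAt_tan_pow hd (sin_pos_and_cos_pos hy).2.ne') ?_ ha hx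
  refine monotoneOn_of_hasDerivWithinAt_nonneg (convex_Ioo _ _)
    (fun y hy => (hder y hy).continuousAt.continuousWithinAt)
    (fun y hy => (hder y (interior_subset hy)).hasDerivWithinAt) fun y hy => ?_
  have hy' := interior_subset hy
  have hcos := (sin_pos_and_cos_pos hy').2
  rw [sub_nonneg, le_div_iff₀ (by positivity), mul_assoc]
  exact hc y hy'

lemma Dfun_two (x : ℝ) : Dfun 2 x = 1 - cos x := by
  simp [Dfun, integral_sin]

lemma sin_mul_cos_le_half (x : ℝ) : sin x * cos x ≤ 1 / 2 := by
  nlinarith [sq_nonneg (sin x - cos x), sin_sq_add_cos_sq x]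

lemma inv_sq_sub_inv_sq_ge {s v w : ℝ} (hsv : s * v ≤ 1 / 2) (hv : v ∈ Set.Ioc 0 1)
    (hw : w ∈ Set.Ioc 0 1) :
    2 / v ^ 3 * (v - w) + 6 * s * (v - w) ^ 2 ≤ 1 / w ^ 2 - 1 / v ^ 2 := by
  obtain ⟨hv0, hv1⟩ := hv
  obtain ⟨hw0, hw1⟩ := hw
  have hfactor : 1 / w ^ 2 - 1 / v ^ 2 - 2 / v ^ 3 * (v - w) =
      (2 * w + v) / (w ^ 2 * v ^ 3) * (v - w) ^ 2 := by
    field_simp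
    ring
  have hcoeff : 6 * s ≤ (2 * w + v) / (w ^ 2 * v ^ 3) := by
    rw [le_div_iff₀ (by positivity)]
    calc 6 * s * (w ^ 2 * v ^ 3) = 6 * (s * v) * (w ^ 2 * v ^ 2) := by ring
      _ ≤ 6 * (1 / 2) * (w ^ 2 * v ^ 2) := by gcongr
      _ = 2 * w * (w * v ^ 2) + v * (w ^ 2 * v) := by ring
      _ ≤ 2 * w * 1 + v * 1 := by
        have hwv : w * v ^ 2 ≤ 1 := mul_le_one₀ hw1 (by positivity) (pow_le_one₀ hv0.le hv1)
        have hwv' : w ^ 2 * v ≤ 1 := mul_le_one₀ (pow_le_one₀ hw0.le hw1) hv0.le hv1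
        gcongr
      _ = 2 * w + v := by ring
  linarith [mul_le_mul_of_nonneg_right hcoeff (sq_nonneg (v - w))]

lemma quadratic_le_tan_sq (ha : a ∈ Set.Ioo 0 (π / 2)) (hx : x ∈ Set.Ioo 0 (π / 2)) :
    tan a ^ 2 + 2 / cos a ^ 3 * (cos a - cos x) + 6 * sin a * (cos a - cos x) ^ 2 ≤
      tan x ^ 2 := by
  have htan : ∀ y, 0 < cos y → tan y ^ 2 = 1 / cos y ^ 2 - 1 := by
    intro y hy
    rw [tan_eq_sin_div_cos, div_pow, sin_sq]
    field_simp
  have hcos_a := (sin_pos_and_cos_pos ha).2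
  have hcos_x := (sin_pos_and_cos_pos hx).2
  rw [htan a hcos_a, htan x hcos_x]
  linarith [inv_sq_sub_inv_sq_ge (sin_mul_cos_le_half a) ⟨hcos_a, cos_le_one a⟩
    ⟨hcos_x, cos_le_one x⟩]

lemma sin_pow_mul_cos_pow_le {m n : ℕ} (hm : m ≠ 0) (hn : n ≠ 0)
    (hx : x ∈ Set.Ioo 0 (π / 2)) : sin x ^ m * cos x ^ n ≤ 1 / 2 := by
  obtain ⟨hs, hc⟩ := sin_pos_and_cos_pos hx
  calc sin x ^ m * cos x ^ n ≤ sin x * cos x := by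
        gcongr
        · exact pow_le_of_le_one hs.le (sin_le_one x) hm
        · exact pow_le_of_le_one hc.le (cos_le_one x) hn
    _ ≤ 1 / 2 := sin_mul_cos_le_half x

lemma Dfun_pi_div_two_sub_mem_Icc (hd : 2 ≤ d) (ha : a ∈ Set.Ioo 0 (π / 2)) :
    Dfun d (π / 2) - Dfun d (π / 2 - a) ∈ Set.Icc 0 1 := by
  have hmem : π / 2 - a ∈ Set.Icc 0 π := ⟨by linarith [ha.2], by linarith [ha.1, pi_pos]⟩
  have hle : Dfun d (π / 2 - a) ≤ Dfun d (π / 2) := strictMonoOn_Dfun.monotoneOn hmem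
    ⟨pi_div_two_pos.le, by linarith [pi_pos]⟩ (by linarith [ha.1])
  have hle_one := Dfun_le_one hd ⟨pi_div_two_pos.le, le_rfl⟩
  exact ⟨sub_nonneg.2 hle, by linarith [Dfun_nonneg (d := d) hmem]⟩

/-- For `d = 2` the derivative criterion of `quadratic_le_tan_pow` fails near `x = 0` for this
coefficient, so that case is handled directly. -/
theorem quadratic_le_tan_pow_of_two_le (hd : 2 ≤ d) (ha : a ∈ Set.Ioo 0 (π / 2))
    (hx : x ∈ Set.Ioo 0 (π / 2)) :
    tan a ^ d + d / cos a ^ (d + 1) * (Dfun d x - Dfun d a) +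
      (d * (d + 1) * (Dfun d (π / 2) - Dfun d (π / 2 - a))) * (Dfun d x - Dfun d a) ^ 2 ≤
      tan x ^ d := by
  rcases hd.eq_or_lt with rfl | hd3
  · convert quadratic_le_tan_sq ha hx using 2 <;> norm_num [Dfun_two, cos_pi_div_two_sub]
  · refine quadratic_le_tan_pow (by omega) (fun y hy => ?_) ha hx
    obtain ⟨hδ0, hδ1⟩ := Dfun_pi_div_two_sub_mem_Icc hd ha
    set δ := Dfun d (π / 2) - Dfun d (π / 2 - a)
    have hsin := (sin_pos_and_cos_pos hy).1
    have hcos := (sin_pos_and_cos_pos hy).2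
    have hpow : sin y ^ (d - 1) = sin y * sin y ^ (d - 2) := by
      rw [← pow_succ']
      congr 1
      omega
    calc 2 * (d * (d + 1) * δ) * (sin y ^ (d - 1) * cos y ^ (d + 2))
        = d * (d + 1) * sin y * (2 * (δ * (sin y ^ (d - 2) * cos y ^ (d + 2)))) := by
          rw [hpow]; ring
      _ ≤ d * (d + 1) * sin y * (2 * (1 * (1 / 2))) := by
          gcongr
          exact sin_pow_mul_cos_pow_le (by omega) (by omega) hy
      _ = d * (d + 1) * sin y := by ring

end TangentEstimates

section RandomAngle

variable {Ω : Type*} [MeasurableSpace Ω] {μ : Measure Ω} {α : Ω → ℝ}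
  {d : ℕ} {a : ℝ}

lemma ae_Dfun_comp_mem_Icc (hd : 2 ≤ d) (hα : ∀ᵐ ω ∂μ, α ω ∈ Set.Ioo 0 (π / 2)) :
    ∀ᵐ ω ∂μ, Dfun d (α ω) ∈ Set.Icc 0 1 :=
  hα.mono fun _ hω => ⟨Dfun_nonneg ⟨hω.1.le, by linarith [hω.2, pi_pos]⟩,
    Dfun_le_one hd (Set.Ioo_subset_Icc_self hω)⟩

lemma integrable_of_lintegral_mul_le_one [NeZero μ] {f g : Ω → ℝ} (hf : Measurable f)
    (hg : Measurable g) (hf_pos : ∀ᵐ ω ∂μ, 0 < f ω) (hg_pos : ∀ᵐ ω ∂μ, 0 < g ω)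
    (hle : (∫⁻ ω, ENNReal.ofReal (f ω) ∂μ) * ∫⁻ ω, ENNReal.ofReal (g ω) ∂μ ≤ 1) :
    Integrable f μ := by
  refine (lintegral_ofReal_ne_top_iff_integrable hf.aestronglyMeasurable
    (hf_pos.mono fun _ => le_of_lt)).1 fun htop => ?_
  have hg_ne : ∫⁻ ω, ENNReal.ofReal (g ω) ∂μ ≠ 0 := by
    intro h0
    obtain ⟨ω, hω, hω_pos⟩ :=
      (((lintegral_eq_zero_iff hg.ennreal_ofReal).1 h0).and hg_pos).exists
    exact (ENNReal.ofReal_pos.2 hω_pos).ne' hω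
  rw [htop, ENNReal.top_mul hg_ne] at hle
  exact absurd hle (by simp)

variable [IsProbabilityMeasure μ]

lemma memLp_Dfun_comp (hd : 2 ≤ d) (hmeas : Measurable α)
    (hα : ∀ᵐ ω ∂μ, α ω ∈ Set.Ioo 0 (π / 2)) : MemLp (fun ω => Dfun d (α ω)) 2 μ :=
  MemLp.of_bound (continuous_Dfun.measurable.comp hmeas).aestronglyMeasurable 1
    ((ae_Dfun_comp_mem_Icc hd hα).mono fun _ hω => by simpa [abs_of_nonneg hω.1] using hω.2)

lemma variance_Dfun_comp_le_one (hd : 2 ≤ d) (hmeas : Measurable α)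
    (hα : ∀ᵐ ω ∂μ, α ω ∈ Set.Ioo 0 (π / 2)) :
    ProbabilityTheory.variance (fun ω => Dfun d (α ω)) μ ≤ 1 :=
  (ProbabilityTheory.variance_le_sq_of_bounded (ae_Dfun_comp_mem_Icc hd hα)
    (continuous_Dfun.measurable.comp hmeas).aemeasurable).trans (by norm_num)

lemma quadratic_le_integral_tan_pow (hd : 2 ≤ d) (hmeas : Measurable α)
    (hα : ∀ᵐ ω ∂μ, α ω ∈ Set.Ioo 0 (π / 2)) (hint : Integrable (fun ω => tan (α ω) ^ d) μ)
    {k c : ℝ} (hquad : ∀ x ∈ Set.Ioo 0 (π / 2),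
      tan a ^ d + k * (Dfun d x - Dfun d a) + c * (Dfun d x - Dfun d a) ^ 2 ≤ tan x ^ d) :
    tan a ^ d + k * (∫ ω, Dfun d (α ω) ∂μ - Dfun d a) +
      c * ∫ ω, (Dfun d (α ω) - Dfun d a) ^ 2 ∂μ ≤ ∫ ω, tan (α ω) ^ d ∂μ := by
  have hmem := memLp_Dfun_comp hd hmeas hα
  have hD : Integrable (fun ω => Dfun d (α ω)) μ := hmem.integrable one_le_two
  have hdev : Integrable (fun ω => k * (Dfun d (α ω) - Dfun d a)) μ :=
    (hD.sub (integrable_const _)).const_mul k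
  have hlin : Integrable (fun ω => tan a ^ d + k * (Dfun d (α ω) - Dfun d a)) μ :=
    (integrable_const _).add hdev
  have hsq : Integrable (fun ω => c * (Dfun d (α ω) - Dfun d a) ^ 2) μ :=
    ((hmem.sub (memLp_const _)).integrable_sq).const_mul c
  calc tan a ^ d + k * (∫ ω, Dfun d (α ω) ∂μ - Dfun d a) +
        c * ∫ ω, (Dfun d (α ω) - Dfun d a) ^ 2 ∂μ
      = ∫ ω, tan a ^ d + k * (Dfun d (α ω) - Dfun d a) +
          c * (Dfun d (α ω) - Dfun d a) ^ 2 ∂μ := by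
        rw [integral_add hlin hsq, integral_add (integrable_const _) hdev,
          integral_const_mul, integral_const_mul, integral_sub hD (integrable_const _)]
        simp
    _ ≤ ∫ ω, tan (α ω) ^ d ∂μ := integral_mono_ae (hlin.add hsq) hint (hα.mono fun _ => hquad _)

lemma tan_pow_add_variance_le_integral (hd : 2 ≤ d) (hmeas : Measurable α)
    (hα : ∀ᵐ ω ∂μ, α ω ∈ Set.Ioo 0 (π / 2)) (hint : Integrable (fun ω => tan (α ω) ^ d) μ)
    (ha : a ∈ Set.Ioo 0 (π / 2)) (havg : ∫ ω, Dfun d (α ω) ∂μ = Dfun d a) :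
    tan a ^ d + d * (d + 1) * (Dfun d (π / 2) - Dfun d (π / 2 - a)) *
      ProbabilityTheory.variance (fun ω => Dfun d (α ω)) μ ≤ ∫ ω, tan (α ω) ^ d ∂μ := by
  have hquad := quadratic_le_integral_tan_pow hd hmeas hα hint
    fun x => quadratic_le_tan_pow_of_two_le hd ha
  rwa [havg, sub_self, mul_zero, add_zero, ← havg, ← ProbabilityTheory.variance_eq_integral
    (memLp_Dfun_comp hd hmeas hα).aestronglyMeasurable.aemeasurable] at hquad

lemma tan_pow_add_le_integral (hd : 2 ≤ d) (hmeas : Measurable α)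
    (hα : ∀ᵐ ω ∂μ, α ω ∈ Set.Ioo 0 (π / 2)) (hint : Integrable (fun ω => tan (α ω) ^ d) μ)
    (ha : a ∈ Set.Ioo 0 (π / 2)) :
    tan a ^ d + d / cos a ^ (d + 1) * (∫ ω, Dfun d (α ω) ∂μ - Dfun d a) ≤
      ∫ ω, tan (α ω) ^ d ∂μ := by
  have hcoeff : ∀ y ∈ Set.Ioo 0 (π / 2), 2 * (0 : ℝ) * (sin y ^ (d - 1) * cos y ^ (d + 2)) ≤
      d * (d + 1) * sin y := fun y hy => by
    have := (sin_pos_and_cos_pos hy).1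
    rw [mul_zero, zero_mul]
    positivity
  simpa only [zero_mul, add_zero] using quadratic_le_integral_tan_pow hd hmeas hα hint
    fun x => quadratic_le_tan_pow (by omega) hcoeff ha

end RandomAngle

section Stability

lemma mul_div_le_sub_of_mul_le_one {n t s q X Y B p : ℝ} (hn : 0 < n) (ht : 0 < t) (hs : 0 < s)
    (hq : 0 ≤ q) (hX : t + q ≤ X) (hY : 0 ≤ Y) (hXY : X * Y ≤ 1)
    (hB : t⁻¹ + n / s * (B - p) ≤ Y) : q * s / (n * t * (t + q)) ≤ p - B := by
  have htq : 0 < t + q := by linarith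
  have hY_le : Y ≤ (t + q)⁻¹ := by
    rw [← one_div, le_div_iff₀ htq, mul_comm]
    exact (mul_le_mul_of_nonneg_right hX hY).trans hXY
  calc q * s / (n * t * (t + q)) = s / n * (t⁻¹ - (t + q)⁻¹) := by field_simp; ring
    _ ≤ s / n * (n / s * (p - B)) := by gcongr; linarith
    _ = p - B := by field_simp

lemma two_mul_div_mul_le_div_mul_add {n t s δ V b P : ℝ} (hn : 0 < n) (ht : 0 < t) (hs : 0 ≤ s)
    (hb : 0 ≤ b) (hδ : δ ∈ Set.Icc 0 1) (hV : V ∈ Set.Icc 0 1) (hP : 2 ≤ P) :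
    2 * (b * s * (t ^ 2)⁻¹ / (n + n * b * P * t⁻¹)) * V * δ ≤
      2 * b * δ * V * s / (n * t * (t + 2 * b * δ * V)) := by
  obtain ⟨hδ0, hδ1⟩ := hδ
  obtain ⟨hV0, hV1⟩ := hV
  have : 0 ≤ P := zero_le_two.trans hP
  have hle : 2 * b * δ * V ≤ b * P := by
    calc 2 * b * δ * V = b * (2 * (δ * V)) := by ring
      _ ≤ b * P := by gcongr; linarith [mul_le_one₀ hδ1 hV0 hV1]
  calc 2 * (b * s * (t ^ 2)⁻¹ / (n + n * b * P * t⁻¹)) * V * δ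
      = 2 * b * δ * V * s / (n * t * (t + b * P)) := by
        have hdenom : n + n * b * P * t⁻¹ = n * (t + b * P) / t := by field_simp
        rw [hdenom]
        field_simp
    _ ≤ 2 * b * δ * V * s / (n * t * (t + 2 * b * δ * V)) := by gcongr

/-- The constant `β` of the theorem for `α₀ = α_C = a`, without the second term of the minimum. -/
def stabilityConstant (d : ℕ) (a : ℝ) : ℝ :=
  2 * (((d + 1).choose 2 * sin a ^ (d + 1) * (tan a ^ (2 * d))⁻¹) /
    (d + d * (d + 1).choose 2 * (π / 2) ^ 2 * (tan a ^ d)⁻¹))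

variable {F : Type*} [NormedAddCommGroup F] [InnerProductSpace ℝ F]
  [MeasurableSpace F] [BorelSpace F] {C : ProperCone ℝ (AxialSum F)} {d : ℕ} {a : ℝ}

lemma IsAxis.measurable_tan_coneAngle_pow (hC : IsAxis C (WithLp.toLp 2 (1, 0))) (k : ℕ) :
    Measurable fun u => tan (coneAngle C u) ^ k := by
  simp only [tan_eq_sin_div_cos]
  exact ((measurable_sin.comp hC.measurable_coneAngle).div
    (measurable_cos.comp hC.measurable_coneAngle)).pow_const k

variable [FiniteDimensional ℝ F]

lemma IsAxis.ae_coneAngle_mem_Ioo (hC : IsAxis C (WithLp.toLp 2 (1, 0))) :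
    ∀ᵐ u ∂sphereProb F, coneAngle C u ∈ Set.Ioo 0 (π / 2) :=
  ae_norm_eq_one_sphereProb.mono fun _ => hC.coneAngle_mem_Ioo

lemma IsAxis.ae_tan_coneAngle_pow_pos (hC : IsAxis C (WithLp.toLp 2 (1, 0))) (k : ℕ) :
    ∀ᵐ u ∂sphereProb F, 0 < tan (coneAngle C u) ^ k :=
  hC.ae_coneAngle_mem_Ioo.mono fun _ hu =>
    pow_pos (tan_pos_of_pos_of_lt_pi_div_two hu.1 hu.2) k

lemma IsAxis.integral_Dfun_coneAngle [Nontrivial F] (hC : IsAxis C (WithLp.toLp 2 (1, 0)))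
    (hF : Module.finrank ℝ F = d) :
    ∫ u, Dfun d (coneAngle C u) ∂sphereProb F =
      (sphereProb (AxialSum F)).real C * Dfun d π := by
  subst hF
  rw [integral_eq_lintegral_of_nonneg_ae
    (hC.ae_coneAngle_mem_Ioo.mono fun u hu =>
      Dfun_nonneg ⟨hu.1.le, by linarith [hu.2, pi_pos]⟩)
    (continuous_Dfun.measurable.comp hC.measurable_coneAngle).aestronglyMeasurable,
    ← hC.sphereProb_mul_Dfun_pi, ENNReal.toReal_mul,
    ENNReal.toReal_ofReal (Dfun_nonneg ⟨pi_pos.le, le_rfl⟩), Measure.real]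

lemma IsCentredAxis.integrable_tan_coneAngle_pow [Nontrivial F]
    (hC : IsCentredAxis C (WithLp.toLp 2 (1, 0))) (hF : Module.finrank ℝ F = d) :
    Integrable (fun u => tan (coneAngle C u) ^ d) (sphereProb F) ∧
      Integrable (fun u => tan (coneAngle (ProperCone.innerDual (C : Set (AxialSum F))) u) ^ d)
        (sphereProb F) := by
  subst hF
  have hmeas := hC.measurable_tan_coneAngle_pow (Module.finrank ℝ F)
  have hmeas' := hC.innerDual.measurable_tan_coneAngle_pow (Module.finrank ℝ F)
  have hpos := hC.ae_tan_coneAngle_pow_pos (Module.finrank ℝ F)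
  have hpos' := hC.innerDual.ae_tan_coneAngle_pow_pos (Module.finrank ℝ F)
  have hprod := hC.lintegral_tan_pow_mul_le_one
  exact ⟨integrable_of_lintegral_mul_le_one hmeas hmeas' hpos hpos' hprod,
    integrable_of_lintegral_mul_le_one hmeas' hmeas hpos' hpos (by rwa [mul_comm])⟩

lemma IsCentredAxis.integral_tan_pow_mul_le_one [Nontrivial F]
    (hC : IsCentredAxis C (WithLp.toLp 2 (1, 0))) (hF : Module.finrank ℝ F = d) :
    (∫ u, tan (coneAngle C u) ^ d ∂sphereProb F) *
      ∫ u, tan (coneAngle (ProperCone.innerDual (C : Set (AxialSum F))) u) ^ d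
        ∂sphereProb F ≤ 1 := by
  subst hF
  rw [integral_eq_lintegral_of_nonneg_ae
      ((hC.ae_tan_coneAngle_pow_pos _).mono fun _ => le_of_lt)
      (hC.measurable_tan_coneAngle_pow _).aestronglyMeasurable,
    integral_eq_lintegral_of_nonneg_ae
      ((hC.innerDual.ae_tan_coneAngle_pow_pos _).mono fun _ => le_of_lt)
      (hC.innerDual.measurable_tan_coneAngle_pow _).aestronglyMeasurable, ← ENNReal.toReal_mul]
  exact ENNReal.toReal_le_of_le_ofReal zero_le_one
    (by simpa using hC.lintegral_tan_pow_mul_le_one)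

theorem IsCentredAxis.variance_mul_le_sub_integral_Dfun_innerDual
    (hC : IsCentredAxis C (WithLp.toLp 2 (1, 0))) (hF : Module.finrank ℝ F = d) (hd : 2 ≤ d)
    (ha : a ∈ Set.Ioo 0 (π / 2))
    (havg : ∫ u, Dfun d (coneAngle C u) ∂sphereProb F = Dfun d a) :
    stabilityConstant d a *
      ProbabilityTheory.variance (fun u => Dfun d (coneAngle C u)) (sphereProb F) *
      (Dfun d (π / 2) - Dfun d (π / 2 - a)) ≤ Dfun d (π / 2 - a) -
        ∫ u, Dfun d (coneAngle (ProperCone.innerDual (C : Set (AxialSum F))) u)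
          ∂sphereProb F := by
  have : Nontrivial F := Module.nontrivial_of_finrank_pos (R := ℝ) (by omega)
  have hdual := hC.toIsAxis.innerDual
  obtain ⟨hint, hint'⟩ := hC.integrable_tan_coneAngle_pow hF
  have hd0 : (0 : ℝ) < d := by positivity
  have htan : 0 < tan a ^ d := pow_pos (tan_pos_of_pos_of_lt_pi_div_two ha.1 ha.2) d
  have hsin : 0 < sin a ^ (d + 1) := pow_pos (sin_pos_and_cos_pos ha).1 _
  have hchoose : (((d + 1).choose 2 : ℕ) : ℝ) = d * (d + 1) / 2 := by
    rw [Nat.cast_choose_two]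
    push_cast
    ring
  have hδ := Dfun_pi_div_two_sub_mem_Icc hd ha
  have hV0 := ProbabilityTheory.variance_nonneg (fun u => Dfun d (coneAngle C u)) (sphereProb F)
  have hV1 := variance_Dfun_comp_le_one hd hC.measurable_coneAngle hC.ae_coneAngle_mem_Ioo
  have hX := tan_pow_add_variance_le_integral hd hC.measurable_coneAngle
    hC.ae_coneAngle_mem_Ioo hint ha havg
  have hY := tan_pow_add_le_integral hd hdual.measurable_coneAngle hdual.ae_coneAngle_mem_Ioo
    hint' (a := π / 2 - a) ⟨by linarith [ha.2], by linarith [ha.1]⟩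
  have hY0 := integral_nonneg_of_ae ((hdual.ae_tan_coneAngle_pow_pos d).mono fun _ => le_of_lt)
  rw [tan_pi_div_two_sub, cos_pi_div_two_sub, inv_pow] at hY
  rw [stabilityConstant, mul_comm 2 d, pow_mul]
  refine (two_mul_div_mul_le_div_mul_add hd0 htan hsin.le (Nat.cast_nonneg _) hδ ⟨hV0, hV1⟩
    (by nlinarith [pi_gt_three])).trans ?_
  have hq : 0 ≤ 2 * (((d + 1).choose 2 : ℕ) : ℝ) * (Dfun d (π / 2) - Dfun d (π / 2 - a)) *
      ProbabilityTheory.variance (fun u => Dfun d (coneAngle C u)) (sphereProb F) :=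
    mul_nonneg (mul_nonneg (by positivity) hδ.1) hV0
  exact mul_div_le_sub_of_mul_le_one hd0 htan hsin hq (hX.trans' (by rw [hchoose]; ring_nf; rfl))
    hY0 (hC.integral_tan_pow_mul_le_one hF) hY

end Stability

section SphericalUrysohn

variable {d : ℕ} {a : ℝ} {C : ProperCone ℝ (Esp d)}

lemma stabilityConstant_nonneg (ha : a ∈ Set.Ioo 0 (π / 2)) : 0 ≤ stabilityConstant d a := by
  have := (sin_pos_and_cos_pos ha).1
  have := tan_pos_of_pos_of_lt_pi_div_two ha.1 ha.2
  rw [stabilityConstant]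
  positivity

theorem stabilityConstant_mul_Delta2_sq_le (hd : 2 ≤ d) (hC : ∀ x ∈ C, x ≠ 0 → -x ∉ C)
    (ha : a ∈ Set.Ioo 0 (π / 2))
    (hvol : (sphereProb (Esp d)).real C * Dfun d π = Dfun d a) :
    stabilityConstant d a * Delta2 d ((C : Set (Esp d)) ∩ uSphere d) ^ 2 *
      (Dfun d (π / 2) - Dfun d (π / 2 - a)) ≤ Dfun d (π / 2 - a) -
        (sphereProb (Esp d)).real (ProperCone.innerDual (C : Set (Esp d))) * Dfun d π := by
  have hprob : sphereProb (Esp d) C ≠ 0 := by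
    intro h0
    rw [measureReal_def, h0, ENNReal.toReal_zero, zero_mul] at hvol
    exact (Dfun_pos ⟨ha.1, by linarith [ha.2, pi_pos]⟩).ne hvol
  obtain ⟨e, he⟩ := exists_isCentredAxis hC (measure_ne_zero_of_sphereProb_ne_zero
    C.isClosed.measurableSet (fun _ hx _ => C.smul_mem hx) hprob)
  obtain ⟨Φ, hΦ⟩ := exists_axialSum_linearIsometryEquiv (F := EuclideanSpace ℝ (Fin d))
    (by simp) he.norm_eq_one
  have hrank : Module.finrank ℝ (EuclideanSpace ℝ (Fin d)) = d := finrank_euclideanSpace_fin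
  have : Nontrivial (EuclideanSpace ℝ (Fin d)) :=
    Module.nontrivial_of_finrank_pos (R := ℝ) (by omega)
  have hcomap : IsCentredAxis
      (C.comap (Φ : AxialSum (EuclideanSpace ℝ (Fin d)) →L[ℝ] Esp d)) (WithLp.toLp 2 (1, 0)) :=
    IsCentredAxis.comap (hΦ.symm ▸ he)
  have hstab := hcomap.variance_mul_le_sub_integral_Dfun_innerDual hrank hd ha <| by
    rw [hcomap.integral_Dfun_coneAngle hrank, measureReal_def,
      sphereProb_comap_linearIsometryEquiv, ← measureReal_def, hvol]
  rw [hcomap.toIsAxis.innerDual.integral_Dfun_coneAngle hrank,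
    innerDual_comap_linearIsometryEquiv, measureReal_def,
    sphereProb_comap_linearIsometryEquiv, ← measureReal_def] at hstab
  refine hstab.trans' (mul_le_mul_of_nonneg_right ?_ (Dfun_pi_div_two_sub_mem_Icc hd ha).1)
  exact mul_le_mul_of_nonneg_left (he.toIsAxis.Delta2_sq_le_variance hΦ)
    (stabilityConstant_nonneg ha)

theorem one_add_mul_U1_cap_le (hd : 2 ≤ d) (hC : ∀ x ∈ C, x ≠ 0 → -x ∉ C) {e : Esp d}
    (he : ‖e‖ = 1) (ha : a ∈ Set.Ioo 0 (π / 2))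
    (hvol : (sphereProb (Esp d)).real C = (sphereProb (Esp d)).real (cap e a)) :
    (1 + stabilityConstant d a * Delta2 d ((C : Set (Esp d)) ∩ uSphere d) ^ 2) * U1 d (cap e a) ≤
      U1 d ((C : Set (Esp d)) ∩ uSphere d) := by
  have hDpi : 0 < Dfun d π := Dfun_pos ⟨pi_pos, le_rfl⟩
  have hcap := measureReal_hittingNormals_mul_Dfun_pi_le (E := Esp d) (n := d) (by simp)
    (by omega) he (Set.Ioo_subset_Icc_self ha) (K := cap e a)
    fun y hy => (geo_eq_angle (mem_sphere_zero_iff_norm.1 hy.1) he).ge.trans hy.2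
  have hhit := mul_le_mul_of_nonneg_right (one_le_measureReal_hittingNormals_add hC) hDpi.le
  have hstab := stabilityConstant_mul_Delta2_sq_le hd hC ha <| by
    rw [hvol, measureReal_sphereProb_cap_mul_Dfun_pi (by omega) he
      ⟨ha.1.le, by linarith [ha.2, pi_pos]⟩]
  have hconst := stabilityConstant_nonneg (d := d) ha
  have hpi := Dfun_pi (d := d)
  rw [U1_eq, U1_eq]
  refine le_of_mul_le_mul_right ?_ hDpi
  set W := stabilityConstant d a * Delta2 d ((C : Set (Esp d)) ∩ uSphere d) ^ 2
  calc (1 + W) * ((sphereProb (Esp d)).real (hittingNormals (cap e a)) / 2) * Dfun d π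
      = (1 + W) * ((sphereProb (Esp d)).real (hittingNormals (cap e a)) * Dfun d π / 2) := by
        ring
    _ ≤ (1 + W) * (Dfun d (π / 2) - Dfun d (π / 2 - a)) := by
        gcongr
        linarith
    _ ≤ (sphereProb (Esp d)).real (hittingNormals ((C : Set (Esp d)) ∩ uSphere d)) / 2 *
          Dfun d π := by
        rw [uSphere]
        linarith

lemma IsProperSphConvBody.exists_properCone {K : Set (Esp d)} (hK : IsProperSphConvBody d K)
    (hne : K.Nonempty) : ∃ C : ProperCone ℝ (Esp d),
      (∀ x ∈ C, x ≠ 0 → -x ∉ C) ∧ K = (C : Set (Esp d)) ∩ uSphere d := by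
  obtain ⟨C, hclosed, hconvex, hsmul, -, hpointed, rfl⟩ := hK
  obtain ⟨x, hx, -⟩ := hne
  refine ⟨⟨⟨⟨⟨C, fun {y z} hy hz => ?_⟩, ?_⟩, fun t y hy => hsmul y hy t t.2⟩, hclosed⟩,
    hpointed, rfl⟩
  · have hmid := hsmul _ (hconvex hy hz (a := 1 / 2) (b := 1 / 2) (by norm_num) (by norm_num)
      (by norm_num)) 2 zero_le_two
    simpa [smul_add, smul_smul] using hmid
  · simpa using hsmul x hx 0 le_rfl

theorem statement0_general (hd : 2 ≤ d) {K : Set (Esp d)} (hK : IsProperSphConvBody d K)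
    {e : Esp d} (he : e ∈ uSphere d) {αC : ℝ} (hαC : αC ∈ Set.Ioo 0 (π / 2))
    (hvol : sigmaMeas d K = sigmaMeas d (cap e αC)) :
    (1 + stabilityConstant d αC * Delta2 d K ^ 2) * U1 d (cap e αC) ≤ U1 d K := by
  have he1 : ‖e‖ = 1 := mem_sphere_zero_iff_norm.1 he
  have hprob : (sphereProb (Esp d)).real K = (sphereProb (Esp d)).real (cap e αC) := by
    have h := congrArg ENNReal.toReal hvol
    rwa [toReal_sigmaMeas, toReal_sigmaMeas, mul_right_inj' omegaTot_pos.ne'] at h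
  have hcap := measureReal_sphereProb_cap_mul_Dfun_pi (d := d) (by omega) he1
    (a := αC) ⟨hαC.1.le, by linarith [hαC.2, pi_pos]⟩
  have hK_nonempty : K.Nonempty := by
    rw [Set.nonempty_iff_ne_empty]
    rintro rfl
    rw [← hprob, measureReal_empty, zero_mul] at hcap
    exact (Dfun_pos ⟨hαC.1, by linarith [hαC.2, pi_pos]⟩).ne hcap
  obtain ⟨C, hC, rfl⟩ := hK.exists_properCone hK_nonempty
  refine one_add_mul_U1_cap_le hd hC he1 hαC (hprob.symm.trans ?_).symm
  exact measureReal_sphereProb_inter_sphere _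

lemma two_mul_min_le_stabilityConstant {α0 b : ℝ} (hα0 : 0 < α0) (h0a : α0 ≤ a) (ha : a < π / 2) :
    2 * min ((((d + 1).choose 2 : ℝ) * sin α0 ^ (d + 1) * (tan a ^ (2 * d))⁻¹) /
      ((d : ℝ) + (d : ℝ) * ((d + 1).choose 2 : ℝ) * (π / 2) ^ 2 * (tan a ^ d)⁻¹)) b ≤
      stabilityConstant d a := by
  have htan := tan_pos_of_pos_of_lt_pi_div_two (hα0.trans_le h0a) ha
  have hsin : 0 ≤ sin α0 := sin_nonneg_of_nonneg_of_le_pi hα0.le (by linarith)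
  have hsin_le : sin α0 ≤ sin a := sin_le_sin_of_le_of_le_pi_div_two (by linarith) ha.le h0a
  rw [stabilityConstant]
  refine mul_le_mul_of_nonneg_left ((min_le_left _ _).trans ?_) zero_le_two
  gcongr

end SphericalUrysohn

/-- Theorem 4.1 / stability of the spherical Urysohn inequality.
If `K ∈ 𝒦_s^d`, `C = B(e,α_C)` is a spherical cap with `σ_d(K) = σ_d(C) > 0`,
`α_C < π/2`, and `α₀ ∈ (0,π/2)` with `α₀ ≤ α_C`, then
`U₁(K) ≥ (1 + β Δ₂(K)²) U₁(C)` with the explicit constant `β`. -/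
theorem statement0 (d : ℕ) (hd : 2 ≤ d) (K : Set (Esp d)) (hK : IsProperSphConvBody d K)
    (e : Esp d) (he : e ∈ uSphere d) (αC α0 : ℝ)
    (hvol : sigmaMeas d K = sigmaMeas d (cap e αC)) (hpos : 0 < sigmaMeas d K)
    (hαC : 0 < αC) (hαC' : αC < π / 2)
    (hα0 : 0 < α0) (hα0' : α0 < π / 2) (h0C : α0 ≤ αC) :
    U1 d K ≥ (1 + (2 * min
        ((((d + 1).choose 2 : ℝ) * Real.sin α0 ^ (d + 1) * (Real.tan αC ^ (2 * d))⁻¹) /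
          ((d : ℝ) + (d : ℝ) * ((d + 1).choose 2 : ℝ) * (π / 2) ^ 2 * (Real.tan αC ^ d)⁻¹))
        ((2 / π) ^ 2 * Dfun d (π / 2 - αC))) * Delta2 d K ^ 2) * U1 d (cap e αC) := by
  refine (statement0_general hd hK he ⟨hαC, hαC'⟩ hvol).trans' ?_
  gcongr
  · exact U1_nonneg _
  · exact two_mul_min_le_stabilityConstant hα0 h0C hαC'

end
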